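/- Let f : 𝔥 → 𝔨 be a quasi-isomorphism of non-negatively graded dg Lie algebras over ℚ. Then the induced morphism of universal enveloping dg algebras 𝒰f : 𝒰𝔥 → 𝒰𝔨 is a quasi-isomorphism. -/

import Mathlib

open scoped TensorProduct

noncomputable section

/-- A homologically graded differential graded `ℚ`-vector space (chain complex of
`ℚ`-vector spaces presented as a graded module with a degree `-1` square-zero differential). -/
structure DGVect : Type 1 where
  carrier : Type
  [isAddCommGroup : AddCommGroup carrier]
  [isModule : Module ℚ carrier]
  grading : ℤ → Submodule ℚ carrier
  [isDecomp : DirectSum.Decomposition grading]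
  d : carrier →ₗ[ℚ] carrier
  d_mem : ∀ (n : ℤ), ∀ x ∈ grading n, d x ∈ grading (n - 1)
  d_sq : d.comp d = 0

attribute [instance] DGVect.isAddCommGroup DGVect.isModule DGVect.isDecomp

/-- The operator acting on the degree `n` graded component by `(-1)^(k*n)`. -/
def signOpOf {V : Type} [AddCommGroup V] [Module ℚ V] (g : ℤ → Submodule ℚ V)
    [DirectSum.Decomposition g] (k : ℤ) : V →ₗ[ℚ] V :=
  (DirectSum.toModule ℚ ℤ V fun n => ((-1 : ℚ) ^ (k * n)) • (g n).subtype).comp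
    (DirectSum.decomposeLinearEquiv g).toLinearMap

/-- The Koszul parity operator, acting by `(-1)^n` in degree `n`. -/
def parityOf {V : Type} [AddCommGroup V] [Module ℚ V] (g : ℤ → Submodule ℚ V)
    [DirectSum.Decomposition g] : V →ₗ[ℚ] V := signOpOf g 1

def DGVect.parity (V : DGVect) : V.carrier →ₗ[ℚ] V.carrier := parityOf V.grading

/-- A graded object is bounded below if it vanishes in all sufficiently negative degrees. -/
def DGVect.BoundedBelow (V : DGVect) : Prop := ∃ b : ℤ, ∀ n : ℤ, n < b → V.grading n = ⊥

/-- The Koszul signed braiding `v ⊗ w ↦ (-1)^{|v||w|} w ⊗ v` of graded vector spaces. -/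
def kSwapOf {V W : Type} [AddCommGroup V] [Module ℚ V] [AddCommGroup W] [Module ℚ W]
    (gV : ℤ → Submodule ℚ V) (gW : ℤ → Submodule ℚ W)
    [DirectSum.Decomposition gV] [DirectSum.Decomposition gW] :
    V ⊗[ℚ] W →ₗ[ℚ] W ⊗[ℚ] V :=
  TensorProduct.lift
    ((DirectSum.toModule ℚ ℤ (W →ₗ[ℚ] W ⊗[ℚ] V) (fun i =>
        (((DirectSum.toModule ℚ ℤ (V →ₗ[ℚ] W ⊗[ℚ] V) (fun j =>
              ((-1 : ℚ) ^ (i * j)) • ((TensorProduct.mk ℚ W V).comp (gW j).subtype))).comp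
            (DirectSum.decomposeLinearEquiv gW).toLinearMap).flip).comp
          (gV i).subtype)).comp
      (DirectSum.decomposeLinearEquiv gV).toLinearMap)

/-- The degree `n` part of the tensor product grading:
the span of the homogeneous tensors of total degree `n`. -/
def tensorGrading {V W : Type} [AddCommGroup V] [Module ℚ V] [AddCommGroup W] [Module ℚ W]
    (gV : ℤ → Submodule ℚ V) (gW : ℤ → Submodule ℚ W) (n : ℤ) : Submodule ℚ (V ⊗[ℚ] W) :=
  ⨆ p : {p : ℤ × ℤ // p.1 + p.2 = n},
    LinearMap.range (TensorProduct.map (gV p.1.1).subtype (gW p.1.2).subtype)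

/-- `f` is a quasi-isomorphism from the complex `(V, dV)` to the complex `(W, dW)`:
it induces a bijection on homology (`ker d / im d`). -/
def IsQuasiIso {V W : Type} [AddCommGroup V] [Module ℚ V] [AddCommGroup W] [Module ℚ W]
    (dV : V →ₗ[ℚ] V) (dW : W →ₗ[ℚ] W) (f : V →ₗ[ℚ] W) : Prop :=
  (∀ x : V, dV x = 0 → (∃ y, f x = dW y) → ∃ z, x = dV z) ∧
  (∀ w : W, dW w = 0 → ∃ x, dV x = 0 ∧ ∃ y, w - f x = dW y)

/-- A differential graded algebra over `ℚ`. -/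
structure DGAlgebra extends DGVect where
  mul : carrier →ₗ[ℚ] carrier →ₗ[ℚ] carrier
  one : carrier
  one_mem : one ∈ grading 0
  mul_mem : ∀ (i j : ℤ) (x y : carrier), x ∈ grading i → y ∈ grading j →
    mul x y ∈ grading (i + j)
  mul_assoc' : ∀ x y z : carrier, mul (mul x y) z = mul x (mul y z)
  one_mul' : ∀ x : carrier, mul one x = x
  mul_one' : ∀ x : carrier, mul x one = x
  leibniz : ∀ (i : ℤ) (x y : carrier), x ∈ grading i →
    d (mul x y) = mul (d x) y + ((-1 : ℚ) ^ i) • mul x (d y)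

/-- The multiplication of a dg algebra as a map out of the tensor product. -/
def DGAlgebra.mulMap (A : DGAlgebra) : A.carrier ⊗[ℚ] A.carrier →ₗ[ℚ] A.carrier :=
  TensorProduct.lift A.mul

/-- A dg algebra is connective if it is concentrated in non-negative degrees. -/
def DGAlgebra.Connective (A : DGAlgebra) : Prop := ∀ n : ℤ, n < 0 → A.grading n = ⊥

/-- A (coassociative counital) differential graded coalgebra over `ℚ`,
non-negatively graded. -/
structure DGCoalgebra extends DGVect where
  comul : carrier →ₗ[ℚ] carrier ⊗[ℚ] carrier
  counit : carrier →ₗ[ℚ] ℚ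
  nonneg : ∀ n : ℤ, n < 0 → grading n = ⊥
  comul_mem : ∀ (n : ℤ), ∀ x ∈ grading n, comul x ∈ tensorGrading grading grading n
  counit_zero : ∀ (n : ℤ), n ≠ 0 → ∀ x ∈ grading n, counit x = 0
  coassoc : (TensorProduct.assoc ℚ carrier carrier carrier).toLinearMap.comp
      ((TensorProduct.map comul LinearMap.id).comp comul)
      = (TensorProduct.map LinearMap.id comul).comp comul
  counit_comul_left : (TensorProduct.lid ℚ carrier).toLinearMap.comp
      ((TensorProduct.map counit LinearMap.id).comp comul) = LinearMap.id
  counit_comul_right : (TensorProduct.rid ℚ carrier).toLinearMap.comp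
      ((TensorProduct.map LinearMap.id counit).comp comul) = LinearMap.id
  comul_chain : comul.comp d
      = (TensorProduct.map d LinearMap.id + TensorProduct.map (parityOf grading) d).comp comul
  counit_chain : counit.comp d = 0

/-- Cocommutativity: the comultiplication is invariant under the Koszul signed twist. -/
def DGCoalgebra.Cocomm (C : DGCoalgebra) : Prop :=
  (kSwapOf C.grading C.grading).comp C.comul = C.comul

/-- A coaugmented dg coalgebra: a dg coalgebra with a coaugmentation `η : ℚ → C`,
recorded by the grouplike element `one = η 1` in degree `0`. -/
structure CoaugDGCoalgebra extends DGCoalgebra where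
  one : carrier
  one_mem : one ∈ grading 0
  counit_one : counit one = 1
  comul_one : comul one = one ⊗ₜ[ℚ] one

/-- A coaugmented dg coalgebra is 2-reduced if `C₀ = ℚ` (spanned by the coaugmentation)
and `C₁ = 0`. -/
def CoaugDGCoalgebra.TwoReduced (C : CoaugDGCoalgebra) : Prop :=
  C.grading 0 = Submodule.span ℚ {C.one} ∧ C.grading 1 = ⊥

/-- A twisting chain `τ : C ⇝ A`: a degree `-1` linear map satisfying
`d(τc) = -τ(dc) - (-1)^{|c₍₀₎|} τ(c₍₀₎)·τ(c₍₁₎)`. -/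
structure TwistingChain (C : DGCoalgebra) (A : DGAlgebra) where
  toFun : C.carrier →ₗ[ℚ] A.carrier
  mem : ∀ (n : ℤ), ∀ x ∈ C.grading n, toFun x ∈ A.grading (n - 1)
  twist : A.d.comp toFun + toFun.comp C.d
      + A.mulMap.comp ((TensorProduct.map (toFun.comp (parityOf C.grading)) toFun).comp C.comul)
      = 0

/-- A left dg module over a dg algebra. -/
structure DGModule (A : DGAlgebra) extends DGVect where
  smul : A.carrier →ₗ[ℚ] carrier →ₗ[ℚ] carrier
  smul_mem : ∀ (i j : ℤ) (a : A.carrier) (x : carrier), a ∈ A.grading i → x ∈ grading j →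
    smul a x ∈ grading (i + j)
  one_smul' : ∀ x : carrier, smul A.one x = x
  mul_smul' : ∀ (a b : A.carrier) (x : carrier), smul (A.mul a b) x = smul a (smul b x)
  leibniz : ∀ (i : ℤ) (a : A.carrier) (x : carrier), a ∈ A.grading i →
    d (smul a x) = smul (A.d a) x + ((-1 : ℚ) ^ i) • smul a (d x)

/-- The action of a dg module as a map out of the tensor product. -/
def DGModule.actionMap {A : DGAlgebra} (M : DGModule A) :
    A.carrier ⊗[ℚ] M.carrier →ₗ[ℚ] M.carrier := TensorProduct.lift M.smul

/-- A left dg comodule over a dg coalgebra. -/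
structure DGComodule (C : DGCoalgebra) extends DGVect where
  coact : carrier →ₗ[ℚ] C.carrier ⊗[ℚ] carrier
  coact_mem : ∀ (n : ℤ), ∀ x ∈ grading n, coact x ∈ tensorGrading C.grading grading n
  coassoc : (TensorProduct.assoc ℚ C.carrier C.carrier carrier).toLinearMap.comp
      ((TensorProduct.map C.comul LinearMap.id).comp coact)
      = (TensorProduct.map LinearMap.id coact).comp coact
  counit_coact : (TensorProduct.lid ℚ carrier).toLinearMap.comp
      ((TensorProduct.map C.counit LinearMap.id).comp coact) = LinearMap.id
  coact_chain : coact.comp d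
      = (TensorProduct.map C.d LinearMap.id + TensorProduct.map (parityOf C.grading) d).comp coact

/-- Morphisms of dg modules: degree `0` graded chain maps commuting with the action. -/
def IsModuleHom (A : DGAlgebra) (M M' : DGModule A)
    (g : M.carrier →ₗ[ℚ] M'.carrier) : Prop :=
  (∀ (n : ℤ), ∀ x ∈ M.grading n, g x ∈ M'.grading n) ∧
  g.comp M.d = M'.d.comp g ∧
  g.comp M.actionMap = M'.actionMap.comp (TensorProduct.map LinearMap.id g)

/-- Morphisms of dg comodules: degree `0` graded chain maps commuting with the coaction. -/
def IsComoduleHom (C : DGCoalgebra) (N N' : DGComodule C)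
    (f : N.carrier →ₗ[ℚ] N'.carrier) : Prop :=
  (∀ (n : ℤ), ∀ x ∈ N.grading n, f x ∈ N'.grading n) ∧
  f.comp N.d = N'.d.comp f ∧
  (TensorProduct.map LinearMap.id f).comp N.coact = N'.coact.comp f

/-- The `A`-action on a twisted extension `A ⊗_τ N`: multiplication on the first factor. -/
def extAction (A : DGAlgebra) (N : Type) [AddCommGroup N] [Module ℚ N] :
    A.carrier ⊗[ℚ] (A.carrier ⊗[ℚ] N) →ₗ[ℚ] A.carrier ⊗[ℚ] N :=
  (TensorProduct.map A.mulMap LinearMap.id).comp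
    (TensorProduct.assoc ℚ A.carrier A.carrier N).symm.toLinearMap

/-- The differential of the twisted extension `A ⊗_τ N`:
`d(a ⊗ n) = da ⊗ n + (-1)^{|a|} a ⊗ dn - (-1)^{|a|} a·τ(n₍₀₎) ⊗ n₍₁₎`
for a `C`-comodule `(N, dN, ρ)`. -/
def extDiff (C : DGCoalgebra) (A : DGAlgebra) (τ : TwistingChain C A)
    (N : Type) [AddCommGroup N] [Module ℚ N]
    (dN : N →ₗ[ℚ] N) (ρ : N →ₗ[ℚ] C.carrier ⊗[ℚ] N) :
    A.carrier ⊗[ℚ] N →ₗ[ℚ] A.carrier ⊗[ℚ] N :=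
  TensorProduct.map A.d LinearMap.id + TensorProduct.map (parityOf A.grading) dN
    - (TensorProduct.map
        (A.mulMap.comp (TensorProduct.map (parityOf A.grading) τ.toFun)) LinearMap.id).comp
        ((TensorProduct.assoc ℚ A.carrier C.carrier N).symm.toLinearMap.comp
          (TensorProduct.map LinearMap.id ρ))

/-- The `C`-coaction on a twisted coextension `C ⊗^τ M`, namely `Δ ⊗ id`. -/
def coextCoact (C : DGCoalgebra) (M : Type) [AddCommGroup M] [Module ℚ M] :
    C.carrier ⊗[ℚ] M →ₗ[ℚ] C.carrier ⊗[ℚ] (C.carrier ⊗[ℚ] M) :=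
  (TensorProduct.assoc ℚ C.carrier C.carrier M).toLinearMap.comp
    (TensorProduct.map C.comul LinearMap.id)

/-- The differential of the twisted coextension `C ⊗^τ M`, expressed in terms of the map
`tact : C ⊗ M → M`, `c ⊗ m ↦ τ(c)·m`:
`d(c ⊗ m) = dc ⊗ m + (-1)^{|c|} c ⊗ dm + (-1)^{|c₍₀₎|} c₍₀₎ ⊗ τ(c₍₁₎)·m`. -/
def coextDiffFrom (C : DGCoalgebra) (M : Type) [AddCommGroup M] [Module ℚ M]
    (dM : M →ₗ[ℚ] M) (tact : C.carrier ⊗[ℚ] M →ₗ[ℚ] M) :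
    C.carrier ⊗[ℚ] M →ₗ[ℚ] C.carrier ⊗[ℚ] M :=
  TensorProduct.map C.d LinearMap.id + TensorProduct.map (parityOf C.grading) dM
    + (TensorProduct.map (parityOf C.grading) tact).comp (coextCoact C M)

/-- The differential of the twisted coextension `C ⊗^τ M` of an `A`-module `(M, dM, act)`. -/
def coextDiff (C : DGCoalgebra) (A : DGAlgebra) (τ : TwistingChain C A)
    (M : Type) [AddCommGroup M] [Module ℚ M]
    (dM : M →ₗ[ℚ] M) (act : A.carrier ⊗[ℚ] M →ₗ[ℚ] M) :
    C.carrier ⊗[ℚ] M →ₗ[ℚ] C.carrier ⊗[ℚ] M :=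
  coextDiffFrom C M dM (act.comp (TensorProduct.map τ.toFun LinearMap.id))

/-- Morphisms of dg algebras. -/
structure DGAlgebraHom (A B : DGAlgebra) where
  toLinearMap : A.carrier →ₗ[ℚ] B.carrier
  mem : ∀ (n : ℤ), ∀ x ∈ A.grading n, toLinearMap x ∈ B.grading n
  chain : toLinearMap.comp A.d = B.d.comp toLinearMap
  map_one : toLinearMap A.one = B.one
  map_mul : ∀ x y : A.carrier, toLinearMap (A.mul x y) = B.mul (toLinearMap x) (toLinearMap y)

/-- Data exhibiting a dg algebra as the cobar construction `ΩC` of a coaugmented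
dg coalgebra `C`, via the universal twisting chain `t : C ⇝ ΩC`:
dg algebra maps `ΩC → A` correspond bijectively to twisting chains `C ⇝ A`
vanishing on the coaugmentation. -/
structure CobarData (C : CoaugDGCoalgebra) where
  alg : DGAlgebra
  t : TwistingChain C.toDGCoalgebra alg
  t_one : t.toFun C.one = 0
  univ : ∀ (A : DGAlgebra) (τ : TwistingChain C.toDGCoalgebra A), τ.toFun C.one = 0 →
    ∃! F : DGAlgebraHom alg A, F.toLinearMap.comp t.toFun = τ.toFun

/-- A morphism of `C`-comodules is a `t`-equivalence if the induced morphism of twisted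
extensions `ΩC ⊗_t N → ΩC ⊗_t M` is a quasi-isomorphism. -/
def IsTEquiv (C : CoaugDGCoalgebra) (Ω : CobarData C) (N M : DGComodule C.toDGCoalgebra)
    (f : N.carrier →ₗ[ℚ] M.carrier) : Prop :=
  IsQuasiIso (extDiff C.toDGCoalgebra Ω.alg Ω.t N.carrier N.d N.coact)
    (extDiff C.toDGCoalgebra Ω.alg Ω.t M.carrier M.d M.coact)
    (TensorProduct.map LinearMap.id f)

/-! ## Statement 17: universal enveloping algebras preserve quasi-isomorphisms -/

/-- A non-negatively graded differential graded Lie algebra over `ℚ`. -/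
structure DGLie extends DGVect where
  bracket : carrier →ₗ[ℚ] carrier →ₗ[ℚ] carrier
  bracket_mem : ∀ (i j : ℤ) (x y : carrier), x ∈ grading i → y ∈ grading j →
    bracket x y ∈ grading (i + j)
  antisymm : ∀ (i j : ℤ) (x y : carrier), x ∈ grading i → y ∈ grading j →
    bracket x y = (-((-1 : ℚ) ^ (i * j))) • bracket y x
  jacobi : ∀ (i j : ℤ) (x y z : carrier), x ∈ grading i → y ∈ grading j →
    bracket x (bracket y z)
      = bracket (bracket x y) z + ((-1 : ℚ) ^ (i * j)) • bracket y (bracket x z)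
  leibniz : ∀ (i : ℤ) (x y : carrier), x ∈ grading i →
    d (bracket x y) = bracket (d x) y + ((-1 : ℚ) ^ i) • bracket x (d y)
  nonneg : ∀ n : ℤ, n < 0 → grading n = ⊥

/-- A morphism of dg Lie algebras. -/
def IsDGLieHom (g h : DGLie) (f : g.carrier →ₗ[ℚ] h.carrier) : Prop :=
  (∀ (n : ℤ), ∀ x ∈ g.grading n, f x ∈ h.grading n) ∧
  f.comp g.d = h.d.comp f ∧
  ∀ x y : g.carrier, f (g.bracket x y) = h.bracket (f x) (f y)

/-- A dg Lie algebra map from `g` into a dg algebra `A` equipped with the graded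
commutator bracket. -/
def IsLieToAlgHom (g : DGLie) (A : DGAlgebra) (φ : g.carrier →ₗ[ℚ] A.carrier) : Prop :=
  (∀ (n : ℤ), ∀ x ∈ g.grading n, φ x ∈ A.grading n) ∧
  φ.comp g.d = A.d.comp φ ∧
  ∀ (i j : ℤ) (x y : g.carrier), x ∈ g.grading i → y ∈ g.grading j →
    φ (g.bracket x y)
      = A.mul (φ x) (φ y) - ((-1 : ℚ) ^ (i * j)) • A.mul (φ y) (φ x)

/-- Data exhibiting a dg algebra as the universal enveloping algebra `𝒰g` of a dg Lie
algebra `g` (the quotient of the tensor algebra `Tg` by the two-sided dg ideal generated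
by `x ⊗ y - (-1)^{|x||y|} y ⊗ x - [x,y]`), characterised by its universal property:
dg Lie algebra maps `g → A` into the graded commutator of a dg algebra `A` factor
uniquely through a dg algebra map `𝒰g → A`. -/
structure UEnvData (g : DGLie) where
  alg : DGAlgebra
  ι : g.carrier →ₗ[ℚ] alg.carrier
  ι_lie : IsLieToAlgHom g alg ι
  univ : ∀ (A : DGAlgebra) (φ : g.carrier →ₗ[ℚ] A.carrier), IsLieToAlgHom g A φ →
    ∃! F : DGAlgebraHom alg A, F.toLinearMap.comp ι = φ

/-!
Over a field the underlying chain map of `f` is a chain homotopy equivalence, hence so is the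
induced map of tensor algebras. It therefore suffices to exhibit `𝒰𝔤` as a retract of `T𝔤`,
naturally in the dg Lie algebra `𝔤`, for then `𝒰f` is a retract of the quasi-isomorphism `Tf`.

The section of the projection `T𝔤 → 𝒰𝔤` is the inverse of the Poincaré-Birkhoff-Witt
symmetrization. The tensor algebra, with its letters primitive, is a filtered cocommutative super
bialgebra, and the logarithm of its identity for the convolution product has values in Lie
polynomials. Evaluating these in `𝔤` and exponentiating the result in `T𝔤` gives an endomorphism of
`T𝔤` that kills the ideal of relations, is the identity modulo that ideal, commutes with the
differentials and is natural in `𝔤`.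
-/

namespace DGEnveloping

open TensorAlgebra (ι)

/-- The tensor algebra over `ℚ`. -/
abbrev 𝓣 (V : Type*) [AddCommGroup V] [Module ℚ V] : Type _ := TensorAlgebra ℚ V

/-- A super vector space over `ℚ`, encoded by its parity involution, which is `1` on even and `-1`
on odd elements. Koszul signs are expressed by powers of this operator. -/
class SuperSpace (V : Type*) [AddCommGroup V] [Module ℚ V] where
  parity : Module.End ℚ V
  parity_mul_self : parity * parity = 1

open SuperSpace

section SuperSpace

variable {V : Type*} [AddCommGroup V] [Module ℚ V] [SuperSpace V]
variable {M N : Type*} [AddCommGroup M] [Module ℚ M] [AddCommGroup N] [Module ℚ N]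

@[simp] theorem parity_parity (x : V) : parity (parity x) = x :=
  LinearMap.congr_fun parity_mul_self x

/-- `x` is homogeneous of parity `i` modulo `2`. -/
def HasParity (i : ℕ) (x : V) : Prop := parity x = (-1 : ℚ) ^ i • x

/-- The projection onto the even part. -/
def evenPart : Module.End ℚ V := (2⁻¹ : ℚ) • (1 + parity)

/-- The projection onto the odd part. -/
def oddPart : Module.End ℚ V := (2⁻¹ : ℚ) • (1 - parity)

theorem evenPart_add_oddPart (x : V) : evenPart x + oddPart x = x := by
  simp only [evenPart, oddPart, LinearMap.smul_apply, LinearMap.add_apply, LinearMap.sub_apply,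
    Module.End.one_apply]
  module

theorem hasParity_evenPart (x : V) : HasParity 0 (evenPart x) := by
  simp [HasParity, evenPart, add_comm]

theorem hasParity_oddPart (x : V) : HasParity 1 (oddPart x) := by
  simp [HasParity, oddPart, ← smul_neg]

@[elab_as_elim]
theorem hasParity_induction {C : V → Prop} (hom : ∀ i x, HasParity i x → C x)
    (add : ∀ x y, C x → C y → C (x + y)) (x : V) : C x :=
  evenPart_add_oddPart x ▸
    add _ _ (hom 0 _ (hasParity_evenPart x)) (hom 1 _ (hasParity_oddPart x))

theorem HasParity.even_or_odd {i : ℕ} {x : V} (hx : HasParity i x) :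
    (Even i ∧ evenPart x = x ∧ oddPart x = 0) ∨ (Odd i ∧ evenPart x = 0 ∧ oddPart x = x) := by
  have half : (2⁻¹ : ℚ) • x + (2⁻¹ : ℚ) • x = x := by module
  rcases i.even_or_odd with h | h <;> simp only [HasParity, h.neg_one_pow] at hx
  · exact .inl ⟨h, by simp [evenPart, hx, half], by simp [oddPart, hx]⟩
  · exact .inr ⟨h, by simp [evenPart, hx], by simp [oddPart, hx, half]⟩

/-- Twists a bilinear map `a` by the Koszul sign rule for an involution `θ`: the value at `x` of
parity `i` is `a x ∘ₗ θ ^ i`. -/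
def koszulTwist (a : V →ₗ[ℚ] M →ₗ[ℚ] N) (θ : Module.End ℚ M) : V →ₗ[ℚ] M →ₗ[ℚ] N :=
  a ∘ₗ evenPart + LinearMap.lcomp ℚ N θ ∘ₗ a ∘ₗ oddPart

theorem HasParity.koszulTwist_apply {i : ℕ} {x : V} (hx : HasParity i x)
    (a : V →ₗ[ℚ] M →ₗ[ℚ] N) {θ : Module.End ℚ M} (hθ : θ * θ = 1) (m : M) :
    koszulTwist a θ x m = a x ((θ ^ i) m) := by
  rw [← sq] at hθ
  rcases hx.even_or_odd with ⟨⟨k, rfl⟩, h0, h1⟩ | ⟨⟨k, rfl⟩, h0, h1⟩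
  · simp [koszulTwist, h0, h1, ← two_mul, pow_mul, hθ]
  · simp [koszulTwist, h0, h1, pow_succ, pow_mul, hθ]

theorem HasParity.eq {i : ℕ} {x : V} (hx : HasParity i x) : parity x = (-1 : ℚ) ^ i • x := hx

theorem HasParity.parity_pow {i : ℕ} {x : V} (hx : HasParity i x) (j : ℕ) :
    (parity ^ j) x = (-1 : ℚ) ^ (i * j) • x := by
  induction j with
  | zero => simp
  | succ j ih => rw [pow_succ', Module.End.mul_apply, ih, map_smul, hx, smul_smul, mul_add_one,
      pow_add]

theorem parity_pow_parity (i : ℕ) (x : V) : (parity ^ i) (parity x) = parity ((parity ^ i) x) := by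
  rw [← Module.End.mul_apply, ← Module.End.mul_apply, ← pow_succ, pow_succ']

@[simp] theorem parity_pow_parity_pow (i : ℕ) (x : V) : (parity ^ i) ((parity ^ i) x) = x := by
  rw [← Module.End.mul_apply, ← pow_add, ← two_mul, pow_mul, sq, parity_mul_self, one_pow,
    Module.End.one_apply]

end SuperSpace

section TensorRec

variable {V : Type*} [AddCommGroup V] [Module ℚ V] {M : Type*} [AddCommGroup M] [Module ℚ M]

theorem tensorAlgebra_span_induction (S : Submodule ℚ (𝓣 V)) (one : (1 : 𝓣 V) ∈ S)
    (ι_mul : ∀ x, ∀ u ∈ S, ι ℚ x * u ∈ S) (u : 𝓣 V) : u ∈ S := by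
  suffices ∀ w ∈ S, u * w ∈ S by simpa using this 1 one
  induction u using TensorAlgebra.induction with
  | algebraMap r => exact fun w hw => by simpa [← Algebra.smul_def] using S.smul_mem r hw
  | ι x => exact ι_mul x
  | mul a b ha hb => exact fun w hw => mul_assoc a b w ▸ ha _ (hb _ hw)
  | add a b ha hb => exact fun w hw => add_mul a b w ▸ S.add_mem (ha _ hw) (hb _ hw)

theorem tensorAlgebra_linearMap_ext [SuperSpace V] {f h : 𝓣 V →ₗ[ℚ] M} (one : f 1 = h 1)
    (ι_mul : ∀ i x u, HasParity i x → f u = h u → f (ι ℚ x * u) = h (ι ℚ x * u)) : f = h := by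
  ext u
  refine tensorAlgebra_span_induction (LinearMap.eqLocus f h) one (fun x u hu => ?_) u
  induction x using hasParity_induction with
  | hom i x hx => exact ι_mul i x u hx hu
  | add x y hx hy => simpa [add_mul] using congr($hx + $hy)

variable (a : V →ₗ[ℚ] Module.End ℚ M) (b : V →ₗ[ℚ] 𝓣 V →ₗ[ℚ] M) (m : M)

/-- The action of letters on pairs `(F u, u)` that computes `tensorRec`. -/
def tensorRecStep : V →ₗ[ℚ] Module.End ℚ (M × 𝓣 V) :=
  LinearMap.mk₂ ℚ (fun x p => (a x p.1 + b x p.2, ι ℚ x * p.2))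
    (fun x y p => by ext <;> simp [add_mul, add_add_add_comm]) (fun c x p => by ext <;> simp)
    (fun x p q => by ext <;> simp [mul_add, add_add_add_comm]) (fun c x p => by ext <;> simp)

/-- Structural recursion on words: the linear map `F` with `F 1 = m` and
`F (ι x * u) = a x (F u) + b x u`. -/
def tensorRec : 𝓣 V →ₗ[ℚ] M :=
  LinearMap.fst ℚ M (𝓣 V) ∘ₗ (TensorAlgebra.lift ℚ (tensorRecStep a b)).toLinearMap.flip (m, 1)

@[simp] theorem tensorRec_one : tensorRec a b m 1 = m := by
  simp [tensorRec]

@[simp] theorem tensorRec_ι_mul (x : V) (u : 𝓣 V) :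
    tensorRec a b m (ι ℚ x * u) = a x (tensorRec a b m u) + b x u := by
  have snd : LinearMap.snd ℚ M (𝓣 V) ∘ₗ
      (TensorAlgebra.lift ℚ (tensorRecStep a b)).toLinearMap.flip (m, 1) = LinearMap.id := by
    ext u
    exact tensorAlgebra_span_induction (LinearMap.eqLocus _ _) (by simp)
      (fun x u hu => by simpa [tensorRecStep] using congr(ι ℚ x * $hu)) u
  have hu : (TensorAlgebra.lift ℚ (tensorRecStep a b) u (m, 1)).2 = u := LinearMap.congr_fun snd u
  simp [tensorRec, ← congr(b x $hu), tensorRecStep]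

end TensorRec

section TensorMap

variable {V W : Type*} [AddCommGroup V] [Module ℚ V] [AddCommGroup W] [Module ℚ W]

/-- The morphism of tensor algebras induced by a linear map. -/
def tensorMap (k : V →ₗ[ℚ] W) : 𝓣 V →ₐ[ℚ] 𝓣 W := TensorAlgebra.lift ℚ (ι ℚ ∘ₗ k)

@[simp] theorem tensorMap_ι (k : V →ₗ[ℚ] W) (x : V) : tensorMap k (ι ℚ x) = ι ℚ (k x) :=
  TensorAlgebra.lift_ι_apply _ x

theorem tensorMap_comp {U : Type*} [AddCommGroup U] [Module ℚ U] (g : V →ₗ[ℚ] W) (f : U →ₗ[ℚ] V) :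
    (tensorMap (g ∘ₗ f)).toLinearMap = (tensorMap g).toLinearMap ∘ₗ (tensorMap f).toLinearMap :=
  congrArg AlgHom.toLinearMap (TensorAlgebra.hom_ext (g := (tensorMap g).comp (tensorMap f))
    (by ext x; simp))

end TensorMap

section TensorParity

variable {V : Type*} [AddCommGroup V] [Module ℚ V] [SuperSpace V]

variable (V) in
/-- The parity operator of a tensor algebra as an algebra map. -/
def tensorParity : 𝓣 V →ₐ[ℚ] 𝓣 V := tensorMap parity

theorem tensorParity_comp_self : (tensorParity V).comp (tensorParity V) = AlgHom.id ℚ (𝓣 V) := by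
  ext; simp [tensorParity]

instance : SuperSpace (𝓣 V) where
  parity := (tensorParity V).toLinearMap
  parity_mul_self := congr(AlgHom.toLinearMap $tensorParity_comp_self)

@[simp] theorem parity_ι (x : V) : parity (ι ℚ x) = ι ℚ (parity x) :=
  tensorMap_ι parity x

@[simp] theorem parity_one : parity (1 : 𝓣 V) = 1 := map_one (tensorParity V)

@[simp] theorem parity_mul (u w : 𝓣 V) : parity (u * w) = parity u * parity w :=
  map_mul (tensorParity V) u w

theorem toLinearMap_tensorParity_pow (i : ℕ) :
    (tensorParity V ^ i).toLinearMap = parity ^ i := by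
  induction i with
  | zero => rfl
  | succ i ih => rw [pow_succ, pow_succ, ← ih]; rfl

@[simp] theorem parity_pow_one (i : ℕ) : (parity ^ i) (1 : 𝓣 V) = 1 :=
  toLinearMap_tensorParity_pow (V := V) i ▸ map_one (tensorParity V ^ i)

@[simp] theorem parity_pow_mul (i : ℕ) (u w : 𝓣 V) :
    (parity ^ i) (u * w) = (parity ^ i) u * (parity ^ i) w :=
  toLinearMap_tensorParity_pow (V := V) i ▸ map_mul (tensorParity V ^ i) u w

@[simp] theorem parity_pow_ι (i : ℕ) (x : V) : (parity ^ i) (ι ℚ x) = ι ℚ ((parity ^ i) x) := by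
  induction i with
  | zero => rfl
  | succ i ih => simp [pow_succ', ih]

theorem HasParity.letter {i : ℕ} {x : V} (hx : HasParity i x) : HasParity i (ι ℚ x) := by
  rw [HasParity, parity_ι, hx, map_smul]

theorem hasParity_one : HasParity 0 (1 : 𝓣 V) := by simp [HasParity]

theorem HasParity.mul {i j : ℕ} {u w : 𝓣 V} (hu : HasParity i u) (hw : HasParity j w) :
    HasParity (i + j) (u * w) := by
  rw [HasParity, parity_mul, hu, hw, smul_mul_smul_comm, pow_add]

theorem HasParity.map {W : Type*} [AddCommGroup W] [Module ℚ W] [SuperSpace W] {i : ℕ} {x : V}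
    (hx : HasParity i x) {f : V →ₗ[ℚ] W} (hf : f ∘ₗ parity = parity ∘ₗ f) : HasParity i (f x) := by
  rw [HasParity, ← LinearMap.comp_apply, ← hf, LinearMap.comp_apply, hx, map_smul]

theorem map_parity_pow {W : Type*} [AddCommGroup W] [Module ℚ W] [SuperSpace W] {f : V →ₗ[ℚ] W}
    (hf : f ∘ₗ parity = parity ∘ₗ f) (i : ℕ) (x : V) : f ((parity ^ i) x) = (parity ^ i) (f x) := by
  induction i with
  | zero => rfl
  | succ i ih =>
    rw [pow_succ', pow_succ', Module.End.mul_apply, Module.End.mul_apply, ← ih]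
    exact LinearMap.congr_fun hf _

theorem tensorAlgebra_linearMap_ext_parity {M : Type*} [AddCommGroup M] [Module ℚ M]
    {f h : 𝓣 V →ₗ[ℚ] M} (one : f 1 = h 1)
    (ι_mul : ∀ i x u, HasParity i x → f u = h u →
      f ((parity ^ i) u) = h ((parity ^ i) u) → f (ι ℚ x * u) = h (ι ℚ x * u)) : f = h := by
  let S : Submodule ℚ (𝓣 V) := ⨅ k, LinearMap.eqLocus (f ∘ₗ parity ^ k) (h ∘ₗ parity ^ k)
  have mem_S {u : 𝓣 V} : u ∈ S ↔ ∀ k, f ((parity ^ k) u) = h ((parity ^ k) u) := by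
    simp [S, LinearMap.mem_eqLocus]
  ext u
  have one_mem : 1 ∈ S := mem_S.mpr (by simp [one])
  refine mem_S.mp (tensorAlgebra_span_induction S one_mem (fun x u hu => ?_) u) 0
  induction x using hasParity_induction with
  | add x y hx hy => simpa [add_mul] using add_mem hx hy
  | hom i x hx =>
    refine mem_S.mpr fun k => ?_
    simp only [parity_pow_mul, parity_pow_ι, hx.parity_pow, map_smul, smul_mul_assoc]
    congr 1
    refine ι_mul i x _ hx (mem_S.mp hu k) ?_
    rw [← Module.End.mul_apply, ← pow_add]
    exact mem_S.mp hu (i + k)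

end TensorParity

section Coproduct

variable {V : Type*} [AddCommGroup V] [Module ℚ V]

variable (V) in
/-- The left multiplication action of the tensor algebra on the first factor of `𝓣 V ⊗ 𝓣 V`. -/
def leftAction : 𝓣 V →ₐ[ℚ] Module.End ℚ (𝓣 V ⊗[ℚ] 𝓣 V) :=
  (Module.End.rTensorAlgHom ℚ (𝓣 V) (𝓣 V)).comp (Algebra.lmul ℚ (𝓣 V))

@[simp] theorem leftAction_tmul (u a b : 𝓣 V) : leftAction V u (a ⊗ₜ b) = (u * a) ⊗ₜ b := rfl

variable (V) in
/-- The counit of the tensor algebra, as an algebra map. -/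
abbrev tensorCounit : 𝓣 V →ₐ[ℚ] ℚ := TensorAlgebra.algebraMapInv

@[simp] theorem tensorCounit_ι (x : V) : tensorCounit V (ι ℚ x) = 0 := by
  simp [TensorAlgebra.algebraMapInv]

@[simp] theorem tensorCounit_tensorMap {W : Type*} [AddCommGroup W] [Module ℚ W] (k : W →ₗ[ℚ] V)
    (u : 𝓣 W) : tensorCounit V (tensorMap k u) = tensorCounit W u :=
  DFunLike.congr_fun (show (tensorCounit V).comp (tensorMap k) = tensorCounit W by ext; simp) u

variable [SuperSpace V]

variable (V) in
/-- The linear map underlying `rightAction`. -/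
def rightActionLinear : 𝓣 V →ₗ[ℚ] Module.End ℚ (𝓣 V ⊗[ℚ] 𝓣 V) :=
  koszulTwist (LinearMap.lTensorHom (𝓣 V) ∘ₗ LinearMap.mul ℚ (𝓣 V)) (LinearMap.rTensor (𝓣 V) parity)

theorem HasParity.rightActionLinear_tmul {i : ℕ} {u : 𝓣 V} (hu : HasParity i u) (a b : 𝓣 V) :
    rightActionLinear V u (a ⊗ₜ b) = (parity ^ i) a ⊗ₜ (u * b) := by
  have involutive : LinearMap.rTensor (𝓣 V) (parity : Module.End ℚ (𝓣 V)) *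
      LinearMap.rTensor (𝓣 V) parity = 1 := by
    rw [← LinearMap.rTensor_mul, parity_mul_self, Module.End.one_eq_id, LinearMap.rTensor_id]; rfl
  rw [rightActionLinear, hu.koszulTwist_apply _ involutive, LinearMap.rTensor_pow]
  rfl

theorem rightActionLinear_mul (u w : 𝓣 V) :
    rightActionLinear V (u * w) = rightActionLinear V u * rightActionLinear V w := by
  induction u using hasParity_induction with
  | add x y hx hy => rw [add_mul, map_add, hx, hy, map_add, add_mul]
  | hom i u hu => induction w using hasParity_induction with
    | add x y hx hy => rw [mul_add, map_add, hx, hy, map_add, mul_add]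
    | hom j w hw =>
      ext a b
      simp [(hu.mul hw).rightActionLinear_tmul, hu.rightActionLinear_tmul,
        hw.rightActionLinear_tmul, pow_add, mul_assoc]

variable (V) in
/-- The left multiplication action of the tensor algebra on the second factor of `𝓣 V ⊗ 𝓣 V`, with
Koszul signs. -/
def rightAction : 𝓣 V →ₐ[ℚ] Module.End ℚ (𝓣 V ⊗[ℚ] 𝓣 V) :=
  AlgHom.ofLinearMap (rightActionLinear V)
    (by ext; simp [hasParity_one.rightActionLinear_tmul]) rightActionLinear_mul

theorem HasParity.rightAction_tmul {i : ℕ} {u : 𝓣 V} (hu : HasParity i u) (a b : 𝓣 V) :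
    rightAction V u (a ⊗ₜ b) = (parity ^ i) a ⊗ₜ (u * b) :=
  hu.rightActionLinear_tmul a b

theorem HasParity.rightAction_mul_leftAction {i : ℕ} {u : 𝓣 V} (hu : HasParity i u) (w : 𝓣 V) :
    rightAction V u * leftAction V w = leftAction V ((parity ^ i) w) * rightAction V u := by
  ext a b; simp [hu.rightAction_tmul]

variable (V) in
/-- The left multiplication action of the tensor algebra on `𝓣 V ⊗ 𝓣 V` for which the letters act
as primitive elements. -/
def diagonalAction : 𝓣 V →ₐ[ℚ] Module.End ℚ (𝓣 V ⊗[ℚ] 𝓣 V) :=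
  TensorAlgebra.lift ℚ (((leftAction V).toLinearMap + (rightAction V).toLinearMap) ∘ₗ ι ℚ)

@[simp] theorem diagonalAction_ι (x : V) :
    diagonalAction V (ι ℚ x) = leftAction V (ι ℚ x) + rightAction V (ι ℚ x) :=
  TensorAlgebra.lift_ι_apply _ x

variable (V) in
/-- The coproduct of the tensor algebra that makes the letters primitive. -/
def tensorComul : 𝓣 V →ₗ[ℚ] 𝓣 V ⊗[ℚ] 𝓣 V := (diagonalAction V).toLinearMap.flip (1 ⊗ₜ 1)

theorem tensorComul_apply (u : 𝓣 V) : tensorComul V u = diagonalAction V u (1 ⊗ₜ 1) := rfl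

@[simp] theorem tensorComul_one : tensorComul V 1 = 1 ⊗ₜ 1 := by simp [tensorComul]

theorem tensorComul_mul (u w : 𝓣 V) :
    tensorComul V (u * w) = diagonalAction V u (tensorComul V w) := by simp [tensorComul]

theorem tensorComul_parity (u : 𝓣 V) :
    tensorComul V (parity u) = TensorProduct.map parity parity (tensorComul V u) := by
  refine LinearMap.congr_fun (f := tensorComul V ∘ₗ parity)
    (g := TensorProduct.map parity parity ∘ₗ tensorComul V) ?_ u
  refine tensorAlgebra_linearMap_ext (by simp) fun i x u hx hu => ?_
  simp only [LinearMap.comp_apply, parity_mul, parity_ι, tensorComul_mul] at hu ⊢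
  rw [hu, hx, map_smul, map_smul, diagonalAction_ι]
  induction tensorComul V u with
  | zero => simp
  | add z w hz hw => simp only [map_add, hz, hw]
  | tmul a b =>
    simp [hx.letter.rightAction_tmul, hx.eq, parity_pow_parity, TensorProduct.smul_tmul']

theorem tensorComul_parity_pow (i : ℕ) (u : 𝓣 V) :
    tensorComul V ((parity ^ i) u) =
      TensorProduct.map (parity ^ i) (parity ^ i) (tensorComul V u) := by
  induction i with
  | zero => simp [Module.End.one_eq_id]
  | succ i ih =>
    simp only [pow_succ', Module.End.mul_apply, tensorComul_parity, ih, TensorProduct.map_mul]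

@[simp] theorem tensorCounit_parity (u : 𝓣 V) : tensorCounit V (parity u) = tensorCounit V u :=
  tensorCounit_tensorMap parity u

@[simp] theorem tensorCounit_parity_pow (i : ℕ) (u : 𝓣 V) :
    tensorCounit V ((parity ^ i) u) = tensorCounit V u := by
  induction i with
  | zero => rfl
  | succ i ih => rw [pow_succ', Module.End.mul_apply, tensorCounit_parity, ih]

theorem rTensor_counit_tensorComul (u : 𝓣 V) :
    LinearMap.rTensor (𝓣 V) (tensorCounit V).toLinearMap (tensorComul V u) = 1 ⊗ₜ u := by
  refine LinearMap.congr_fun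
    (f := LinearMap.rTensor (𝓣 V) (tensorCounit V).toLinearMap ∘ₗ tensorComul V)
    (g := TensorProduct.mk ℚ ℚ (𝓣 V) 1) ?_ u
  refine tensorAlgebra_linearMap_ext (by simp) fun i x u hx hu => ?_
  have := congr(LinearMap.lTensor ℚ (LinearMap.mulLeft ℚ (ι ℚ x)) $hu)
  simp only [LinearMap.comp_apply, tensorComul_mul, diagonalAction_ι] at this ⊢
  refine Eq.trans ?_ (this.trans (by simp))
  induction tensorComul V u with
  | zero => simp
  | add z w hz hw => simp only [map_add, hz, hw]
  | tmul a b => simp [hx.letter.rightAction_tmul]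

theorem lTensor_counit_tensorComul (u : 𝓣 V) :
    LinearMap.lTensor (𝓣 V) (tensorCounit V).toLinearMap (tensorComul V u) = u ⊗ₜ 1 := by
  refine LinearMap.congr_fun
    (f := LinearMap.lTensor (𝓣 V) (tensorCounit V).toLinearMap ∘ₗ tensorComul V)
    (g := (TensorProduct.mk ℚ (𝓣 V) ℚ).flip 1) ?_ u
  refine tensorAlgebra_linearMap_ext (by simp) fun i x u hx hu => ?_
  have := congr(LinearMap.rTensor ℚ (LinearMap.mulLeft ℚ (ι ℚ x)) $hu)
  simp only [LinearMap.comp_apply, tensorComul_mul, diagonalAction_ι] at this ⊢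
  refine Eq.trans ?_ (this.trans (by simp))
  induction tensorComul V u with
  | zero => simp
  | add z w hz hw => simp only [map_add, hz, hw]
  | tmul a b => simp [hx.letter.rightAction_tmul]

/-- The action of a letter of parity `i` on the threefold tensor product. -/
def diagonalAction₃ (i : ℕ) (x : V) : Module.End ℚ (𝓣 V ⊗[ℚ] (𝓣 V ⊗[ℚ] 𝓣 V)) :=
  LinearMap.rTensor _ (LinearMap.mulLeft ℚ (ι ℚ x)) +
    TensorProduct.map (parity ^ i) (diagonalAction V (ι ℚ x))

theorem tensorComul_coassoc (u : 𝓣 V) :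
    TensorProduct.assoc ℚ _ _ _ (LinearMap.rTensor (𝓣 V) (tensorComul V) (tensorComul V u)) =
      LinearMap.lTensor (𝓣 V) (tensorComul V) (tensorComul V u) := by
  refine LinearMap.congr_fun (f := (TensorProduct.assoc ℚ (𝓣 V) (𝓣 V) (𝓣 V)).toLinearMap ∘ₗ
      LinearMap.rTensor (𝓣 V) (tensorComul V) ∘ₗ tensorComul V)
    (g := LinearMap.lTensor (𝓣 V) (tensorComul V) ∘ₗ tensorComul V) ?_ u
  refine tensorAlgebra_linearMap_ext (by simp) fun i x u hx hu => ?_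
  have left (z : 𝓣 V ⊗[ℚ] 𝓣 V) : TensorProduct.assoc ℚ _ _ _
      (LinearMap.rTensor (𝓣 V) (tensorComul V) (diagonalAction V (ι ℚ x) z)) =
      diagonalAction₃ i x (TensorProduct.assoc ℚ _ _ _
        (LinearMap.rTensor (𝓣 V) (tensorComul V) z)) := by
    induction z with
    | zero => simp
    | add z w hz hw => simp only [map_add, hz, hw]
    | tmul a b =>
      simp only [diagonalAction_ι, LinearMap.add_apply, leftAction_tmul, hx.letter.rightAction_tmul,
        map_add, LinearMap.rTensor_tmul, tensorComul_mul, tensorComul_parity_pow]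
      induction tensorComul V a with
      | zero => simp
      | add z w hz hw =>
        simp only [map_add, TensorProduct.add_tmul] at hz hw ⊢
        rw [← hz, ← hw]; abel
      | tmul a a' =>
        simp [diagonalAction₃, hx.letter.rightAction_tmul, TensorProduct.add_tmul,
          TensorProduct.tmul_add, add_assoc]
  have right (z : 𝓣 V ⊗[ℚ] 𝓣 V) :
      LinearMap.lTensor (𝓣 V) (tensorComul V) (diagonalAction V (ι ℚ x) z) =
      diagonalAction₃ i x (LinearMap.lTensor (𝓣 V) (tensorComul V) z) := by
    induction z with
    | zero => simp
    | add z w hz hw => simp only [map_add, hz, hw]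
    | tmul a b => simp [diagonalAction₃, hx.letter.rightAction_tmul, tensorComul_mul]
  simp only [LinearMap.comp_apply, LinearEquiv.coe_coe] at hu ⊢
  rw [tensorComul_mul, left, hu, ← right]

instance : Coalgebra ℚ (𝓣 V) where
  comul := tensorComul V
  counit := (tensorCounit V).toLinearMap
  coassoc := LinearMap.ext tensorComul_coassoc
  rTensor_counit_comp_comul := LinearMap.ext rTensor_counit_tensorComul
  lTensor_counit_comp_comul := LinearMap.ext lTensor_counit_tensorComul

variable (V) in
/-- The Koszul signed braiding of the tensor algebra with itself. -/
def koszulSwap : Module.End ℚ (𝓣 V ⊗[ℚ] 𝓣 V) :=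
  TensorProduct.lift (koszulTwist (TensorProduct.mk ℚ (𝓣 V) (𝓣 V)).flip parity)

theorem HasParity.koszulSwap_tmul {i : ℕ} {a : 𝓣 V} (ha : HasParity i a) (b : 𝓣 V) :
    koszulSwap V (a ⊗ₜ b) = (parity ^ i) b ⊗ₜ a := by
  simp [koszulSwap, ha.koszulTwist_apply _ parity_mul_self]

theorem koszulSwap_tensorComul (u : 𝓣 V) : koszulSwap V (tensorComul V u) = tensorComul V u := by
  refine LinearMap.congr_fun (f := koszulSwap V ∘ₗ tensorComul V) (g := tensorComul V) ?_ u
  refine tensorAlgebra_linearMap_ext (by simp [hasParity_one.koszulSwap_tmul])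
    fun i x u hx hu => ?_
  have swap (z : 𝓣 V ⊗[ℚ] 𝓣 V) : koszulSwap V (diagonalAction V (ι ℚ x) z) =
      diagonalAction V (ι ℚ x) (koszulSwap V z) := by
    induction z with
    | zero => simp
    | add z w hz hw => simp only [map_add, hz, hw]
    | tmul a b =>
      induction a using hasParity_induction with
      | add a a' ha ha' => simp only [TensorProduct.add_tmul, map_add, ha, ha']
      | hom j a ha =>
        simp [hx.letter.rightAction_tmul, (hx.letter.mul ha).koszulSwap_tmul, ha.koszulSwap_tmul,
          ha.parity_pow, hx.parity_pow, ← TensorProduct.smul_tmul', smul_smul, ← mul_pow,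
          mul_comm j i, pow_add, add_comm]
  rw [LinearMap.comp_apply, tensorComul_mul, swap]
  exact congr(diagonalAction V (ι ℚ x) $hu)

end Coproduct

/-- A complete separated decreasing multiplicative filtration of a ring. -/
class CompleteFiltration (R : Type*) [Ring R] where
  fil : ℕ → Ideal R
  fil_zero : fil 0 = ⊤
  antitone_fil : Antitone fil
  mul_mem_fil {i j : ℕ} {a b : R} : a ∈ fil i → b ∈ fil j → a * b ∈ fil (i + j)
  eq_zero_of_mem_fil {a : R} : (∀ n, a ∈ fil n) → a = 0
  exists_limit (s : ℕ → R) : (∀ n, s (n + 1) - s n ∈ fil n) → ∃ a, ∀ n, a - s n ∈ fil n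

namespace CompleteFiltration

variable {R : Type*} [Ring R] [CompleteFiltration R]

instance (n : ℕ) : (fil n : Ideal R).IsTwoSided where
  mul_mem_of_left _ ha := mul_mem_fil (j := 0) ha (fil_zero (R := R) ▸ Submodule.mem_top)

theorem pow_mem_fil {a : R} {i : ℕ} (ha : a ∈ fil i) (n : ℕ) : a ^ n ∈ fil (n * i) := by
  induction n with
  | zero => simp [fil_zero]
  | succ n ih => rw [pow_succ, add_one_mul]; exact mul_mem_fil ih ha

theorem eq_of_forall_sub_mem_fil {a b : R} (h : ∀ n, a - b ∈ fil n) : a = b :=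
  sub_eq_zero.mp (eq_zero_of_mem_fil h)

theorem pow_sub_pow_mem_fil {a b : R} {k : ℕ} (ha : a ∈ fil 1) (hb : b ∈ fil 1)
    (hab : a - b ∈ fil k) (n : ℕ) : a ^ (n + 1) - b ^ (n + 1) ∈ fil (k + n) := by
  induction n with
  | zero => simpa using hab
  | succ n ih =>
    have split : a ^ (n + 2) - b ^ (n + 2) =
        a ^ (n + 1) * (a - b) + (a ^ (n + 1) - b ^ (n + 1)) * b := by
      rw [pow_succ a, pow_succ b]; noncomm_ring
    rw [split]
    have left := mul_mem_fil (pow_mem_fil ha (n + 1)) hab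
    rw [mul_one, add_comm] at left
    exact add_mem left (mul_mem_fil (i := k + n) ih hb)

variable [Algebra ℚ R]

/-- The truncated exponential series. -/
def expSum (a : R) (n : ℕ) : R := ∑ k ∈ Finset.range n, (k.factorial : ℚ)⁻¹ • a ^ k

/-- The exponential of an element of `fil 1`, the limit of the partial sums `expSum`. -/
def exp (a : R) : R := Classical.epsilon fun e => ∀ n, e - expSum a n ∈ fil n

theorem smul_mem_fil (c : ℚ) {a : R} {n : ℕ} (ha : a ∈ fil n) : c • a ∈ fil n := by
  rw [Algebra.smul_def]; exact Ideal.mul_mem_left _ _ ha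

theorem exp_sub_expSum_mem_fil {a : R} (ha : a ∈ fil 1) (n : ℕ) : exp a - expSum a n ∈ fil n := by
  refine Classical.epsilon_spec (exists_limit (expSum a) fun n => ?_) n
  rw [expSum, Finset.sum_range_succ, ← expSum, add_sub_cancel_left]
  exact smul_mem_fil _ (by simpa using pow_mem_fil ha n)

theorem eq_exp {a e : R} (ha : a ∈ fil 1) (h : ∀ n, e - expSum a n ∈ fil n) : e = exp a :=
  eq_of_forall_sub_mem_fil fun n => by
    simpa using sub_mem (h n) (exp_sub_expSum_mem_fil ha n)

theorem exp_add_of_commute {a b : R} (ha : a ∈ fil 1) (hb : b ∈ fil 1) (hab : Commute a b) :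
    exp (a + b) = exp a * exp b := by
  refine eq_of_forall_sub_mem_fil fun n => ?_
  let π := Ideal.Quotient.mk (fil n : Ideal R)
  have pow_eq_zero {c : R} (hc : c ∈ fil 1) : π c ^ n = 0 := by
    rw [← map_pow]; exact Ideal.Quotient.eq_zero_iff_mem.mpr (by simpa using pow_mem_fil hc n)
  have map_exp {c : R} (hc : c ∈ fil 1) : π (exp c) = IsNilpotent.exp (π c) := by
    rw [IsNilpotent.exp_eq_sum (pow_eq_zero hc),
      Ideal.Quotient.eq.mpr (exp_sub_expSum_mem_fil hc n)]
    simp [expSum, π, map_rat_smul]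
  rw [← Ideal.Quotient.eq, map_mul, map_exp ha, map_exp hb, map_exp (add_mem ha hb), map_add,
    IsNilpotent.exp_add_of_commute (hab.map π) ⟨n, pow_eq_zero ha⟩ ⟨n, pow_eq_zero hb⟩]

theorem exp_sub_exp_sub_mem_fil {a b : R} {k : ℕ} (ha : a ∈ fil 1) (hb : b ∈ fil 1)
    (hab : a - b ∈ fil k) : exp a - exp b - (a - b) ∈ fil (k + 1) := by
  have tail : expSum a (k + 2) - expSum b (k + 2) - (a - b) ∈ fil (k + 1) := by
    simp only [expSum, ← Finset.sum_sub_distrib, ← smul_sub]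
    rw [Finset.sum_range_succ', Finset.sum_range_succ']
    simp only [pow_zero, sub_self, smul_zero, add_zero, zero_add, pow_one, Nat.factorial_one,
      Nat.cast_one, inv_one, one_smul, add_sub_cancel_right]
    refine sum_mem fun n _ => smul_mem_fil _ ?_
    exact antitone_fil (by omega) (pow_sub_pow_mem_fil ha hb hab (n + 1))
  have ha' := antitone_fil (by omega) (exp_sub_expSum_mem_fil ha (k + 2)) (a := k + 1)
  have hb' := antitone_fil (by omega) (exp_sub_expSum_mem_fil hb (k + 2)) (a := k + 1)
  convert add_mem (sub_mem ha' hb') tail using 1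
  abel

theorem exp_injOn : Set.InjOn (exp : R → R) (fil 1 : Ideal R) := by
  intro a ha b hb hab
  refine eq_of_forall_sub_mem_fil fun n => ?_
  induction n with
  | zero => simp [fil_zero]
  | succ n ih => simpa [hab, ← neg_mem_iff (x := a - b)] using exp_sub_exp_sub_mem_fil ha hb ih

@[simp] theorem exp_zero : exp (0 : R) = 1 := by
  refine (eq_exp (zero_mem _) fun n => ?_).symm
  cases n with
  | zero => simp [fil_zero]
  | succ n => simp [expSum, Finset.sum_range_succ']

/-- Successive approximations to the logarithm of an element of `1 + fil 1`. -/
def logApprox (f : R) : ℕ → R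
  | 0 => 0
  | n + 1 => logApprox f n + (f - exp (logApprox f n))

theorem logApprox_spec {f : R} (hf : f - 1 ∈ fil 1) (n : ℕ) :
    logApprox f n ∈ fil 1 ∧ f - exp (logApprox f n) ∈ fil (n + 1) := by
  induction n with
  | zero => simpa [logApprox] using hf
  | succ n ih =>
    obtain ⟨mem_fil, error⟩ := ih
    have mem_fil_succ : logApprox f (n + 1) ∈ fil 1 :=
      add_mem mem_fil (antitone_fil (by omega) error)
    refine ⟨mem_fil_succ, ?_⟩
    have linearization := exp_sub_exp_sub_mem_fil mem_fil_succ mem_fil (k := n + 1)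
      (by simpa [logApprox] using error)
    convert neg_mem linearization using 1
    simp only [logApprox]
    abel

/-- The logarithm of an element of `1 + fil 1`, the limit of the approximations `logApprox`. -/
def log (f : R) : R := Classical.epsilon fun a => ∀ n, a - logApprox f n ∈ fil n

section log

variable {f : R} (hf : f - 1 ∈ fil 1)
include hf

theorem log_sub_logApprox_mem_fil (n : ℕ) : log f - logApprox f n ∈ fil n := by
  refine Classical.epsilon_spec (exists_limit (logApprox f) fun n => ?_) n
  simpa [logApprox] using antitone_fil (by omega) (logApprox_spec hf n).2

theorem log_mem_fil : log f ∈ fil 1 := by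
  simpa using add_mem (log_sub_logApprox_mem_fil hf 1) (logApprox_spec hf 1).1

theorem exp_log : exp (log f) = f := by
  refine eq_of_forall_sub_mem_fil fun n => ?_
  have approx := log_sub_logApprox_mem_fil hf n
  have linearization := exp_sub_exp_sub_mem_fil (log_mem_fil hf) (logApprox_spec hf n).1 approx
  have exp_approx : exp (log f) - exp (logApprox f n) ∈ fil n := by
    simpa using add_mem (antitone_fil (by omega) linearization) approx
  simpa using sub_mem exp_approx (antitone_fil (by omega) (logApprox_spec hf n).2)

end log

section Subalgebra

variable {S : Subalgebra ℚ R} (closed : ∀ f : R, (∀ n, ∃ g ∈ S, f - g ∈ fil n) → f ∈ S)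
include closed

theorem exp_mem {a : R} (ha : a ∈ fil 1) (haS : a ∈ S) : exp a ∈ S :=
  closed _ fun n => ⟨expSum a n, sum_mem fun k _ => S.smul_mem (pow_mem haS k) _,
    exp_sub_expSum_mem_fil ha n⟩

theorem log_mem {f : R} (hf : f - 1 ∈ fil 1) (hfS : f ∈ S) : log f ∈ S := by
  refine closed _ fun n => ⟨logApprox f n, ?_, log_sub_logApprox_mem_fil hf n⟩
  induction n with
  | zero => exact S.zero_mem
  | succ n ih =>
    exact add_mem ih (sub_mem hfS (exp_mem closed (logApprox_spec hf n).1 ih))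

end Subalgebra

section Map

variable {R' : Type*} [Ring R'] [Algebra ℚ R'] [CompleteFiltration R'] {φ : R →ₐ[ℚ] R'}
  (hφ : ∀ n, ∀ a ∈ fil n, φ a ∈ fil n)
include hφ

theorem map_exp {a : R} (ha : a ∈ fil 1) : φ (exp a) = exp (φ a) := by
  refine eq_exp (hφ 1 a ha) fun n => ?_
  have map_expSum : φ (expSum a n) = expSum (φ a) n := by simp [expSum]
  rw [← map_expSum, ← map_sub]
  exact hφ n _ (exp_sub_expSum_mem_fil ha n)

end Map

end CompleteFiltration

/-- The submodule `F ⊗ C + C ⊗ G` of `C ⊗ C`. -/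
def tensorSup {C : Type*} [AddCommGroup C] [Module ℚ C] (F G : Submodule ℚ C) :
    Submodule ℚ (C ⊗[ℚ] C) :=
  Submodule.map₂ (TensorProduct.mk ℚ C C) F ⊤ ⊔ Submodule.map₂ (TensorProduct.mk ℚ C C) ⊤ G

section TensorSup

variable {C : Type*} [AddCommGroup C] [Module ℚ C] {F G : Submodule ℚ C}

theorem tmul_mem_tensorSup_left {a : C} (ha : a ∈ F) (b : C) : a ⊗ₜ b ∈ tensorSup F G :=
  Submodule.mem_sup_left (Submodule.apply_mem_map₂ _ ha Submodule.mem_top)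

theorem tmul_mem_tensorSup_right (a : C) {b : C} (hb : b ∈ G) : a ⊗ₜ b ∈ tensorSup F G :=
  Submodule.mem_sup_right (Submodule.apply_mem_map₂ _ Submodule.mem_top hb)

theorem tensorSup_le {S : Submodule ℚ (C ⊗[ℚ] C)} (left : ∀ a ∈ F, ∀ b, a ⊗ₜ b ∈ S)
    (right : ∀ a, ∀ b ∈ G, a ⊗ₜ b ∈ S) : tensorSup F G ≤ S :=
  sup_le (Submodule.map₂_le.mpr fun a ha b _ => left a ha b)
    (Submodule.map₂_le.mpr fun a _ b hb => right a b hb)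

end TensorSup

/-- An exhaustive increasing filtration of a coalgebra `C` starting at `0`, for which
`Δ (Fᵢ₊ⱼ) ⊆ Fᵢ ⊗ C + C ⊗ Fⱼ`; it makes the convolution algebras on `C` complete. -/
class FilteredCoalgebra (C : Type*) [AddCommGroup C] [Module ℚ C] [Coalgebra ℚ C] where
  level : ℕ → Submodule ℚ C
  level_zero : level 0 = ⊥
  level_mono : Monotone level
  exists_mem_level (c : C) : ∃ n, c ∈ level n
  comul_mem (i j : ℕ) {c : C} :
    c ∈ level (i + j) → Coalgebra.comul (R := ℚ) c ∈ tensorSup (level i) (level j)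

section Convolution

open WithConv FilteredCoalgebra

variable {C C' A B : Type*} [AddCommGroup C] [Module ℚ C] [Coalgebra ℚ C]
  [AddCommGroup C'] [Module ℚ C'] [Coalgebra ℚ C'] [Ring A] [Algebra ℚ A] [Ring B] [Algebra ℚ B]

variable (C) in
/-- Composition with an algebra morphism, as a morphism of convolution algebras. -/
def convPost (φ : A →ₐ[ℚ] B) : WithConv (C →ₗ[ℚ] A) →ₐ[ℚ] WithConv (C →ₗ[ℚ] B) :=
  AlgHom.ofLinearMap
    ((WithConv.linearEquiv ℚ _).symm.toLinearMap ∘ₗ φ.toLinearMap.compRight ℚ ∘ₗ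
      (WithConv.linearEquiv ℚ _).toLinearMap)
    (by ext; simp)
    (fun f g => WithConv.ext (LinearMap.algHom_comp_convMul_distrib φ f g))

@[simp] theorem convPost_apply (φ : A →ₐ[ℚ] B) (f : WithConv (C →ₗ[ℚ] A)) (c : C) :
    convPost C φ f c = φ (f c) := rfl

variable (A) in
/-- Composition with a coalgebra morphism, as a morphism of convolution algebras. -/
def convPre (ψ : C' →ₗc[ℚ] C) : WithConv (C →ₗ[ℚ] A) →ₐ[ℚ] WithConv (C' →ₗ[ℚ] A) :=
  AlgHom.ofLinearMap
    ((WithConv.linearEquiv ℚ _).symm.toLinearMap ∘ₗ LinearMap.lcomp ℚ A ψ.toLinearMap ∘ₗ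
      (WithConv.linearEquiv ℚ _).toLinearMap)
    (by ext; simp)
    (fun f g => WithConv.ext (LinearMap.convMul_comp_coalgHom_distrib f g ψ))

@[simp] theorem convPre_apply (ψ : C' →ₗc[ℚ] C) (f : WithConv (C →ₗ[ℚ] A)) (c : C') :
    convPre A ψ f c = f (ψ c) := rfl

variable [FilteredCoalgebra C] [FilteredCoalgebra C']

theorem convMul_eq_zero_of_mem_level {f g : WithConv (C →ₗ[ℚ] A)} {i j : ℕ}
    (hf : ∀ c ∈ level i, f c = 0) (hg : ∀ c ∈ level j, g c = 0) {c : C} (hc : c ∈ level (i + j)) :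
    (f * g) c = 0 := by
  suffices h : tensorSup (level i) (level j) ≤
      LinearMap.ker (LinearMap.mul' ℚ A ∘ₗ TensorProduct.map f.ofConv g.ofConv) from
    h (comul_mem i j hc)
  refine tensorSup_le (fun a ha b => ?_) (fun a b hb => ?_)
  · simp [hf a ha]
  · simp [hg b hb]

variable (C A) in
/-- The ideal of convolution-algebra elements vanishing on the `n`-th level of `C`. -/
def vanishingIdeal (n : ℕ) : Ideal (WithConv (C →ₗ[ℚ] A)) where
  carrier := {f | ∀ c ∈ level n, f c = 0}
  add_mem' hf hg c hc := by
    rw [WithConv.ofConv_add, LinearMap.add_apply, hf c hc, hg c hc, add_zero]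
  zero_mem' _ _ := rfl
  smul_mem' f g hg c hc := convMul_eq_zero_of_mem_level (i := 0)
    (by simp [level_zero]) hg (by rwa [zero_add])

theorem mem_vanishingIdeal {f : WithConv (C →ₗ[ℚ] A)} {n : ℕ} :
    f ∈ vanishingIdeal C A n ↔ ∀ c ∈ level n, f c = 0 := Iff.rfl

theorem exists_vanishingIdeal_limit (s : ℕ → WithConv (C →ₗ[ℚ] A))
    (hs : ∀ n, s (n + 1) - s n ∈ vanishingIdeal C A n) :
    ∃ f, ∀ n, f - s n ∈ vanishingIdeal C A n := by
  have stable {c : C} {m n : ℕ} (hmn : m ≤ n) (hc : c ∈ level m) : s n c = s m c := by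
    induction n, hmn using Nat.le_induction with
    | base => rfl
    | succ n hmn ih => exact (sub_eq_zero.mp (hs n c (level_mono hmn hc))).trans ih
  choose N hN using exists_mem_level (C := C)
  have eval {c : C} {m n : ℕ} (hc : c ∈ level m) (hn : m ≤ n) : s (N c) c = s n c :=
    (stable (le_max_left (N c) n) (hN c)).symm.trans
      ((stable ((hn.trans (le_max_right _ _))) hc).trans (stable hn hc).symm)
  have linear : IsLinearMap ℚ fun c => s (N c) c := by
    refine ⟨fun c c' => ?_, fun r c => ?_⟩
    · have hc := level_mono (le_max_left (N c) (N c')) (hN c)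
      have hc' := level_mono (le_max_right (N c) (N c')) (hN c')
      rw [eval (add_mem hc hc') le_rfl, eval hc le_rfl, eval hc' le_rfl, map_add]
    · rw [eval (Submodule.smul_mem _ r (hN c)) le_rfl, map_smul]
  exact ⟨toConv (linear.mk' _), fun n c hc => sub_eq_zero.mpr (eval hc le_rfl)⟩

instance : CompleteFiltration (WithConv (C →ₗ[ℚ] A)) where
  fil := vanishingIdeal C A
  fil_zero := by ext; simp [mem_vanishingIdeal, level_zero]
  antitone_fil _ _ h _ hf c hc := hf c (level_mono h hc)
  mul_mem_fil hf hg _ hc := convMul_eq_zero_of_mem_level hf hg hc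
  eq_zero_of_mem_fil {f} hf := WithConv.ext <| LinearMap.ext fun c =>
    let ⟨n, hn⟩ := exists_mem_level c
    hf n c hn
  exists_limit := exists_vanishingIdeal_limit

open CompleteFiltration

theorem mem_fil_iff {f : WithConv (C →ₗ[ℚ] A)} {n : ℕ} : f ∈ fil n ↔ ∀ c ∈ level n, f c = 0 :=
  Iff.rfl

theorem convPost_exp (φ : A →ₐ[ℚ] B) {f : WithConv (C →ₗ[ℚ] A)} (hf : f ∈ fil 1) :
    convPost C φ (exp f) = exp (convPost C φ f) :=
  map_exp (fun _ _ hg => mem_fil_iff.mpr fun c hc => by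
    rw [convPost_apply, mem_fil_iff.mp hg c hc, map_zero]) hf

theorem exp_apply_of_mem_level {f : WithConv (C →ₗ[ℚ] A)} (hf : f ∈ fil 1) {n : ℕ} {c : C}
    (hc : c ∈ level n) : exp f c = expSum f n c :=
  sub_eq_zero.mp (mem_fil_iff.mp (exp_sub_expSum_mem_fil hf n) c hc)

theorem convPre_exp {ψ : C' →ₗc[ℚ] C} (hψ : ∀ c ∈ level 1, ψ c ∈ level (C := C) 1)
    {f : WithConv (C →ₗ[ℚ] A)} (hf : f ∈ fil 1) :
    convPre A ψ (exp f) = exp (convPre A ψ f) := by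
  have hfψ : convPre A ψ f ∈ fil 1 := mem_fil_iff.mpr fun c hc => mem_fil_iff.mp hf _ (hψ c hc)
  ext c
  obtain ⟨m, hm⟩ := exists_mem_level c
  obtain ⟨n, hn⟩ := exists_mem_level (ψ c)
  rw [convPre_apply, exp_apply_of_mem_level hf (level_mono (le_max_right m n) hn),
    exp_apply_of_mem_level hfψ (level_mono (le_max_left m n) hm), ← convPre_apply]
  simp only [expSum, map_sum, map_smul, map_pow]

end Convolution

section WordLength

open FilteredCoalgebra

section

variable {V : Type*} [AddCommGroup V] [Module ℚ V]

variable (V) in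
/-- The span of the words of length less than `n` in the tensor algebra. -/
def wordsBelow : ℕ → Submodule ℚ (𝓣 V)
  | 0 => ⊥
  | n + 1 => 1 ⊔ LinearMap.range (ι ℚ) * wordsBelow n

theorem one_mem_wordsBelow_succ (n : ℕ) : (1 : 𝓣 V) ∈ wordsBelow V (n + 1) :=
  Submodule.mem_sup_left (Submodule.one_le.mp le_rfl)

theorem ι_mul_mem_wordsBelow_succ {n : ℕ} (x : V) {u : 𝓣 V} (hu : u ∈ wordsBelow V n) :
    ι ℚ x * u ∈ wordsBelow V (n + 1) :=
  Submodule.mem_sup_right (Submodule.mul_mem_mul ⟨x, rfl⟩ hu)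

theorem wordsBelow_succ_le {n : ℕ} {S : Submodule ℚ (𝓣 V)} (one : (1 : 𝓣 V) ∈ S)
    (ι_mul : ∀ x, ∀ u ∈ wordsBelow V n, ι ℚ x * u ∈ S) : wordsBelow V (n + 1) ≤ S :=
  sup_le (Submodule.one_le.mpr one) (Submodule.mul_le.mpr fun _ ⟨x, hx⟩ u hu => hx ▸ ι_mul x u hu)

theorem mem_wordsBelow_one {u : 𝓣 V} : u ∈ wordsBelow V 1 ↔ ∃ r : ℚ, r • 1 = u := by
  simp [wordsBelow, Submodule.one_eq_span, Submodule.mem_span_singleton]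

theorem wordsBelow_mono : Monotone (wordsBelow V) := by
  refine monotone_nat_of_le_succ fun n => ?_
  induction n with
  | zero => exact bot_le
  | succ n ih =>
    exact wordsBelow_succ_le (one_mem_wordsBelow_succ _) fun x u hu =>
      ι_mul_mem_wordsBelow_succ x (ih hu)

theorem exists_mem_wordsBelow (u : 𝓣 V) : ∃ n, u ∈ wordsBelow V n := by
  have directed : Directed (· ≤ ·) (wordsBelow V) := wordsBelow_mono.directed_le
  suffices h : ∀ u, u ∈ ⨆ n, wordsBelow V n from
    (Submodule.mem_iSup_of_directed _ directed).mp (h u)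
  refine tensorAlgebra_span_induction _ ?_ fun x u hu => ?_
  · exact Submodule.mem_iSup_of_mem 1 (one_mem_wordsBelow_succ 0)
  · obtain ⟨n, hn⟩ := (Submodule.mem_iSup_of_directed _ directed).mp hu
    exact Submodule.mem_iSup_of_mem (n + 1) (ι_mul_mem_wordsBelow_succ x hn)

theorem leftAction_ι_mem_tensorSup {F F' G G' : Submodule ℚ (𝓣 V)} {x : V}
    (hF : ∀ u ∈ F, ι ℚ x * u ∈ F') (hG : G ≤ G') {z : 𝓣 V ⊗[ℚ] 𝓣 V} (hz : z ∈ tensorSup F G) :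
    leftAction V (ι ℚ x) z ∈ tensorSup F' G' := by
  revert z
  change _ ≤ (tensorSup F' G').comap (leftAction V (ι ℚ x))
  exact tensorSup_le (fun a ha b => tmul_mem_tensorSup_left (hF a ha) b)
    fun a b hb => tmul_mem_tensorSup_right _ (hG hb)

end

variable {V : Type*} [AddCommGroup V] [Module ℚ V] [SuperSpace V]

theorem parity_mem_wordsBelow {n : ℕ} {u : 𝓣 V} (hu : u ∈ wordsBelow V n) :
    parity u ∈ wordsBelow V n := by
  revert u
  change wordsBelow V n ≤ (wordsBelow V n).comap parity
  induction n with
  | zero => exact bot_le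
  | succ n ih =>
    refine wordsBelow_succ_le ?_ fun x u hu => ?_
    · simpa using one_mem_wordsBelow_succ n
    · simpa using ι_mul_mem_wordsBelow_succ (parity x) (ih hu)

theorem HasParity.rightAction_ι_mem_tensorSup {F F' G G' : Submodule ℚ (𝓣 V)}
    {i : ℕ} {x : V} (hx : HasParity i x) (hF : ∀ u ∈ F, (parity ^ i) u ∈ F')
    (hG : ∀ u ∈ G, ι ℚ x * u ∈ G') {z : 𝓣 V ⊗[ℚ] 𝓣 V} (hz : z ∈ tensorSup F G) :
    rightAction V (ι ℚ x) z ∈ tensorSup F' G' := by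
  revert z
  change _ ≤ (tensorSup F' G').comap (rightAction V (ι ℚ x))
  refine tensorSup_le (fun a ha b => ?_) fun a b hb => ?_ <;>
    rw [Submodule.mem_comap, hx.letter.rightAction_tmul]
  · exact tmul_mem_tensorSup_left (hF a ha) _
  · exact tmul_mem_tensorSup_right _ (hG b hb)

theorem HasParity.diagonalAction_ι_mem_tensorSup {k : ℕ} {x : V} (hx : HasParity k x) {n : ℕ}
    {z : 𝓣 V ⊗[ℚ] 𝓣 V} (hz : ∀ i j, i + j = n → z ∈ tensorSup (wordsBelow V i) (wordsBelow V j))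
    {i j : ℕ} (hij : i + j = n + 1) :
    diagonalAction V (ι ℚ x) z ∈ tensorSup (wordsBelow V i) (wordsBelow V j) := by
  have parity_pow_mem {m : ℕ} (u) (hu : u ∈ wordsBelow V m) : (parity ^ k) u ∈ wordsBelow V m := by
    clear hx
    induction k with
    | zero => exact hu
    | succ k ih => rw [pow_succ']; exact parity_mem_wordsBelow ih
  rw [diagonalAction_ι]
  refine add_mem ?_ ?_
  · cases i with
    | zero =>
      obtain rfl : j = n + 1 := by omega
      exact leftAction_ι_mem_tensorSup (by simp [wordsBelow]) (wordsBelow_mono (Nat.le_succ n))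
        (hz 0 n (zero_add n))
    | succ i =>
      exact leftAction_ι_mem_tensorSup (fun _ => ι_mul_mem_wordsBelow_succ x) le_rfl
        (hz i j (by omega))
  · cases j with
    | zero =>
      obtain rfl : i = n + 1 := by omega
      exact hx.rightAction_ι_mem_tensorSup
        (fun u hu => wordsBelow_mono (Nat.le_succ n) (parity_pow_mem u hu)) (by simp [wordsBelow])
        (hz n 0 rfl)
    | succ j =>
      exact hx.rightAction_ι_mem_tensorSup parity_pow_mem
        (fun _ => ι_mul_mem_wordsBelow_succ x) (hz i j (by omega))

theorem tensorComul_mem_tensorSup {n : ℕ} {u : 𝓣 V} (hu : u ∈ wordsBelow V n) :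
    ∀ i j, i + j = n → tensorComul V u ∈ tensorSup (wordsBelow V i) (wordsBelow V j) := by
  suffices h : ∀ n i j, i + j = n → wordsBelow V n ≤
      (tensorSup (wordsBelow V i) (wordsBelow V j)).comap (tensorComul V) from
    fun i j hij => h n i j hij hu
  intro n
  induction n with
  | zero => exact fun _ _ _ => bot_le
  | succ n ih =>
    intro i j hij
    refine wordsBelow_succ_le ?_ fun x u hu => ?_ <;> rw [Submodule.mem_comap]
    · rw [tensorComul_one]
      cases i with
      | zero =>
        obtain rfl : j = n + 1 := by omega
        exact tmul_mem_tensorSup_right _ (one_mem_wordsBelow_succ n)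
      | succ i => exact tmul_mem_tensorSup_left (one_mem_wordsBelow_succ i) _
    · rw [tensorComul_mul]
      induction x using hasParity_induction with
      | add x y hx hy => simpa only [map_add, LinearMap.add_apply] using add_mem hx hy
      | hom k x hx => exact hx.diagonalAction_ι_mem_tensorSup (fun i j hij => ih i j hij hu) hij

instance : FilteredCoalgebra (𝓣 V) where
  level := wordsBelow V
  level_zero := rfl
  level_mono := wordsBelow_mono
  exists_mem_level := exists_mem_wordsBelow
  comul_mem _ _ _ hu := tensorComul_mem_tensorSup hu _ _ rfl

end WordLength

section Eulerian

open WithConv CompleteFiltration FilteredCoalgebra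

variable {V : Type*} [AddCommGroup V] [Module ℚ V] [SuperSpace V]

section

variable {A : Type*} [Ring A] [Algebra ℚ A]

theorem convMul_tensor_apply (f g : WithConv (𝓣 V →ₗ[ℚ] A)) (u : 𝓣 V) :
    (f * g) u = LinearMap.mul' ℚ A (TensorProduct.map f.ofConv g.ofConv (tensorComul V u)) := rfl

theorem mem_fil_one_iff {f : WithConv (𝓣 V →ₗ[ℚ] A)} : f ∈ fil 1 ↔ f 1 = 0 := by
  refine ⟨fun h => h 1 (one_mem_wordsBelow_succ 0), fun h => mem_fil_iff.mpr fun u hu => ?_⟩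
  obtain ⟨r, rfl⟩ := mem_wordsBelow_one.mp hu
  rw [map_smul, h, smul_zero]

theorem algHom_sub_one_mem_fil_one (φ : 𝓣 V →ₐ[ℚ] A) : toConv φ.toLinearMap - 1 ∈ fil 1 := by
  rw [mem_fil_one_iff]
  have one_apply : (1 : WithConv (𝓣 V →ₗ[ℚ] A)) 1 = algebraMap ℚ A (tensorCounit V 1) := rfl
  simp [one_apply]

end

variable (V) in
/-- The (first) Eulerian idempotent, the convolution logarithm of the identity. -/
def eulerian : Module.End ℚ (𝓣 V) := (log (toConv LinearMap.id)).ofConv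

theorem toConv_eulerian_mem_fil : toConv (eulerian V) ∈ fil 1 :=
  log_mem_fil (algHom_sub_one_mem_fil_one (AlgHom.id ℚ (𝓣 V)))

theorem exp_eulerian : exp (toConv (eulerian V)) = toConv LinearMap.id :=
  exp_log (algHom_sub_one_mem_fil_one (AlgHom.id ℚ (𝓣 V)))

theorem eulerian_one : eulerian V 1 = 0 := mem_fil_one_iff.mp toConv_eulerian_mem_fil

section

variable {A : Type*} [Ring A] [Algebra ℚ A]

theorem convPost_eulerian_mem_fil (φ : 𝓣 V →ₐ[ℚ] A) :
    convPost (𝓣 V) φ (toConv (eulerian V)) ∈ fil 1 :=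
  mem_fil_one_iff.mpr (by simp [eulerian_one])

theorem exp_convPost_eulerian (φ : 𝓣 V →ₐ[ℚ] A) :
    exp (convPost (𝓣 V) φ (toConv (eulerian V))) = toConv φ.toLinearMap := by
  rw [← convPost_exp φ toConv_eulerian_mem_fil, exp_eulerian]
  rfl

end

variable (V) in
/-- The submodule of primitive elements `p`, those with `Δ p = p ⊗ 1 + 1 ⊗ p`. -/
def primitives : Submodule ℚ (𝓣 V) :=
  LinearMap.eqLocus (tensorComul V)
    ((TensorProduct.mk ℚ (𝓣 V) (𝓣 V)).flip 1 + TensorProduct.mk ℚ (𝓣 V) (𝓣 V) 1)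

theorem mem_primitives {p : 𝓣 V} : p ∈ primitives V ↔ tensorComul V p = p ⊗ₜ 1 + 1 ⊗ₜ p := Iff.rfl

theorem tensorCounit_eq_zero_of_mem_primitives {p : 𝓣 V} (hp : p ∈ primitives V) :
    tensorCounit V p = 0 := by
  have counit := rTensor_counit_tensorComul p
  rw [mem_primitives.mp hp] at counit
  simpa using congr(tensorCounit V (TensorProduct.lid ℚ _ $counit))

section SuperCommuting

variable {A : Type*} [Ring A] [Algebra ℚ A] {φ left right : 𝓣 V →ₐ[ℚ] A}
  (add : ∀ x, φ (ι ℚ x) = left (ι ℚ x) + right (ι ℚ x))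
  (swap : ∀ i u, HasParity i u → ∀ w, right u * left w = left ((parity ^ i) w) * right u)
include swap

include add in
theorem toConv_eq_convMul_of_superCommute :
    toConv φ.toLinearMap = toConv left.toLinearMap * toConv right.toLinearMap := by
  refine WithConv.ext (tensorAlgebra_linearMap_ext ?_ fun i x u hx hu => ?_)
  · rw [convMul_tensor_apply]
    simp
  · simp only [convMul_tensor_apply, AlgHom.toLinearMap_apply, map_mul,
      tensorComul_mul] at hu ⊢
    rw [hu, add, diagonalAction_ι]
    induction tensorComul V u with
    | zero => simp
    | add z w hz hw => simp only [map_add, mul_add, hz, hw]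
    | tmul a b =>
      simp [hx.letter.rightAction_tmul, add_mul, mul_assoc, ← swap i _ hx.letter a,
        ← mul_assoc (left _) (right (ι ℚ x))]

include add in
theorem map_primitive_of_superCommute {p : 𝓣 V} (hp : p ∈ primitives V) :
    φ p = left p + right p := by
  have h : φ p = (toConv left.toLinearMap * toConv right.toLinearMap) p :=
    congr(($(toConv_eq_convMul_of_superCommute add swap)) p)
  rw [convMul_tensor_apply, mem_primitives.mp hp] at h
  simpa using h

theorem commute_convPost_of_superCommute {f : Module.End ℚ (𝓣 V)}
    (hf : ∀ u, f (parity u) = parity (f u)) :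
    Commute (convPost (𝓣 V) left (toConv f)) (convPost (𝓣 V) right (toConv f)) := by
  refine WithConv.ext (LinearMap.ext fun u => ?_)
  rw [convMul_tensor_apply, convMul_tensor_apply]
  conv_lhs => rw [← koszulSwap_tensorComul u]
  induction tensorComul V u with
  | zero => simp
  | add z w hz hw => simp only [map_add, hz, hw]
  | tmul a b =>
    induction a using hasParity_induction with
    | add a a' ha ha' => simp only [TensorProduct.add_tmul, map_add, ha, ha']
    | hom i a ha =>
      simp [ha.koszulSwap_tmul, swap i (f a) (ha.map (LinearMap.ext hf)),
        map_parity_pow (LinearMap.ext hf)]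

end SuperCommuting

theorem diagonalAction_of_mem_primitives {p : 𝓣 V} (hp : p ∈ primitives V) :
    diagonalAction V p = leftAction V p + rightAction V p :=
  map_primitive_of_superCommute (A := Module.End ℚ (𝓣 V ⊗[ℚ] 𝓣 V)) diagonalAction_ι
    (fun _ _ hu => hu.rightAction_mul_leftAction) hp

section Naturality

variable {W : Type*} [AddCommGroup W] [Module ℚ W] [SuperSpace W] {ψ : 𝓣 V →ₐ[ℚ] 𝓣 W}
  (parity_comm : ∀ u, ψ (parity u) = parity (ψ u)) (primitive : ∀ x, ψ (ι ℚ x) ∈ primitives W)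
include parity_comm primitive

theorem tensorComul_algHom (u : 𝓣 V) :
    tensorComul W (ψ u) =
      TensorProduct.map ψ.toLinearMap ψ.toLinearMap (tensorComul V u) := by
  refine LinearMap.congr_fun (f := tensorComul W ∘ₗ ψ.toLinearMap)
    (g := TensorProduct.map ψ.toLinearMap ψ.toLinearMap ∘ₗ tensorComul V) ?_ u
  refine tensorAlgebra_linearMap_ext (by simp) fun i x u hx hu => ?_
  simp only [LinearMap.comp_apply, AlgHom.toLinearMap_apply, map_mul, tensorComul_mul,
    diagonalAction_of_mem_primitives (primitive x), diagonalAction_ι] at hu ⊢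
  rw [hu]
  have hψ : HasParity i (ψ (ι ℚ x)) :=
    hx.letter.map (f := ψ.toLinearMap) (LinearMap.ext parity_comm)
  induction tensorComul V u with
  | zero => simp
  | add z w hz hw => simp only [map_add, hz, hw]
  | tmul a b =>
    have parity_pow_comm : ψ ((parity ^ i) a) = (parity ^ i) (ψ a) :=
      map_parity_pow (f := ψ.toLinearMap) (LinearMap.ext parity_comm) i a
    simp [hψ.rightAction_tmul, hx.letter.rightAction_tmul, parity_pow_comm]

/-- A morphism of algebras sending letters to primitive elements, as a morphism of coalgebras. -/
def coalgHomOfPrimitive : 𝓣 V →ₗc[ℚ] 𝓣 W where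
  __ := ψ.toLinearMap
  counit_comp := by
    have : (tensorCounit W).comp ψ = tensorCounit V := by
      ext x
      simp [tensorCounit_eq_zero_of_mem_primitives (primitive x)]
    exact congr(AlgHom.toLinearMap $this)
  map_comp_comul := LinearMap.ext fun u => (tensorComul_algHom parity_comm primitive u).symm

theorem exp_algHom {A : Type*} [Ring A] [Algebra ℚ A] {f : 𝓣 W →ₗ[ℚ] A} (hf : toConv f ∈ fil 1)
    (u : 𝓣 V) : exp (toConv f) (ψ u) = exp (toConv (f ∘ₗ ψ.toLinearMap)) u := by
  let Ψ := coalgHomOfPrimitive parity_comm primitive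
  have hΨ : ∀ c ∈ level (C := 𝓣 V) 1, Ψ c ∈ level (C := 𝓣 W) 1 := fun c hc => by
    obtain ⟨r, rfl⟩ := mem_wordsBelow_one.mp hc
    exact mem_wordsBelow_one.mpr ⟨r, by simp [Ψ, coalgHomOfPrimitive]⟩
  exact congr($(convPre_exp hΨ hf) u)

theorem eulerian_algHom (u : 𝓣 V) : eulerian W (ψ u) = ψ (eulerian V u) := by
  suffices h : toConv (eulerian W ∘ₗ ψ.toLinearMap) = convPost (𝓣 V) ψ (toConv (eulerian V)) from
    congr($h u)
  refine exp_injOn ?_ (convPost_eulerian_mem_fil ψ) ?_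
  · exact mem_fil_one_iff.mpr (by simp [eulerian_one])
  · ext u
    rw [← exp_algHom parity_comm primitive toConv_eulerian_mem_fil, exp_eulerian,
      exp_convPost_eulerian]
    rfl

end Naturality

theorem ι_mem_primitives (x : V) : ι ℚ x ∈ primitives V := by
  induction x using hasParity_induction with
  | hom i x hx => simp [mem_primitives, tensorComul_apply, hx.letter.rightAction_tmul]
  | add x y hx hy => simpa using add_mem hx hy

theorem tensorMap_ι_mem_primitives {W : Type*} [AddCommGroup W] [Module ℚ W] (k : W →ₗ[ℚ] V)
    (x : W) : tensorMap k (ι ℚ x) ∈ primitives V := by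
  simpa using ι_mem_primitives (k x)

theorem eulerian_parity (u : 𝓣 V) : eulerian V (parity u) = parity (eulerian V u) :=
  eulerian_algHom (ψ := tensorParity V) (fun _ => rfl) (tensorMap_ι_mem_primitives parity) u

theorem map_eulerian_of_superCommute {A : Type*} [Ring A] [Algebra ℚ A]
    {φ left right : 𝓣 V →ₐ[ℚ] A} (add : ∀ x, φ (ι ℚ x) = left (ι ℚ x) + right (ι ℚ x))
    (swap : ∀ i u, HasParity i u → ∀ w, right u * left w = left ((parity ^ i) w) * right u)
    (u : 𝓣 V) : φ (eulerian V u) = left (eulerian V u) + right (eulerian V u) := by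
  suffices h : convPost (𝓣 V) φ (toConv (eulerian V)) =
      convPost (𝓣 V) left (toConv (eulerian V)) + convPost (𝓣 V) right (toConv (eulerian V)) from
    congr($h u)
  have hleft := convPost_eulerian_mem_fil left
  have hright := convPost_eulerian_mem_fil right
  refine exp_injOn (convPost_eulerian_mem_fil φ) (add_mem hleft hright) ?_
  rw [exp_add_of_commute hleft hright (commute_convPost_of_superCommute swap eulerian_parity),
    exp_convPost_eulerian, exp_convPost_eulerian, exp_convPost_eulerian,
    toConv_eq_convMul_of_superCommute add swap]

theorem eulerian_mem_primitives (u : 𝓣 V) : eulerian V u ∈ primitives V := by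
  have h : diagonalAction V (eulerian V u) = _ := map_eulerian_of_superCommute
    (A := Module.End ℚ (𝓣 V ⊗[ℚ] 𝓣 V)) diagonalAction_ι
    (fun _ _ hu => hu.rightAction_mul_leftAction) u
  rw [mem_primitives, tensorComul_apply, h]
  induction eulerian V u using hasParity_induction with
  | hom i p hp => simp [hp.rightAction_tmul]
  | add p q hp hq => simp_all [TensorProduct.add_tmul, TensorProduct.tmul_add]

end Eulerian

/-- A Lie superalgebra. -/
class SuperLie (L : Type*) [AddCommGroup L] [Module ℚ L] [SuperSpace L] where
  superBracket : L →ₗ[ℚ] L →ₗ[ℚ] L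
  parity_superBracket (x y : L) :
    parity (superBracket x y) = superBracket (parity x) (parity y)
  superBracket_antisymm {i : ℕ} {x : L} (hx : HasParity i x) (y : L) :
    superBracket x y = -superBracket ((parity ^ i) y) x
  superBracket_jacobi {i : ℕ} {x : L} (hx : HasParity i x) (y z : L) :
    superBracket x (superBracket y z) =
      superBracket (superBracket x y) z + superBracket ((parity ^ i) y) (superBracket x z)

open SuperLie

section SuperLie

variable {V : Type*} [AddCommGroup V] [Module ℚ V] [SuperSpace V]

variable (V) in
/-- The super commutator of the tensor algebra. -/
def superCommutator : 𝓣 V →ₗ[ℚ] 𝓣 V →ₗ[ℚ] 𝓣 V :=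
  LinearMap.mul ℚ (𝓣 V) - koszulTwist (LinearMap.mul ℚ (𝓣 V)).flip parity

theorem HasParity.superCommutator_apply {i : ℕ} {u : 𝓣 V} (hu : HasParity i u) (w : 𝓣 V) :
    superCommutator V u w = u * w - (parity ^ i) w * u := by
  simp [superCommutator, hu.koszulTwist_apply _ parity_mul_self]

instance : SuperLie (𝓣 V) where
  superBracket := superCommutator V
  parity_superBracket u w := by
    induction u using hasParity_induction with
    | add u u' hu hu' => simp only [map_add, LinearMap.add_apply, hu, hu']
    | hom i u hu =>
      have hPu : HasParity i (parity u) := by rw [HasParity, hu.eq, map_smul, hu.eq]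
      simp [hu.superCommutator_apply, hPu.superCommutator_apply, parity_pow_parity]
  superBracket_antisymm {i u} hu w := by
    induction w using hasParity_induction with
    | add w w' hw hw' => simp only [map_add, LinearMap.add_apply, hw, hw', neg_add]
    | hom j w hw =>
      simp [hu.superCommutator_apply, hw.superCommutator_apply, hu.parity_pow, hw.parity_pow,
        smul_smul, ← mul_pow, mul_comm j i, smul_sub]
  superBracket_jacobi {i u} hu w z := by
    induction w using hasParity_induction with
    | add w w' hw hw' => simp only [map_add, LinearMap.add_apply, hw, hw']; abel
    | hom j w hw =>
      have huw : HasParity (i + j) (superCommutator V u w) := by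
        rw [hu.superCommutator_apply, hw.parity_pow, HasParity]
        simp [hu.eq, hw.eq, pow_add, smul_smul, smul_sub, mul_comm]
      have parity_pow_add_apply : (parity ^ (i + j)) z = (parity ^ i) ((parity ^ j) z) := by
        rw [pow_add, Module.End.mul_apply]
      have comm : (parity ^ j) ((parity ^ i) z) = (parity ^ i) ((parity ^ j) z) := by
        rw [← Module.End.mul_apply, ← pow_add, add_comm, parity_pow_add_apply]
      rw [huw.superCommutator_apply, parity_pow_add_apply]
      simp only [hw.superCommutator_apply, hu.superCommutator_apply, hw.parity_pow, hu.parity_pow,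
        map_sub, map_smul, LinearMap.smul_apply, parity_pow_mul, comm, mul_sub, sub_mul,
        smul_mul_assoc, mul_smul_comm, smul_sub, mul_assoc, smul_smul, ← mul_pow, mul_comm j i]
      simp only [mul_neg, mul_one, neg_neg, one_pow, one_smul]
      abel

theorem superBracket_tensorAlgebra {i : ℕ} {u : 𝓣 V} (hu : HasParity i u) (w : 𝓣 V) :
    superBracket u w = u * w - (parity ^ i) w * u :=
  hu.superCommutator_apply w

theorem HasParity.rightAction_apply_tmul {i : ℕ} {a : 𝓣 V} (ha : HasParity i a) (w b : 𝓣 V) :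
    rightAction V w (a ⊗ₜ b) = a ⊗ₜ ((parity ^ i) w * b) := by
  induction w using hasParity_induction with
  | add w w' hw hw' =>
    simp only [map_add, LinearMap.add_apply, add_mul, TensorProduct.tmul_add, hw, hw']
  | hom j w hw =>
    simp [hw.rightAction_tmul, ha.parity_pow, hw.parity_pow, mul_comm i j, TensorProduct.smul_tmul]

theorem parity_pow_mem_primitives {q : 𝓣 V} (hq : q ∈ primitives V) (i : ℕ) :
    (parity ^ i) q ∈ primitives V := by
  rw [mem_primitives, tensorComul_parity_pow, mem_primitives.mp hq]
  simp

theorem HasParity.superBracket_mem_primitives {i : ℕ} {p q : 𝓣 V} (hi : HasParity i p)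
    (hp : p ∈ primitives V) (hq : q ∈ primitives V) : superBracket p q ∈ primitives V := by
  rw [mem_primitives, superBracket_tensorAlgebra hi, map_sub, tensorComul_mul, tensorComul_mul,
    diagonalAction_of_mem_primitives hp,
    diagonalAction_of_mem_primitives (parity_pow_mem_primitives hq i),
    mem_primitives.mp hp, mem_primitives.mp hq]
  simp only [map_add, LinearMap.add_apply, leftAction_tmul, hi.rightAction_tmul,
    hi.rightAction_apply_tmul, hasParity_one.rightAction_apply_tmul, parity_pow_one, mul_one,
    parity_pow_parity_pow, pow_zero, Module.End.one_apply, TensorProduct.sub_tmul,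
    TensorProduct.tmul_sub]
  abel

theorem superBracket_mem_primitives {p q : 𝓣 V} (hp : p ∈ primitives V) (hq : q ∈ primitives V) :
    superBracket p q ∈ primitives V := by
  have hPp : parity p ∈ primitives V := by simpa using parity_pow_mem_primitives hp 1
  rw [← evenPart_add_oddPart p, map_add, LinearMap.add_apply]
  exact add_mem
    ((hasParity_evenPart p).superBracket_mem_primitives
      (Submodule.smul_mem _ _ (add_mem hp hPp)) hq)
    ((hasParity_oddPart p).superBracket_mem_primitives
      (Submodule.smul_mem _ _ (sub_mem hp hPp)) hq)

/-- A representation of a Lie superalgebra in an associative algebra. -/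
def IsSuperRep {L A : Type*} [AddCommGroup L] [Module ℚ L] [SuperSpace L] [SuperLie L] [Ring A]
    [Algebra ℚ A] (Φ : L →ₗ[ℚ] A) : Prop :=
  ∀ i x y, HasParity i x → Φ (superBracket x y) = Φ x * Φ y - Φ ((parity ^ i) y) * Φ x

theorem isSuperRep_id : IsSuperRep (LinearMap.id : 𝓣 V →ₗ[ℚ] 𝓣 V) :=
  fun _ _ y hx => superBracket_tensorAlgebra hx y

theorem isSuperRep_superBracket {L : Type*} [AddCommGroup L] [Module ℚ L] [SuperSpace L]
    [SuperLie L] : IsSuperRep (A := Module.End ℚ L) (superBracket : L →ₗ[ℚ] L →ₗ[ℚ] L) :=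
  fun _ _ y hx => LinearMap.ext fun z => eq_sub_of_add_eq (superBracket_jacobi hx y z).symm

end SuperLie

section Dynkin

variable {V L : Type*} [AddCommGroup V] [Module ℚ V] [AddCommGroup L] [Module ℚ L] [SuperSpace L]
  [SuperLie L] (j : V →ₗ[ℚ] L)

/-- The Dynkin operator, sending a word `x₁ ⋯ xₙ` to the iterated bracket
`[j x₁, [j x₂, …, j xₙ]]` and `1` to `0`. -/
def dynkin : 𝓣 V →ₗ[ℚ] L :=
  tensorRec (superBracket ∘ₗ j) (LinearMap.smulRightₗ (tensorCounit V).toLinearMap ∘ₗ j) 0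

@[simp] theorem dynkin_one : dynkin j 1 = 0 := tensorRec_one _ _ _

theorem dynkin_ι_mul (x : V) (u : 𝓣 V) :
    dynkin j (ι ℚ x * u) = superBracket (j x) (dynkin j u) + tensorCounit V u • j x :=
  tensorRec_ι_mul _ _ _ x u

@[simp] theorem dynkin_ι (x : V) : dynkin j (ι ℚ x) = j x := by
  simpa using dynkin_ι_mul j x 1

theorem dynkin_tensorMap {W : Type*} [AddCommGroup W] [Module ℚ W] [SuperSpace W] (k : W →ₗ[ℚ] V)
    (u : 𝓣 W) : dynkin j (tensorMap k u) = dynkin (j ∘ₗ k) u := by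
  refine LinearMap.congr_fun (f := dynkin j ∘ₗ (tensorMap k).toLinearMap)
    (g := dynkin (j ∘ₗ k)) ?_ u
  refine tensorAlgebra_linearMap_ext (by simp) fun i x u _ hu => ?_
  simpa [dynkin_ι_mul] using congr(superBracket (j (k x)) $hu)

variable [SuperSpace V]

variable {j} in
theorem map_dynkin {L' : Type*} [AddCommGroup L'] [Module ℚ L'] [SuperSpace L'] [SuperLie L']
    {f : L →ₗ[ℚ] L'} (hf : ∀ x y, f (superBracket x y) = superBracket (f x) (f y)) (u : 𝓣 V) :
    f (dynkin j u) = dynkin (f ∘ₗ j) u := by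
  refine LinearMap.congr_fun (f := f ∘ₗ dynkin j) (g := dynkin (f ∘ₗ j)) ?_ u
  refine tensorAlgebra_linearMap_ext (by simp) fun i x u _ hu => ?_
  simpa [dynkin_ι_mul, hf] using congr(superBracket (f (j x)) $hu)

theorem dynkin_mul_eq_lift (u w : 𝓣 V) :
    dynkin j (u * w) =
      TensorAlgebra.lift ℚ (A := Module.End ℚ L) (superBracket ∘ₗ j) u (dynkin j w) +
        tensorCounit V w • dynkin j u := by
  refine LinearMap.congr_fun (f := dynkin j ∘ₗ LinearMap.mulRight ℚ w)
    (g := (TensorAlgebra.lift ℚ (A := Module.End ℚ L) (superBracket ∘ₗ j)).toLinearMap.flip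
      (dynkin j w) + tensorCounit V w • dynkin j) ?_ u
  refine tensorAlgebra_linearMap_ext (by simp) fun i x u _ hu => ?_
  simp only [LinearMap.comp_apply, LinearMap.mulRight_apply, LinearMap.add_apply,
    LinearMap.flip_apply, AlgHom.toLinearMap_apply, LinearMap.smul_apply] at hu ⊢
  simp [mul_assoc, dynkin_ι_mul, hu, smul_smul, mul_comm, add_assoc]

@[simp] theorem tensorCounit_dynkin_ι (u : 𝓣 V) :
    tensorCounit V (dynkin (ι ℚ : V →ₗ[ℚ] 𝓣 V) u) = 0 := by
  refine LinearMap.congr_fun (f := (tensorCounit V).toLinearMap ∘ₗ dynkin (ι ℚ)) (g := 0) ?_ u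
  refine tensorAlgebra_linearMap_ext (by simp) fun i x u hx _ => ?_
  simp [dynkin_ι_mul, superBracket_tensorAlgebra hx.letter]

theorem ι_comp_parity : ι ℚ ∘ₗ parity = parity ∘ₗ (ι ℚ : V →ₗ[ℚ] 𝓣 V) :=
  LinearMap.ext fun x => (parity_ι x).symm

theorem dynkin_mem_primitives {W : Type*} [AddCommGroup W] [Module ℚ W] {j : W →ₗ[ℚ] 𝓣 V}
    (hj : ∀ x, j x ∈ primitives V) (u : 𝓣 W) : dynkin j u ∈ primitives V := by
  refine tensorAlgebra_span_induction ((primitives V).comap (dynkin j)) (by simp)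
    (fun x u hu => ?_) u
  rw [Submodule.mem_comap, dynkin_ι_mul]
  exact add_mem (superBracket_mem_primitives (hj x) hu) (Submodule.smul_mem _ _ (hj x))

section Even

variable {j} (hj : j ∘ₗ parity = parity ∘ₗ j)
include hj

theorem dynkin_parity (u : 𝓣 V) : dynkin j (parity u) = parity (dynkin j u) := by
  refine LinearMap.congr_fun (f := dynkin j ∘ₗ parity) (g := parity ∘ₗ dynkin j) ?_ u
  refine tensorAlgebra_linearMap_ext (by simp) fun i x u _ hu => ?_
  have hjx : j (parity x) = parity (j x) := LinearMap.congr_fun hj x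
  simpa [dynkin_ι_mul, parity_superBracket, hjx] using congr(superBracket (parity (j x)) $hu)

theorem dynkin_parity_pow (i : ℕ) (u : 𝓣 V) :
    dynkin j ((parity ^ i) u) = (parity ^ i) (dynkin j u) :=
  map_parity_pow (LinearMap.ext (dynkin_parity hj)) i u

theorem IsSuperRep.lift_dynkin {A : Type*} [Ring A] [Algebra ℚ A] {Φ : L →ₗ[ℚ] A}
    (hΦ : IsSuperRep Φ) (u : 𝓣 V) :
    TensorAlgebra.lift ℚ (Φ ∘ₗ j) (dynkin (ι ℚ) u) = Φ (dynkin j u) := by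
  refine LinearMap.congr_fun (f := (TensorAlgebra.lift ℚ (Φ ∘ₗ j)).toLinearMap ∘ₗ dynkin (ι ℚ))
    (g := Φ ∘ₗ dynkin j) ?_ u
  refine tensorAlgebra_linearMap_ext_parity (by simp) fun i x u hx hu hPu => ?_
  simp only [LinearMap.comp_apply, AlgHom.toLinearMap_apply] at hu hPu ⊢
  simp [dynkin_ι_mul, superBracket_tensorAlgebra hx.letter, hΦ i _ _ (hx.map hj), hu, hPu,
    ← dynkin_parity_pow hj, ← dynkin_parity_pow ι_comp_parity]

theorem dynkin_dynkin_mul (u w : 𝓣 V) :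
    dynkin j (dynkin (ι ℚ) u * w) =
      superBracket (dynkin j u) (dynkin j w) + tensorCounit V w • dynkin j (dynkin (ι ℚ) u) := by
  rw [dynkin_mul_eq_lift, isSuperRep_superBracket.lift_dynkin hj]

end Even

end Dynkin

section WordLength

variable {V : Type*} [AddCommGroup V] [Module ℚ V]

variable (V) in
/-- The derivation of the tensor algebra that multiplies a word by its length. -/
def wordLength : Module.End ℚ (𝓣 V) :=
  tensorRec (LinearMap.mul ℚ (𝓣 V) ∘ₗ ι ℚ) (LinearMap.mul ℚ (𝓣 V) ∘ₗ ι ℚ) 0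

@[simp] theorem wordLength_one : wordLength V 1 = 0 := tensorRec_one _ _ _

theorem wordLength_ι_mul (x : V) (u : 𝓣 V) :
    wordLength V (ι ℚ x * u) = ι ℚ x * wordLength V u + ι ℚ x * u :=
  tensorRec_ι_mul _ _ _ x u

@[simp] theorem wordLength_ι (x : V) : wordLength V (ι ℚ x) = ι ℚ x := by
  simpa using wordLength_ι_mul x 1

variable (V) in
/-- The family of operators `(wordLength + k)⁻¹`, `k : ℕ`; for `k = 0` the inverse is `0` on
scalars. -/
def wordLengthResolvent : 𝓣 V →ₗ[ℚ] ℕ → 𝓣 V :=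
  tensorRec
    (LinearMap.mk₂ ℚ (fun x R k => ι ℚ x * R (k + 1))
      (fun x y R => by ext; simp [add_mul]) (fun c x R => by ext; simp)
      (fun x R S => by ext; simp [mul_add]) (fun c x R => by ext; simp))
    0 (fun k => (k : ℚ)⁻¹ • 1)

theorem wordLengthResolvent_one (k : ℕ) : wordLengthResolvent V 1 k = (k : ℚ)⁻¹ • 1 :=
  congr_fun (tensorRec_one _ _ _) k

theorem wordLengthResolvent_ι_mul (x : V) (u : 𝓣 V) (k : ℕ) :
    wordLengthResolvent V (ι ℚ x * u) k = ι ℚ x * wordLengthResolvent V u (k + 1) := by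
  simp [wordLengthResolvent]

variable (V) in
/-- The inverse of `wordLength` on the augmentation ideal, extended by `0` to scalars. -/
def wordLengthInv : Module.End ℚ (𝓣 V) := LinearMap.proj 0 ∘ₗ wordLengthResolvent V

@[simp] theorem wordLengthInv_one : wordLengthInv V 1 = 0 := by
  simp [wordLengthInv, wordLengthResolvent_one]

variable [SuperSpace V]

theorem wordLength_mul (u w : 𝓣 V) :
    wordLength V (u * w) = wordLength V u * w + u * wordLength V w := by
  refine LinearMap.congr_fun (f := wordLength V ∘ₗ LinearMap.mulRight ℚ w)
    (g := LinearMap.mulRight ℚ w ∘ₗ wordLength V + LinearMap.mulRight ℚ (wordLength V w)) ?_ u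
  refine tensorAlgebra_linearMap_ext (by simp) fun i x u _ hu => ?_
  simp only [LinearMap.comp_apply, LinearMap.mulRight_apply, LinearMap.add_apply] at hu ⊢
  rw [mul_assoc, wordLength_ι_mul, hu, wordLength_ι_mul]
  noncomm_ring

theorem wordLengthResolvent_wordLength (u : 𝓣 V) (k : ℕ) :
    wordLengthResolvent V (wordLength V u) k = wordLength V (wordLengthResolvent V u k) := by
  refine congr_fun (LinearMap.congr_fun (f := wordLengthResolvent V ∘ₗ wordLength V)
    (g := (wordLength V).compLeft ℕ ∘ₗ wordLengthResolvent V) ?_ u) k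
  refine tensorAlgebra_linearMap_ext ?_ fun i x u _ hu => funext fun k => ?_
  · ext k
    simp [wordLengthResolvent_one]
  · have hu_apply := congr_fun hu (k + 1)
    simp only [LinearMap.comp_apply, LinearMap.compLeft_apply, Function.comp_apply] at hu_apply ⊢
    simp [wordLength_ι_mul, wordLengthResolvent_ι_mul, hu_apply]

theorem wordLength_wordLengthResolvent_succ (u : 𝓣 V) (k : ℕ) :
    wordLength V (wordLengthResolvent V u (k + 1)) +
      (k + 1 : ℚ) • wordLengthResolvent V u (k + 1) = u := by
  refine congr_fun (LinearMap.congr_fun (g := LinearMap.pi fun _ => LinearMap.id)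
    (f := LinearMap.pi fun k : ℕ =>
      wordLength V ∘ₗ LinearMap.proj (k + 1) ∘ₗ wordLengthResolvent V +
        (k + 1 : ℚ) • LinearMap.proj (k + 1) ∘ₗ wordLengthResolvent V) ?_ u) k
  refine tensorAlgebra_linearMap_ext ?_ fun i x u _ hu => funext fun k => ?_
  · ext k
    simp [wordLengthResolvent_one, smul_smul,
      mul_inv_cancel₀ (Nat.cast_add_one_ne_zero k : (k + 1 : ℚ) ≠ 0)]
  · have hu_apply := congr(ι ℚ x * $(congr_fun hu (k + 1)))
    simp only [LinearMap.pi_apply, LinearMap.add_apply, LinearMap.comp_apply, LinearMap.smul_apply,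
      LinearMap.proj_apply, LinearMap.id_apply, wordLengthResolvent_ι_mul, wordLength_ι_mul,
      mul_add, mul_smul_comm] at hu_apply ⊢
    rw [← hu_apply]
    push_cast
    module

@[simp] theorem tensorCounit_wordLength (u : 𝓣 V) : tensorCounit V (wordLength V u) = 0 := by
  refine LinearMap.congr_fun (f := (tensorCounit V).toLinearMap ∘ₗ wordLength V) (g := 0) ?_ u
  exact tensorAlgebra_linearMap_ext (by simp) fun i x u _ _ => by simp [wordLength_ι_mul]

@[simp] theorem tensorCounit_wordLengthInv (u : 𝓣 V) : tensorCounit V (wordLengthInv V u) = 0 := by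
  refine LinearMap.congr_fun (f := (tensorCounit V).toLinearMap ∘ₗ wordLengthInv V) (g := 0) ?_ u
  exact tensorAlgebra_linearMap_ext (by simp) fun i x u _ _ => by
    simp [wordLengthInv, wordLengthResolvent_ι_mul]

theorem wordLength_wordLengthInv (u : 𝓣 V) :
    wordLength V (wordLengthInv V u) = u - tensorCounit V u • 1 := by
  refine LinearMap.congr_fun (f := wordLength V ∘ₗ wordLengthInv V)
    (g := LinearMap.id - (tensorCounit V).toLinearMap.smulRight 1) ?_ u
  refine tensorAlgebra_linearMap_ext (by simp) fun i x u _ _ => ?_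
  simpa [wordLengthInv, wordLengthResolvent_ι_mul, wordLength_ι_mul, mul_add] using
    congr(ι ℚ x * $(wordLength_wordLengthResolvent_succ u 0))

theorem wordLengthInv_wordLength (u : 𝓣 V) :
    wordLengthInv V (wordLength V u) = u - tensorCounit V u • 1 :=
  (wordLengthResolvent_wordLength u 0).trans (wordLength_wordLengthInv u)

theorem map_wordLengthInv {W : Type*} [AddCommGroup W] [Module ℚ W] [SuperSpace W]
    {f : 𝓣 V →ₗ[ℚ] 𝓣 W} (hf : ∀ u, f (wordLength V u) = wordLength W (f u)) (u : 𝓣 V) :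
    f (wordLengthInv V u) = wordLengthInv W (f u) := by
  have eq_smul_one {w : 𝓣 W} (hw : wordLength W w = 0) : w = tensorCounit W w • 1 :=
    sub_eq_zero.mp ((wordLengthInv_wordLength w).symm.trans (by rw [hw, map_zero]))
  have counit_map {w : 𝓣 V} (hw : tensorCounit V w = 0) : tensorCounit W (f w) = 0 := by
    have : w = wordLength V (wordLengthInv V w) := by simp [wordLength_wordLengthInv, hw]
    rw [this, hf, tensorCounit_wordLength]
  have map_one : wordLengthInv W (f 1) = 0 := by
    rw [eq_smul_one (w := f 1) (by simp [← hf]), map_smul, wordLengthInv_one, smul_zero]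
  calc f (wordLengthInv V u)
      = wordLengthInv W (wordLength W (f (wordLengthInv V u))) := by
        rw [wordLengthInv_wordLength, counit_map (tensorCounit_wordLengthInv u), zero_smul,
          sub_zero]
    _ = wordLengthInv W (f u) := by
        rw [← hf, wordLength_wordLengthInv, map_sub, map_smul, map_sub, map_smul, map_one,
          smul_zero, sub_zero]

theorem wordLength_tensorMap {W : Type*} [AddCommGroup W] [Module ℚ W] (k : V →ₗ[ℚ] W) (u : 𝓣 V) :
    wordLength W (tensorMap k u) = tensorMap k (wordLength V u) := by
  refine LinearMap.congr_fun (f := wordLength W ∘ₗ (tensorMap k).toLinearMap)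
    (g := (tensorMap k).toLinearMap ∘ₗ wordLength V) ?_ u
  exact tensorAlgebra_linearMap_ext (by simp) fun i x u _ hu => by
    simpa [wordLength_ι_mul] using congr(ι ℚ (k x) * $hu)

theorem wordLength_parity_pow (i : ℕ) (u : 𝓣 V) :
    wordLength V ((parity ^ i) u) = (parity ^ i) (wordLength V u) :=
  map_parity_pow (LinearMap.ext (wordLength_tensorMap parity)) i u

theorem dynkin_wordLength (u : 𝓣 V) :
    dynkin (ι ℚ) (wordLength V u) = wordLength V (dynkin (ι ℚ) u) := by
  refine LinearMap.congr_fun (f := dynkin (ι ℚ) ∘ₗ wordLength V)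
    (g := wordLength V ∘ₗ dynkin (ι ℚ)) ?_ u
  refine tensorAlgebra_linearMap_ext (by simp) fun i x u hx hu => ?_
  rw [LinearMap.comp_apply, LinearMap.comp_apply] at hu ⊢
  simp only [dynkin_ι_mul, superBracket_tensorAlgebra hx.letter, map_add, map_sub, map_smul,
    wordLength_mul, wordLength_ι, wordLength_parity_pow, hu, tensorCounit_wordLength, zero_smul,
    add_zero]
  noncomm_ring

/-- In the convolution algebra this reads `dynkin * id = wordLength`. -/
theorem mul'_map_dynkin_tensorComul (u : 𝓣 V) :
    LinearMap.mul' ℚ (𝓣 V) (LinearMap.rTensor (𝓣 V) (dynkin (ι ℚ)) (tensorComul V u)) =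
      wordLength V u := by
  have mul'_counit (u : 𝓣 V) : LinearMap.mul' ℚ (𝓣 V) (LinearMap.rTensor (𝓣 V)
      (Algebra.linearMap ℚ (𝓣 V) ∘ₗ (tensorCounit V).toLinearMap) (tensorComul V u)) = u := by
    rw [LinearMap.rTensor_comp, LinearMap.comp_apply, rTensor_counit_tensorComul]
    simp
  refine LinearMap.congr_fun (f := LinearMap.mul' ℚ (𝓣 V) ∘ₗ
    LinearMap.rTensor (𝓣 V) (dynkin (ι ℚ)) ∘ₗ tensorComul V) (g := wordLength V) ?_ u
  refine tensorAlgebra_linearMap_ext (by simp) fun i x u hx hu => ?_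
  simp only [LinearMap.comp_apply, tensorComul_mul, wordLength_ι_mul, ← hu, diagonalAction_ι]
  conv_rhs => enter [2, 2]; rw [← mul'_counit u]
  induction tensorComul V u with
  | zero => simp
  | add z w hz hw => simp only [map_add, mul_add, hz, hw]; abel
  | tmul a b =>
    simp only [LinearMap.add_apply, leftAction_tmul, hx.letter.rightAction_tmul, map_add,
      LinearMap.rTensor_tmul, dynkin_ι_mul, superBracket_tensorAlgebra hx.letter,
      ← dynkin_parity_pow ι_comp_parity, LinearMap.mul'_apply, LinearMap.comp_apply,
      AlgHom.toLinearMap_apply, Algebra.linearMap_apply, Algebra.algebraMap_eq_smul_one,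
      Algebra.smul_mul_assoc, one_mul, Algebra.mul_smul_comm]
    noncomm_ring

theorem dynkin_of_mem_primitives {p : 𝓣 V} (hp : p ∈ primitives V) :
    dynkin (ι ℚ) p = wordLength V p := by
  rw [← mul'_map_dynkin_tensorComul, mem_primitives.mp hp]
  simp

theorem dynkin_wordLengthInv_of_mem_primitives {p : 𝓣 V} (hp : p ∈ primitives V) :
    dynkin (ι ℚ) (wordLengthInv V p) = p := by
  rw [map_wordLengthInv dynkin_wordLength, dynkin_of_mem_primitives hp, wordLengthInv_wordLength,
    tensorCounit_eq_zero_of_mem_primitives hp, zero_smul, sub_zero]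

section Lie

variable {L : Type*} [AddCommGroup L] [Module ℚ L] [SuperSpace L] [SuperLie L] {j : V →ₗ[ℚ] L}
  (hj : j ∘ₗ parity = parity ∘ₗ j)
include hj

theorem dynkin_dynkin_ι (u : 𝓣 V) :
    dynkin j (dynkin (ι ℚ) u) = dynkin j (wordLength V u) := by
  refine LinearMap.congr_fun (f := dynkin j ∘ₗ dynkin (ι ℚ)) (g := dynkin j ∘ₗ wordLength V) ?_ u
  refine tensorAlgebra_linearMap_ext (by simp) fun i x u hx hu => ?_
  have swap : dynkin j ((parity ^ i) (dynkin (ι ℚ) u) * ι ℚ x) =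
      -superBracket (j x) (dynkin j u) := by
    rw [← dynkin_parity_pow ι_comp_parity, dynkin_dynkin_mul hj, dynkin_parity_pow hj,
      superBracket_antisymm (hx.map hj)]
    simp
  rw [LinearMap.comp_apply, LinearMap.comp_apply] at hu ⊢
  simp [dynkin_ι_mul, superBracket_tensorAlgebra hx.letter, swap, wordLength_ι_mul, hu, add_assoc]

theorem dynkin_wordLengthInv_dynkin_ι (u : 𝓣 V) :
    dynkin j (wordLengthInv V (dynkin (ι ℚ) u)) = dynkin j u := by
  rw [← map_wordLengthInv dynkin_wordLength, dynkin_dynkin_ι hj, wordLength_wordLengthInv]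
  simp

end Lie

end WordLength

section PBWSection

open WithConv CompleteFiltration FilteredCoalgebra

section TensorMap

variable {V W : Type*} [AddCommGroup V] [Module ℚ V] [SuperSpace V] [AddCommGroup W] [Module ℚ W]
  [SuperSpace W]

theorem tensorAlgebra_algHom_parity {ψ : 𝓣 V →ₐ[ℚ] 𝓣 W}
    (hψ : ∀ x, ψ (ι ℚ (parity x)) = parity (ψ (ι ℚ x))) (u : 𝓣 V) :
    ψ (parity u) = parity (ψ u) := by
  have comm : ψ.comp (tensorParity V) = (tensorParity W).comp ψ := by
    ext x
    exact congr(ψ $(parity_ι x)).trans (hψ x)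
  exact congr($comm u)

theorem lift_dynkin_parity (u : 𝓣 (𝓣 V)) :
    TensorAlgebra.lift ℚ (dynkin (ι ℚ : V →ₗ[ℚ] 𝓣 V)) (parity u) =
      parity (TensorAlgebra.lift ℚ (dynkin (ι ℚ : V →ₗ[ℚ] 𝓣 V)) u) :=
  tensorAlgebra_algHom_parity (fun x => by simpa using dynkin_parity ι_comp_parity x) u

theorem lift_dynkin_ι_mem_primitives (x : 𝓣 V) :
    TensorAlgebra.lift ℚ (dynkin (ι ℚ : V →ₗ[ℚ] 𝓣 V)) (ι ℚ x) ∈ primitives V := by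
  simpa using dynkin_mem_primitives ι_mem_primitives x

variable {k : V →ₗ[ℚ] W} (hk : k ∘ₗ parity = parity ∘ₗ k)
include hk

theorem tensorMap_parity (u : 𝓣 V) : tensorMap k (parity u) = parity (tensorMap k u) :=
  tensorAlgebra_algHom_parity (fun x => by simpa using congr(ι ℚ ($hk x))) u

theorem tensorMap_superBracket (u w : 𝓣 V) :
    tensorMap k (superBracket u w) = superBracket (tensorMap k u) (tensorMap k w) := by
  have even : (tensorMap k).toLinearMap ∘ₗ parity = parity ∘ₗ (tensorMap k).toLinearMap :=
    LinearMap.ext (tensorMap_parity hk)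
  induction u using hasParity_induction with
  | add u u' hu hu' => simp only [map_add, LinearMap.add_apply, hu, hu']
  | hom i u hu =>
    have swap := map_parity_pow even i w
    rw [AlgHom.toLinearMap_apply, AlgHom.toLinearMap_apply] at swap
    have hku : HasParity i (tensorMap k u) := hu.map (f := (tensorMap k).toLinearMap) even
    rw [superBracket_tensorAlgebra hu, superBracket_tensorAlgebra hku]
    simp [swap]

theorem tensorMap_dynkin_ι (u : 𝓣 V) :
    tensorMap k (dynkin (ι ℚ) u) = dynkin (ι ℚ) (tensorMap k u) := by
  have letters : (tensorMap k).toLinearMap ∘ₗ ι ℚ = ι ℚ ∘ₗ k := LinearMap.ext (tensorMap_ι k)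
  rw [dynkin_tensorMap, ← letters]
  exact map_dynkin (f := (tensorMap k).toLinearMap) (tensorMap_superBracket hk) u

end TensorMap

variable {L : Type*} [AddCommGroup L] [Module ℚ L] [SuperSpace L] [SuperLie L]

variable (L) in
/-- The retraction of `ι : L → 𝓣 L` that evaluates the Lie polynomial `eulerian u` in `L`; a
primitive `p` is the Lie polynomial `dynkin ι (wordLengthInv p)`. -/
def eulerianRetraction : 𝓣 L →ₗ[ℚ] L := dynkin LinearMap.id ∘ₗ wordLengthInv L ∘ₗ eulerian L

variable (L) in
/-- The Poincaré–Birkhoff–Witt section `U L → 𝓣 L`, precomposed with the projection `𝓣 L → U L`: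
the convolution exponential of `eulerianRetraction`. -/
def pbwSection : Module.End ℚ (𝓣 L) := (exp (toConv (ι ℚ ∘ₗ eulerianRetraction L))).ofConv

theorem eulerianRetraction_mem_fil : toConv (ι ℚ ∘ₗ eulerianRetraction L) ∈ fil 1 :=
  mem_fil_one_iff.mpr (by simp [eulerianRetraction, eulerian_one])

theorem dynkin_wordLengthInv_eulerian {V : Type*} [AddCommGroup V] [Module ℚ V] [SuperSpace V]
    (u : 𝓣 V) : dynkin (ι ℚ) (wordLengthInv V (eulerian V u)) = eulerian V u :=
  dynkin_wordLengthInv_of_mem_primitives (eulerian_mem_primitives u)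

theorem IsSuperRep.lift_pbwSection {A : Type*} [Ring A] [Algebra ℚ A] {Φ : L →ₗ[ℚ] A}
    (hΦ : IsSuperRep Φ) (u : 𝓣 L) :
    TensorAlgebra.lift ℚ Φ (pbwSection L u) = TensorAlgebra.lift ℚ Φ u := by
  let π := TensorAlgebra.lift ℚ Φ
  suffices h : convPost (𝓣 L) π (toConv (ι ℚ ∘ₗ eulerianRetraction L)) =
      convPost (𝓣 L) π (toConv (eulerian L)) by
    have := (convPost_exp π eulerianRetraction_mem_fil).trans
      ((congr(exp $h)).trans (exp_convPost_eulerian π))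
    exact congr($this u)
  ext u
  have lift_eulerian := hΦ.lift_dynkin (j := LinearMap.id) rfl (wordLengthInv L (eulerian L u))
  rw [LinearMap.comp_id, dynkin_wordLengthInv_eulerian] at lift_eulerian
  simpa [π, eulerianRetraction] using lift_eulerian.symm

/-- The Lie subalgebra generated by `L` in `𝓣 L` is evaluated in `L` by a morphism of Lie
superalgebras. -/
theorem dynkin_wordLengthInv_dynkin_dynkin (u : 𝓣 (𝓣 L)) :
    dynkin LinearMap.id (wordLengthInv L (dynkin (dynkin (ι ℚ)) u)) =
      dynkin (dynkin (LinearMap.id : L →ₗ[ℚ] L)) u := by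
  refine LinearMap.congr_fun
    (f := dynkin LinearMap.id ∘ₗ wordLengthInv L ∘ₗ dynkin (dynkin (ι ℚ)))
    (g := dynkin (dynkin (LinearMap.id : L →ₗ[ℚ] L))) ?_ u
  refine tensorAlgebra_linearMap_ext (by simp) fun i x u _ hu => ?_
  have primitive : dynkin (dynkin (ι ℚ)) u ∈ primitives L :=
    dynkin_mem_primitives (dynkin_mem_primitives ι_mem_primitives) u
  have bracket : superBracket (dynkin (ι ℚ) x) (dynkin (dynkin (ι ℚ)) u) =
      dynkin (ι ℚ) (dynkin (ι ℚ) x * wordLengthInv L (dynkin (dynkin (ι ℚ)) u)) := by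
    rw [dynkin_dynkin_mul ι_comp_parity, dynkin_wordLengthInv_of_mem_primitives primitive]
    simp
  simp only [LinearMap.comp_apply] at hu ⊢
  simp [dynkin_ι_mul, bracket, dynkin_wordLengthInv_dynkin_ι, dynkin_dynkin_mul, hu]

theorem dynkin_id_comp_parity :
    dynkin LinearMap.id ∘ₗ parity = parity ∘ₗ dynkin (LinearMap.id : L →ₗ[ℚ] L) :=
  LinearMap.ext (dynkin_parity rfl)

theorem eulerianRetraction_lift_dynkin (u : 𝓣 (𝓣 L)) :
    eulerianRetraction L (TensorAlgebra.lift ℚ (dynkin (ι ℚ)) u) =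
      eulerianRetraction L (tensorMap (dynkin LinearMap.id) u) := by
  obtain ⟨v, hv⟩ : ∃ v, dynkin (ι ℚ) v = eulerian (𝓣 L) u := ⟨_, dynkin_wordLengthInv_eulerian u⟩
  have lift_side : eulerian L (TensorAlgebra.lift ℚ (dynkin (ι ℚ)) u) =
      dynkin (dynkin (ι ℚ)) v := by
    rw [eulerian_algHom lift_dynkin_parity lift_dynkin_ι_mem_primitives u, ← hv]
    simpa only [LinearMap.id_comp, LinearMap.id_apply] using
      isSuperRep_id.lift_dynkin (LinearMap.ext (dynkin_parity ι_comp_parity)) v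
  have map_side : eulerian L (tensorMap (dynkin LinearMap.id) u) =
      dynkin (ι ℚ) (tensorMap (dynkin LinearMap.id) v) := by
    rw [eulerian_algHom (tensorMap_parity dynkin_id_comp_parity) (tensorMap_ι_mem_primitives _) u,
      ← hv, tensorMap_dynkin_ι dynkin_id_comp_parity]
  simp only [eulerianRetraction, LinearMap.comp_apply, lift_side, map_side,
    dynkin_wordLengthInv_dynkin_dynkin]
  rw [dynkin_wordLengthInv_dynkin_ι (j := LinearMap.id) rfl, dynkin_tensorMap, LinearMap.id_comp]

theorem pbwSection_lift_dynkin (u : 𝓣 (𝓣 L)) :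
    pbwSection L (TensorAlgebra.lift ℚ (dynkin (ι ℚ)) u) =
      pbwSection L (tensorMap (dynkin LinearMap.id) u) := by
  have comp_eq :
      (ι ℚ ∘ₗ eulerianRetraction L) ∘ₗ (TensorAlgebra.lift ℚ (dynkin (ι ℚ))).toLinearMap =
      (ι ℚ ∘ₗ eulerianRetraction L) ∘ₗ (tensorMap (dynkin LinearMap.id)).toLinearMap :=
    LinearMap.ext fun u => congr(ι ℚ $(eulerianRetraction_lift_dynkin u))
  have lift_side := exp_algHom lift_dynkin_parity lift_dynkin_ι_mem_primitives
    (eulerianRetraction_mem_fil (L := L)) u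
  have map_side := exp_algHom (tensorMap_parity dynkin_id_comp_parity)
    (tensorMap_ι_mem_primitives _) (eulerianRetraction_mem_fil (L := L)) u
  exact lift_side.trans (comp_eq ▸ map_side.symm)

theorem pbwSection_mul_superBracket_mul (a b : 𝓣 L) (x y : L) :
    pbwSection L (a * superBracket (ι ℚ x) (ι ℚ y) * b) =
      pbwSection L (a * ι ℚ (superBracket x y) * b) := by
  have lift_letters (c : 𝓣 L) : TensorAlgebra.lift ℚ (dynkin (ι ℚ)) (tensorMap (ι ℚ) c) = c := by
    have : (TensorAlgebra.lift ℚ (dynkin (ι ℚ))).comp (tensorMap (ι ℚ)) = AlgHom.id ℚ (𝓣 L) := by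
      ext; simp
    exact congr($this c)
  have map_letters (c : 𝓣 L) : tensorMap (dynkin LinearMap.id) (tensorMap (ι ℚ) c) = c := by
    have : (tensorMap (dynkin LinearMap.id)).comp (tensorMap (ι ℚ)) = AlgHom.id ℚ (𝓣 L) := by
      ext; simp
    exact congr($this c)
  have h := pbwSection_lift_dynkin
    (tensorMap (ι ℚ) a * ι ℚ (ι ℚ x * ι ℚ y) * tensorMap (ι ℚ) b)
  simpa [lift_letters, map_letters, dynkin_ι_mul] using h

section Naturality

variable {L' : Type*} [AddCommGroup L'] [Module ℚ L'] [SuperSpace L'] [SuperLie L']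
  {k : L →ₗ[ℚ] L'} (even : k ∘ₗ parity = parity ∘ₗ k)
  (bracket : ∀ x y, k (superBracket x y) = superBracket (k x) (k y))
include even bracket

theorem eulerianRetraction_tensorMap (u : 𝓣 L) :
    eulerianRetraction L' (tensorMap k u) = k (eulerianRetraction L u) := by
  have wordLengthInv_comm (w : 𝓣 L) :
      wordLengthInv L' (tensorMap k w) = tensorMap k (wordLengthInv L w) :=
    (map_wordLengthInv (f := (tensorMap k).toLinearMap)
      (fun w => (wordLength_tensorMap k w).symm) w).symm
  simp [eulerianRetraction, eulerian_algHom (tensorMap_parity even) (tensorMap_ι_mem_primitives _),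
    wordLengthInv_comm, dynkin_tensorMap, map_dynkin bracket]

theorem pbwSection_tensorMap (u : 𝓣 L) :
    pbwSection L' (tensorMap k u) = tensorMap k (pbwSection L u) := by
  have comp_eq : toConv ((ι ℚ ∘ₗ eulerianRetraction L') ∘ₗ (tensorMap k).toLinearMap) =
      convPost (𝓣 L) (tensorMap k) (toConv (ι ℚ ∘ₗ eulerianRetraction L)) := by
    ext u
    simp [eulerianRetraction_tensorMap even bracket]
  calc pbwSection L' (tensorMap k u)
      = exp (toConv ((ι ℚ ∘ₗ eulerianRetraction L') ∘ₗ (tensorMap k).toLinearMap)) u :=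
        exp_algHom (tensorMap_parity even) (tensorMap_ι_mem_primitives _)
          eulerianRetraction_mem_fil u
    _ = tensorMap k (pbwSection L u) := by
        rw [comp_eq, ← convPost_exp _ eulerianRetraction_mem_fil]
        rfl

end Naturality

end PBWSection

section TwistedDerivation

variable {V : Type*} [AddCommGroup V] [Module ℚ V]

/-- The derivation of the tensor algebra along `tensorMap θ` that extends `k`: on words,
`x₁ ⋯ xₙ` is sent to `∑ᵢ θ x₁ ⋯ θ xᵢ₋₁ (k xᵢ) xᵢ₊₁ ⋯ xₙ`. -/
def twistedDerivation (θ k : V →ₗ[ℚ] V) : Module.End ℚ (𝓣 V) :=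
  tensorRec (LinearMap.mul ℚ (𝓣 V) ∘ₗ ι ℚ ∘ₗ θ) (LinearMap.mul ℚ (𝓣 V) ∘ₗ ι ℚ ∘ₗ k) 0

variable (θ k : V →ₗ[ℚ] V)

@[simp] theorem twistedDerivation_one : twistedDerivation θ k 1 = 0 := tensorRec_one _ _ _

theorem twistedDerivation_ι_mul (x : V) (u : 𝓣 V) :
    twistedDerivation θ k (ι ℚ x * u) = ι ℚ (θ x) * twistedDerivation θ k u + ι ℚ (k x) * u :=
  tensorRec_ι_mul _ _ _ x u

@[simp] theorem twistedDerivation_ι (x : V) : twistedDerivation θ k (ι ℚ x) = ι ℚ (k x) := by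
  simpa using twistedDerivation_ι_mul θ k x 1

variable [SuperSpace V]

theorem twistedDerivation_mul (u w : 𝓣 V) :
    twistedDerivation θ k (u * w) =
      twistedDerivation θ k u * w + tensorMap θ u * twistedDerivation θ k w := by
  refine LinearMap.congr_fun (f := twistedDerivation θ k ∘ₗ LinearMap.mulRight ℚ w)
    (g := LinearMap.mulRight ℚ w ∘ₗ twistedDerivation θ k +
      LinearMap.mulRight ℚ (twistedDerivation θ k w) ∘ₗ (tensorMap θ).toLinearMap) ?_ u
  refine tensorAlgebra_linearMap_ext (by simp) fun i x u _ hu => ?_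
  simp only [LinearMap.comp_apply, LinearMap.add_apply, LinearMap.mulRight_apply,
    AlgHom.toLinearMap_apply, mul_assoc, twistedDerivation_ι_mul, map_mul, tensorMap_ι] at hu ⊢
  rw [hu]
  noncomm_ring

theorem tensorCounit_twistedDerivation (u : 𝓣 V) :
    tensorCounit V (twistedDerivation θ k u) = 0 := by
  refine LinearMap.congr_fun (f := (tensorCounit V).toLinearMap ∘ₗ twistedDerivation θ k)
    (g := 0) ?_ u
  exact tensorAlgebra_linearMap_ext (by simp) fun i x u _ _ => by simp [twistedDerivation_ι_mul]

theorem twistedDerivation_wordLength (u : 𝓣 V) :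
    twistedDerivation θ k (wordLength V u) = wordLength V (twistedDerivation θ k u) := by
  refine LinearMap.congr_fun (f := twistedDerivation θ k ∘ₗ wordLength V)
    (g := wordLength V ∘ₗ twistedDerivation θ k) ?_ u
  refine tensorAlgebra_linearMap_ext (by simp) fun i x u _ hu => ?_
  simp only [LinearMap.comp_apply, wordLength_ι_mul, twistedDerivation_ι_mul, map_add] at hu ⊢
  rw [hu]
  abel

end TwistedDerivation

section Differential

open WithConv CompleteFiltration FilteredCoalgebra

variable {V : Type*} [AddCommGroup V] [Module ℚ V] [SuperSpace V]

/-- The differential of the tensor algebra induced by a differential on `V`. -/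
def tensorDifferential (d : Module.End ℚ V) : Module.End ℚ (𝓣 V) := twistedDerivation parity d

theorem tensorDifferential_ι_mul (d : Module.End ℚ V) (x : V) (u : 𝓣 V) :
    tensorDifferential d (ι ℚ x * u) =
      ι ℚ (parity x) * tensorDifferential d u + ι ℚ (d x) * u :=
  twistedDerivation_ι_mul parity d x u

@[simp] theorem tensorDifferential_one (d : Module.End ℚ V) :
    tensorDifferential d 1 = 0 :=
  twistedDerivation_one parity d

@[simp] theorem tensorDifferential_ι (d : Module.End ℚ V) (x : V) :
    tensorDifferential d (ι ℚ x) = ι ℚ (d x) :=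
  twistedDerivation_ι parity d x

theorem tensorDifferential_mul (d : Module.End ℚ V) (u w : 𝓣 V) :
    tensorDifferential d (u * w) =
      tensorDifferential d u * w + parity u * tensorDifferential d w :=
  twistedDerivation_mul parity d u w

@[simp] theorem tensorCounit_tensorDifferential (d : Module.End ℚ V) (u : 𝓣 V) :
    tensorCounit V (tensorDifferential d u) = 0 :=
  tensorCounit_twistedDerivation parity d u

theorem tensorMap_tensorDifferential {W : Type*} [AddCommGroup W] [Module ℚ W] [SuperSpace W]
    {d : Module.End ℚ V} {d' : Module.End ℚ W} {k : V →ₗ[ℚ] W} (even : k ∘ₗ parity = parity ∘ₗ k)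
    (chain : k ∘ₗ d = d' ∘ₗ k) (u : 𝓣 V) :
    tensorMap k (tensorDifferential d u) = tensorDifferential d' (tensorMap k u) := by
  refine LinearMap.congr_fun (f := (tensorMap k).toLinearMap ∘ₗ tensorDifferential d)
    (g := tensorDifferential d' ∘ₗ (tensorMap k).toLinearMap) ?_ u
  refine tensorAlgebra_linearMap_ext (by simp) fun i x u _ hu => ?_
  have even_x : k (parity x) = parity (k x) := LinearMap.congr_fun even x
  have chain_x : k (d x) = d' (k x) := LinearMap.congr_fun chain x
  simpa [tensorDifferential_ι_mul, even_x, chain_x] using congr(ι ℚ (parity (k x)) * $hu)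

variable {d : Module.End ℚ V} (odd : ∀ x, d (parity x) = -parity (d x))
include odd

theorem HasParity.apply_of_odd {i : ℕ} {x : V} (hx : HasParity i x) : HasParity (i + 1) (d x) := by
  rw [HasParity, ← neg_inj, ← odd, hx, map_smul, pow_succ, mul_neg_one, neg_smul, neg_neg]

theorem apply_parity_pow_of_odd (i : ℕ) (x : V) :
    d ((parity ^ i) x) = (-1 : ℚ) ^ i • (parity ^ i) (d x) := by
  induction i with
  | zero => simp
  | succ i ih => simp [pow_succ', odd, ih]

theorem tensorDifferential_parity (u : 𝓣 V) :
    tensorDifferential d (parity u) = -parity (tensorDifferential d u) := by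
  refine LinearMap.congr_fun (f := tensorDifferential d ∘ₗ parity)
    (g := -(parity ∘ₗ tensorDifferential d)) ?_ u
  refine tensorAlgebra_linearMap_ext (by simp) fun i x u _ hu => ?_
  simp only [LinearMap.comp_apply, LinearMap.neg_apply, parity_mul, parity_ι,
    tensorDifferential_ι_mul, map_add, odd] at hu ⊢
  rw [hu]
  simp [add_comm]

theorem tensorDifferential_tensorDifferential (sq_zero : ∀ x, d (d x) = 0) (u : 𝓣 V) :
    tensorDifferential d (tensorDifferential d u) = 0 := by
  refine LinearMap.congr_fun (f := tensorDifferential d ∘ₗ tensorDifferential d) (g := 0) ?_ u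
  refine tensorAlgebra_linearMap_ext (by simp) fun i x u _ hu => ?_
  simp only [LinearMap.comp_apply, LinearMap.zero_apply] at hu ⊢
  simp [tensorDifferential_ι_mul, hu, odd, sq_zero]

theorem tensorComul_tensorDifferential (u : 𝓣 V) :
    tensorComul V (tensorDifferential d u) =
      TensorProduct.map (tensorDifferential d) LinearMap.id (tensorComul V u) +
        TensorProduct.map parity (tensorDifferential d) (tensorComul V u) := by
  refine LinearMap.congr_fun (f := tensorComul V ∘ₗ tensorDifferential d)
    (g := TensorProduct.map (tensorDifferential d) LinearMap.id ∘ₗ tensorComul V +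
      TensorProduct.map parity (tensorDifferential d) ∘ₗ tensorComul V) ?_ u
  refine tensorAlgebra_linearMap_ext (by simp) fun i x u hx hu => ?_
  have hdx := (hx.apply_of_odd odd).letter
  have odd_pow (a : 𝓣 V) := apply_parity_pow_of_odd (tensorDifferential_parity odd) i a
  simp only [LinearMap.comp_apply, LinearMap.add_apply, tensorDifferential_ι_mul, map_add,
    tensorComul_mul] at hu ⊢
  rw [hu, hx]
  simp only [map_smul, diagonalAction_ι, LinearMap.add_apply]
  induction tensorComul V u with
  | zero => simp
  | add z w hz hw =>
    simp only [map_add, smul_add] at hz hw ⊢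
    linear_combination (norm := module) hz + hw
  | tmul a b =>
    simp only [LinearMap.smul_apply, LinearMap.add_apply, leftAction_tmul,
      hx.letter.rightAction_tmul, hdx.rightAction_tmul, map_add, TensorProduct.map_tmul,
      LinearMap.id_apply, tensorDifferential_ι_mul, odd_pow, hx.eq, map_smul, parity_mul, parity_ι,
      pow_succ', Module.End.mul_apply, smul_mul_assoc, ← TensorProduct.smul_tmul',
      TensorProduct.add_tmul, TensorProduct.tmul_add, TensorProduct.tmul_smul, parity_pow_parity]
    module

/-- The convolution subalgebra of the even operators that commute with the differential. -/
def evenChainMaps : Subalgebra ℚ (WithConv (𝓣 V →ₗ[ℚ] 𝓣 V)) where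
  carrier := {f | (∀ u, f (parity u) = parity (f u)) ∧
    ∀ u, f (tensorDifferential d u) = tensorDifferential d (f u)}
  mul_mem' {f g} hf hg := by
    constructor <;> intro u <;> simp only [convMul_tensor_apply]
    · rw [tensorComul_parity]
      induction tensorComul V u with
      | zero => simp
      | add z w hz hw => simp only [map_add, hz, hw]
      | tmul a b => simp [hf.1, hg.1]
    · rw [tensorComul_tensorDifferential odd]
      induction tensorComul V u with
      | zero => simp
      | add z w hz hw =>
        simp only [map_add] at hz hw ⊢
        rw [← hz, ← hw]
        abel
      | tmul a b => simp [tensorDifferential_mul, hf.1, hf.2, hg.2]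
  add_mem' {f g} hf hg :=
    ⟨fun u => by simp [hf.1, hg.1], fun u => by simp [hf.2, hg.2]⟩
  algebraMap_mem' r := by
    have scalar_apply (u : 𝓣 V) :
        algebraMap ℚ (WithConv (𝓣 V →ₗ[ℚ] 𝓣 V)) r u = (r * tensorCounit V u) • 1 := by
      rw [mul_smul, ← Algebra.algebraMap_eq_smul_one]
      exact congr(($(Algebra.algebraMap_eq_smul_one r) : WithConv (𝓣 V →ₗ[ℚ] 𝓣 V)) u)
    exact ⟨fun u => by simp [scalar_apply],
      fun u => by simp [scalar_apply]⟩

theorem evenChainMaps_closed (f : WithConv (𝓣 V →ₗ[ℚ] 𝓣 V))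
    (hf : ∀ n, ∃ g ∈ evenChainMaps odd, f - g ∈ fil n) : f ∈ evenChainMaps odd := by
  have eventually_eq (u w : 𝓣 V) : ∃ g ∈ evenChainMaps odd, f u = g u ∧ f w = g w := by
    obtain ⟨m, hm⟩ := exists_mem_level u
    obtain ⟨n, hn⟩ := exists_mem_level w
    obtain ⟨g, hg, hfg⟩ := hf (max m n)
    exact ⟨g, hg, sub_eq_zero.mp (mem_fil_iff.mp hfg u (level_mono (le_max_left m n) hm)),
      sub_eq_zero.mp (mem_fil_iff.mp hfg w (level_mono (le_max_right m n) hn))⟩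
  constructor <;> intro u
  · obtain ⟨g, hg, hPu, hu⟩ := eventually_eq (parity u) u
    exact hPu.trans ((hg.1 u).trans congr(parity $hu).symm)
  · obtain ⟨g, hg, hDu, hu⟩ := eventually_eq (tensorDifferential d u) u
    exact hDu.trans ((hg.2 u).trans congr(tensorDifferential d $hu).symm)

theorem toConv_eulerian_mem_evenChainMaps : toConv (eulerian V) ∈ evenChainMaps odd :=
  log_mem (evenChainMaps_closed odd) (algHom_sub_one_mem_fil_one (AlgHom.id ℚ (𝓣 V)))
    ⟨fun _ => rfl, fun _ => rfl⟩

end Differential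

section PBWSectionDifferential

open WithConv CompleteFiltration FilteredCoalgebra

variable {L : Type*} [AddCommGroup L] [Module ℚ L] [SuperSpace L] [SuperLie L]
  {d : Module.End ℚ L} (odd : ∀ x, d (parity x) = -parity (d x))
  (leibniz : ∀ x y, d (superBracket x y) = superBracket (d x) y + superBracket (parity x) (d y))

include leibniz in
theorem dynkin_tensorDifferential (u : 𝓣 L) :
    dynkin LinearMap.id (tensorDifferential d u) = d (dynkin LinearMap.id u) := by
  refine LinearMap.congr_fun (f := dynkin LinearMap.id ∘ₗ tensorDifferential d)
    (g := d ∘ₗ dynkin LinearMap.id) ?_ u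
  refine tensorAlgebra_linearMap_ext (by simp) fun i x u _ hu => ?_
  simp only [LinearMap.comp_apply] at hu ⊢
  simp only [tensorDifferential_ι_mul, map_add, dynkin_ι_mul, LinearMap.id_apply, hu,
    tensorCounit_tensorDifferential, zero_smul, add_zero, leibniz, map_smul]
  abel

include odd leibniz

theorem eulerianRetraction_tensorDifferential (u : 𝓣 L) :
    eulerianRetraction L (tensorDifferential d u) = d (eulerianRetraction L u) := by
  have wordLengthInv_comm (w : 𝓣 L) : wordLengthInv L (tensorDifferential d w) =
      tensorDifferential d (wordLengthInv L w) :=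
    (map_wordLengthInv (twistedDerivation_wordLength parity d) w).symm
  have eulerian_comm : eulerian L (tensorDifferential d u) = tensorDifferential d (eulerian L u) :=
    (toConv_eulerian_mem_evenChainMaps odd).2 u
  simp [eulerianRetraction, eulerian_comm, wordLengthInv_comm, dynkin_tensorDifferential leibniz]

theorem pbwSection_tensorDifferential (u : 𝓣 L) :
    pbwSection L (tensorDifferential d u) = tensorDifferential d (pbwSection L u) := by
  have letters : toConv (ι ℚ ∘ₗ eulerianRetraction L) ∈ evenChainMaps odd := by
    refine ⟨fun u => ?_, fun u => ?_⟩
    · have parity_comm : eulerianRetraction L (parity u) = parity (eulerianRetraction L u) :=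
        eulerianRetraction_tensorMap rfl parity_superBracket u
      simp [parity_comm]
    · simp [eulerianRetraction_tensorDifferential odd leibniz]
  exact (exp_mem (evenChainMaps_closed odd) eulerianRetraction_mem_fil letters).2 u

end PBWSectionDifferential

section HomotopyInverse

theorem exists_contraction {X : Type*} [AddCommGroup X] [Module ℚ X] {d : Module.End ℚ X}
    (sq_zero : ∀ x, d (d x) = 0) (acyclic : ∀ x, d x = 0 → ∃ y, x = d y) :
    ∃ s : Module.End ℚ X, ∀ x, d (s x) + s (d x) = x := by
  obtain ⟨r, hr⟩ := d.rangeRestrict.exists_rightInverse_of_surjective d.range_rangeRestrict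
  obtain ⟨t, ht⟩ := LinearMap.exists_extend r
  have d_t_d (x : X) : d (t (d x)) = d x := by
    have t_d : t (d x) = r (d.rangeRestrict x) := LinearMap.congr_fun ht (d.rangeRestrict x)
    rw [t_d]
    exact congrArg Subtype.val (LinearMap.congr_fun hr (d.rangeRestrict x))
  refine ⟨t ∘ₗ (LinearMap.id - t ∘ₗ d), fun x => ?_⟩
  obtain ⟨y, hy⟩ := acyclic (x - t (d x)) (by rw [map_sub, d_t_d, sub_self])
  simp only [LinearMap.comp_apply, LinearMap.sub_apply, LinearMap.id_apply, sq_zero, map_zero,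
    sub_zero]
  rw [hy, d_t_d, ← hy, sub_add_cancel]

variable {X Y : Type*} [AddCommGroup X] [Module ℚ X] [AddCommGroup Y] [Module ℚ Y]

/-- A homotopy inverse of a chain map `f`, together with the two contracting homotopies. Complexes
are encoded as ungraded spaces with a square-zero operator. -/
structure HomotopyInverse (dX : Module.End ℚ X) (dY : Module.End ℚ Y) (f : X →ₗ[ℚ] Y) where
  inv : Y →ₗ[ℚ] X
  leftHomotopy : Module.End ℚ X
  rightHomotopy : Module.End ℚ Y
  inv_chain : inv ∘ₗ dY = dX ∘ₗ inv
  left_eq : dX ∘ₗ leftHomotopy + leftHomotopy ∘ₗ dX = LinearMap.id - inv ∘ₗ f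
  right_eq : dY ∘ₗ rightHomotopy + rightHomotopy ∘ₗ dY = LinearMap.id - f ∘ₗ inv

/-- The differential of the mapping cone of `f`. -/
def coneDifferential (dX : Module.End ℚ X) (dY : Module.End ℚ Y) (f : X →ₗ[ℚ] Y) :
    Module.End ℚ (Y × X) :=
  (dY.coprod f).prod (-(dX ∘ₗ LinearMap.snd ℚ Y X))

@[simp] theorem coneDifferential_apply (dX : Module.End ℚ X) (dY : Module.End ℚ Y)
    (f : X →ₗ[ℚ] Y) (p : Y × X) : coneDifferential dX dY f p = (dY p.1 + f p.2, -dX p.2) := rfl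

/-- The components of a contraction of the mapping cone form a homotopy inverse. -/
def HomotopyInverse.ofConeContraction {dX : Module.End ℚ X} {dY : Module.End ℚ Y}
    {f : X →ₗ[ℚ] Y} (s : Module.End ℚ (Y × X))
    (hs : ∀ p, coneDifferential dX dY f (s p) + s (coneDifferential dX dY f p) = p) :
    HomotopyInverse dX dY f where
  inv := LinearMap.snd ℚ Y X ∘ₗ s ∘ₗ LinearMap.inl ℚ Y X
  leftHomotopy := -(LinearMap.snd ℚ Y X ∘ₗ s ∘ₗ LinearMap.inr ℚ Y X)
  rightHomotopy := LinearMap.fst ℚ Y X ∘ₗ s ∘ₗ LinearMap.inl ℚ Y X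
  inv_chain := by
    ext y
    have h := congrArg Prod.snd (hs (y, 0))
    exact (neg_add_eq_zero.mp (by simpa using h)).symm
  left_eq := by
    ext x
    have split : s (f x, -dX x) = s (f x, 0) - s (0, dX x) := by simp [← map_sub]
    have h := congrArg Prod.snd (hs (0, x))
    simp only [coneDifferential_apply, map_zero, zero_add, split, Prod.snd_add, Prod.snd_sub] at h
    simp only [LinearMap.comp_apply, LinearMap.add_apply, LinearMap.sub_apply, LinearMap.neg_apply,
      LinearMap.id_apply, LinearMap.inl_apply, LinearMap.inr_apply, LinearMap.snd_apply, map_neg]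
    linear_combination (norm := abel) h
  right_eq := by
    ext y
    have h := congrArg Prod.fst (hs (y, 0))
    simp only [coneDifferential_apply, map_zero, add_zero, neg_zero, Prod.fst_add] at h
    simp only [LinearMap.comp_apply, LinearMap.add_apply, LinearMap.sub_apply,
      LinearMap.id_apply, LinearMap.inl_apply, LinearMap.fst_apply, LinearMap.snd_apply]
    linear_combination (norm := abel) h

end HomotopyInverse

section QuasiIso

variable {X Y : Type} [AddCommGroup X] [Module ℚ X] [AddCommGroup Y] [Module ℚ Y]
variable {dX : Module.End ℚ X} {dY : Module.End ℚ Y} {f : X →ₗ[ℚ] Y}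

theorem nonempty_homotopyInverse_of_isQuasiIso (sq_zero_X : ∀ x, dX (dX x) = 0)
    (sq_zero_Y : ∀ y, dY (dY y) = 0) (chain : f ∘ₗ dX = dY ∘ₗ f) (hf : IsQuasiIso dX dY f) :
    Nonempty (HomotopyInverse dX dY f) := by
  replace chain (x : X) : f (dX x) = dY (f x) := LinearMap.congr_fun chain x
  obtain ⟨s, hs⟩ := exists_contraction (d := coneDifferential dX dY f)
    (by simp [sq_zero_X, sq_zero_Y, chain]) (by
      rintro ⟨w, v⟩ h
      rw [coneDifferential_apply, Prod.mk_eq_zero, neg_eq_zero] at h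
      obtain ⟨z, rfl⟩ := hf.1 v h.2 ⟨-w, by rw [map_neg, eq_neg_of_add_eq_zero_right h.1]⟩
      obtain ⟨x, hx, y, hy⟩ := hf.2 (w + f z) (by rw [map_add, ← chain, h.1])
      exact ⟨(y, x - z), by simp [← hy, hx]⟩)
  exact ⟨.ofConeContraction s hs⟩

theorem HomotopyInverse.isQuasiIso (h : HomotopyInverse dX dY f) : IsQuasiIso dX dY f := by
  have inv_chain (y : Y) : h.inv (dY y) = dX (h.inv y) := LinearMap.congr_fun h.inv_chain y
  refine ⟨fun x hx ⟨y, hy⟩ => ⟨h.leftHomotopy x + h.inv y, ?_⟩,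
    fun w hw => ⟨h.inv w, by rw [← inv_chain, hw, map_zero], h.rightHomotopy w, ?_⟩⟩
  · have left := LinearMap.congr_fun h.left_eq x
    simp only [LinearMap.add_apply, LinearMap.comp_apply, LinearMap.sub_apply, LinearMap.id_apply,
      hx, map_zero, add_zero, hy] at left
    rw [map_add, left, ← inv_chain, sub_add_cancel]
  · simpa [hw] using (LinearMap.congr_fun h.right_eq w).symm

end QuasiIso

section Averaging

variable {V W : Type*} [AddCommGroup V] [Module ℚ V] [SuperSpace V]
variable [AddCommGroup W] [Module ℚ W] [SuperSpace W]

/-- The part of a linear map between super vector spaces that commutes with the parity. -/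
def evenComponent (g : V →ₗ[ℚ] W) : V →ₗ[ℚ] W :=
  (2⁻¹ : ℚ) • (g + parity ∘ₗ g ∘ₗ parity)

/-- The part of a linear map between super vector spaces that anticommutes with the parity. -/
def oddComponent (g : V →ₗ[ℚ] W) : V →ₗ[ℚ] W :=
  (2⁻¹ : ℚ) • (g - parity ∘ₗ g ∘ₗ parity)

theorem evenComponent_comp_parity (g : V →ₗ[ℚ] W) :
    evenComponent g ∘ₗ parity = parity ∘ₗ evenComponent g := by
  ext x
  simp [evenComponent, add_comm]

theorem oddComponent_parity (g : V →ₗ[ℚ] W) (x : V) :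
    oddComponent g (parity x) = -parity (oddComponent g x) := by
  simp [oddComponent, ← smul_neg]

theorem evenComponent_comp_of_even {U : Type*} [AddCommGroup U] [Module ℚ U] [SuperSpace U]
    {f : U →ₗ[ℚ] V} (even : f ∘ₗ parity = parity ∘ₗ f) (g : V →ₗ[ℚ] W) :
    evenComponent (g ∘ₗ f) = evenComponent g ∘ₗ f := by
  ext x
  have even_x : f (parity x) = parity (f x) := LinearMap.congr_fun even x
  simp [evenComponent, even_x]

theorem evenComponent_of_even_comp {U : Type*} [AddCommGroup U] [Module ℚ U] [SuperSpace U]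
    {f : V →ₗ[ℚ] W} (even : f ∘ₗ parity = parity ∘ₗ f) (g : U →ₗ[ℚ] V) :
    evenComponent (f ∘ₗ g) = f ∘ₗ evenComponent g := by
  ext x
  have even_x (y : V) : f (parity y) = parity (f y) := LinearMap.congr_fun even y
  simp [evenComponent, even_x]

theorem evenComponent_comp_odd {d : Module.End ℚ V} (odd : ∀ x, d (parity x) = -parity (d x))
    (g : V →ₗ[ℚ] W) : evenComponent g ∘ₗ d = oddComponent (g ∘ₗ d) := by
  ext x
  simp [evenComponent, oddComponent, odd]

theorem odd_comp_evenComponent {d : Module.End ℚ W} (odd : ∀ x, d (parity x) = -parity (d x))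
    (g : V →ₗ[ℚ] W) : d ∘ₗ evenComponent g = oddComponent (d ∘ₗ g) := by
  ext x
  simp [evenComponent, oddComponent, odd, sub_eq_add_neg]

theorem oddComponent_homotopy {d k e : Module.End ℚ V} (odd : ∀ x, d (parity x) = -parity (d x))
    (homotopy : d ∘ₗ k + k ∘ₗ d = LinearMap.id - e) :
    d ∘ₗ oddComponent k + oddComponent k ∘ₗ d = LinearMap.id - evenComponent e := by
  have comm : d ∘ₗ oddComponent k + oddComponent k ∘ₗ d = evenComponent (d ∘ₗ k + k ∘ₗ d) := by
    ext x
    simp only [evenComponent, oddComponent, LinearMap.add_apply, LinearMap.comp_apply,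
      LinearMap.sub_apply, LinearMap.smul_apply, map_smul, map_sub, map_add, odd, map_neg]
    module
  rw [comm, homotopy]
  ext x
  simp only [evenComponent, LinearMap.add_apply, LinearMap.comp_apply, LinearMap.sub_apply,
    LinearMap.smul_apply, LinearMap.id_apply, map_sub, parity_parity]
  module

variable {dV : Module.End ℚ V} {dW : Module.End ℚ W} {f : V →ₗ[ℚ] W}

/-- The average of a homotopy inverse over the parity involutions: its inverse is even and its
homotopies are odd. -/
def HomotopyInverse.average (h : HomotopyInverse dV dW f)
    (odd_V : ∀ x, dV (parity x) = -parity (dV x)) (odd_W : ∀ y, dW (parity y) = -parity (dW y))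
    (even : f ∘ₗ parity = parity ∘ₗ f) : HomotopyInverse dV dW f where
  inv := evenComponent h.inv
  leftHomotopy := oddComponent h.leftHomotopy
  rightHomotopy := oddComponent h.rightHomotopy
  inv_chain := by
    rw [evenComponent_comp_odd odd_W, odd_comp_evenComponent odd_V, h.inv_chain]
  left_eq := by
    rw [oddComponent_homotopy odd_V h.left_eq, evenComponent_comp_of_even even]
  right_eq := by
    rw [oddComponent_homotopy odd_W h.right_eq, evenComponent_of_even_comp even]

end Averaging

section TensorHomotopy

variable {V W : Type*} [AddCommGroup V] [Module ℚ V] [SuperSpace V]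
variable [AddCommGroup W] [Module ℚ W] [SuperSpace W]

theorem tensorDifferential_homotopy {d θ k : Module.End ℚ V}
    (odd_d : ∀ x, d (parity x) = -parity (d x)) (odd_k : ∀ x, k (parity x) = -parity (k x))
    (even : θ ∘ₗ parity = parity ∘ₗ θ) (chain : θ ∘ₗ d = d ∘ₗ θ)
    (homotopy : d ∘ₗ k + k ∘ₗ d = LinearMap.id - θ) :
    tensorDifferential d ∘ₗ twistedDerivation (parity ∘ₗ θ) k +
        twistedDerivation (parity ∘ₗ θ) k ∘ₗ tensorDifferential d =
      LinearMap.id - (tensorMap θ).toLinearMap := by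
  refine tensorAlgebra_linearMap_ext (by simp) fun i x u _ hu => ?_
  have even_x : θ (parity x) = parity (θ x) := LinearMap.congr_fun even x
  have chain_x : θ (d x) = d (θ x) := LinearMap.congr_fun chain x
  have homotopy_x : ι ℚ (k (d x)) = ι ℚ x - ι ℚ (θ x) - ι ℚ (d (k x)) := by
    rw [← map_sub, ← map_sub]
    exact congrArg (ι ℚ) (eq_sub_of_add_eq' (LinearMap.congr_fun homotopy x))
  simp only [LinearMap.add_apply, LinearMap.comp_apply, LinearMap.sub_apply, LinearMap.id_apply,
    AlgHom.toLinearMap_apply] at hu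
  have homotopy_u := eq_sub_of_add_eq' hu
  simp only [LinearMap.add_apply, LinearMap.comp_apply, LinearMap.sub_apply, LinearMap.id_apply,
    AlgHom.toLinearMap_apply, tensorDifferential_ι_mul, twistedDerivation_ι_mul, map_add, map_mul,
    tensorMap_ι, even_x, chain_x, parity_parity, odd_d, odd_k, map_neg, homotopy_x, homotopy_u]
  noncomm_ring

variable {dV : Module.End ℚ V} {dW : Module.End ℚ W} {f : V →ₗ[ℚ] W}

/-- The homotopy inverse induced on tensor algebras by a homotopy inverse of an even chain map. -/
def HomotopyInverse.tensor (h : HomotopyInverse dV dW f)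
    (odd_V : ∀ x, dV (parity x) = -parity (dV x)) (odd_W : ∀ y, dW (parity y) = -parity (dW y))
    (even : f ∘ₗ parity = parity ∘ₗ f) (chain : f ∘ₗ dV = dW ∘ₗ f)
    (even_inv : h.inv ∘ₗ parity = parity ∘ₗ h.inv)
    (odd_left : ∀ x, h.leftHomotopy (parity x) = -parity (h.leftHomotopy x))
    (odd_right : ∀ y, h.rightHomotopy (parity y) = -parity (h.rightHomotopy y)) :
    HomotopyInverse (tensorDifferential dV) (tensorDifferential dW) (tensorMap f).toLinearMap where
  inv := (tensorMap h.inv).toLinearMap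
  leftHomotopy := twistedDerivation (parity ∘ₗ h.inv ∘ₗ f) h.leftHomotopy
  rightHomotopy := twistedDerivation (parity ∘ₗ f ∘ₗ h.inv) h.rightHomotopy
  inv_chain := LinearMap.ext fun u => tensorMap_tensorDifferential even_inv h.inv_chain u
  left_eq := by
    rw [← tensorMap_comp]
    refine tensorDifferential_homotopy odd_V odd_left ?_ ?_ h.left_eq
    · rw [LinearMap.comp_assoc, even, ← LinearMap.comp_assoc, even_inv, LinearMap.comp_assoc]
    · rw [LinearMap.comp_assoc, chain, ← LinearMap.comp_assoc, h.inv_chain, LinearMap.comp_assoc]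
  right_eq := by
    rw [← tensorMap_comp]
    refine tensorDifferential_homotopy odd_W odd_right ?_ ?_ h.right_eq
    · rw [LinearMap.comp_assoc, even_inv, ← LinearMap.comp_assoc, even, LinearMap.comp_assoc]
    · rw [LinearMap.comp_assoc, h.inv_chain, ← LinearMap.comp_assoc, chain, LinearMap.comp_assoc]

end TensorHomotopy

theorem isQuasiIso_tensorMap {V W : Type} [AddCommGroup V] [Module ℚ V] [SuperSpace V]
    [AddCommGroup W] [Module ℚ W] [SuperSpace W] {dV : Module.End ℚ V} {dW : Module.End ℚ W}
    {f : V →ₗ[ℚ] W} (odd_V : ∀ x, dV (parity x) = -parity (dV x))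
    (odd_W : ∀ y, dW (parity y) = -parity (dW y)) (sq_zero_V : ∀ x, dV (dV x) = 0)
    (sq_zero_W : ∀ y, dW (dW y) = 0) (even : f ∘ₗ parity = parity ∘ₗ f)
    (chain : f ∘ₗ dV = dW ∘ₗ f) (hf : IsQuasiIso dV dW f) :
    IsQuasiIso (tensorDifferential dV) (tensorDifferential dW) (tensorMap f).toLinearMap := by
  obtain ⟨h⟩ := nonempty_homotopyInverse_of_isQuasiIso sq_zero_V sq_zero_W chain hf
  exact ((h.average odd_V odd_W even).tensor odd_V odd_W even chain
    (evenComponent_comp_parity h.inv) (oddComponent_parity h.leftHomotopy)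
    (oddComponent_parity h.rightHomotopy)).isQuasiIso

section DegreeScaling

open DirectSum

variable {X Y : DGVect}

/-- The action of the multiplicative group on a graded vector space, `r` acting by `r ^ n` in
degree `n`. A grading is recovered from this action as its weight spaces, see
`mem_grading_iff_degreeScaling`. -/
def degreeScaling (X : DGVect) (r : ℚˣ) : Module.End ℚ X.carrier :=
  DirectSum.toModule ℚ ℤ X.carrier (fun n => (r : ℚ) ^ n • (X.grading n).subtype) ∘ₗ
    (decomposeLinearEquiv X.grading).toLinearMap

theorem degreeScaling_of_mem (r : ℚˣ) {n : ℤ} {x : X.carrier} (hx : x ∈ X.grading n) :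
    degreeScaling X r x = (r : ℚ) ^ n • x := by
  lift x to X.grading n using hx
  simp [degreeScaling]

theorem grading_induction {motive : X.carrier → Prop} (hom : ∀ n, ∀ x ∈ X.grading n, motive x)
    (add : ∀ x y, motive x → motive y → motive (x + y)) (x : X.carrier) : motive x :=
  Decomposition.inductionOn X.grading (hom 0 0 (Submodule.zero_mem _)) (fun x => hom _ x x.2) add x

theorem map_comp_degreeScaling {φ : X.carrier →ₗ[ℚ] Y.carrier}
    (mem : ∀ n, ∀ x ∈ X.grading n, φ x ∈ Y.grading n) (r : ℚˣ) :
    φ ∘ₗ degreeScaling X r = degreeScaling Y r ∘ₗ φ := by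
  refine decompose_lhom_ext X.grading fun n => LinearMap.ext fun x => ?_
  simp [degreeScaling_of_mem r x.2, degreeScaling_of_mem r (mem n x x.2)]

theorem degreeScaling_bilinear {Z : DGVect} {μ : X.carrier →ₗ[ℚ] Y.carrier →ₗ[ℚ] Z.carrier}
    (mem : ∀ i j x y, x ∈ X.grading i → y ∈ Y.grading j → μ x y ∈ Z.grading (i + j))
    (r : ℚˣ) (x : X.carrier) (y : Y.carrier) :
    degreeScaling Z r (μ x y) = μ (degreeScaling X r x) (degreeScaling Y r y) := by
  induction x using grading_induction with
  | add x x' hx hx' => simp only [map_add, LinearMap.add_apply, hx, hx']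
  | hom i x hx =>
    induction y using grading_induction with
    | add y y' hy hy' => simp only [map_add, hy, hy']
    | hom j y hy =>
      simp only [degreeScaling_of_mem r hx, degreeScaling_of_mem r hy,
        degreeScaling_of_mem r (mem i j x y hx hy), zpow_add₀ r.ne_zero, map_smul,
        LinearMap.smul_apply, smul_smul, mul_comm]

theorem differential_degreeScaling (r : ℚˣ) (x : X.carrier) :
    X.d (degreeScaling X r x) = (r : ℚ) • degreeScaling X r (X.d x) := by
  induction x using grading_induction with
  | add x y hx hy => simp only [map_add, hx, hy, smul_add]
  | hom n x hx =>
    rw [degreeScaling_of_mem r hx, degreeScaling_of_mem r (X.d_mem n x hx), map_smul, smul_smul,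
      ← zpow_one_add₀ r.ne_zero, add_sub_cancel]

theorem degreeScaling_mul (r s : ℚˣ) :
    degreeScaling X r * degreeScaling X s = degreeScaling X (r * s) := by
  ext x
  induction x using grading_induction with
  | add x y hx hy => simp only [map_add, hx, hy]
  | hom n x hx =>
    simp only [Module.End.mul_apply, degreeScaling_of_mem _ hx, map_smul, smul_smul,
      Units.val_mul, mul_zpow, mul_comm]

theorem degreeScaling_one : degreeScaling X 1 = 1 := by
  ext x
  induction x using grading_induction with
  | add x y hx hy => simp only [map_add, hx, hy]
  | hom n x hx => simp [degreeScaling_of_mem _ hx]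

theorem decompose_degreeScaling (r : ℚˣ) (m : ℤ) (x : X.carrier) :
    (decompose X.grading (degreeScaling X r x) m : X.carrier) =
      (r : ℚ) ^ m • (decompose X.grading x m : X.carrier) := by
  induction x using grading_induction with
  | add x y hx hy => simp only [map_add, decompose_add, DirectSum.add_apply, Submodule.coe_add, hx,
      hy, smul_add]
  | hom n x hx =>
    rw [degreeScaling_of_mem r hx, decompose_smul, DirectSum.smul_apply, Submodule.coe_smul]
    rcases eq_or_ne n m with rfl | hnm
    · rfl
    · rw [decompose_of_mem_ne X.grading hx hnm, smul_zero, smul_zero]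

theorem two_zpow_injective : Function.Injective fun n : ℤ => (2 : ℚ) ^ n :=
  zpow_right_injective₀ two_pos (by norm_num)

theorem mem_grading_iff_degreeScaling {n : ℤ} {x : X.carrier} :
    x ∈ X.grading n ↔ ∀ r : ℚˣ, degreeScaling X r x = (r : ℚ) ^ n • x := by
  refine ⟨fun hx r => degreeScaling_of_mem r hx, fun hx => ?_⟩
  classical
  rw [← sum_support_decompose X.grading x]
  refine Submodule.sum_mem _ fun m hm => ?_
  suffices m = n from this ▸ SetLike.coe_mem _
  have eigen := decompose_degreeScaling (Units.mk0 2 two_ne_zero) m x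
  rw [hx, decompose_smul, DirectSum.smul_apply, Submodule.coe_smul] at eigen
  have nonzero : (decompose X.grading x m : X.carrier) ≠ 0 := by simpa using hm
  exact two_zpow_injective (smul_left_injective ℚ nonzero eigen).symm

end DegreeScaling

section Parity

variable {X : DGVect}

instance (X : DGVect) : SuperSpace X.carrier where
  parity := degreeScaling X (-1)
  parity_mul_self := by rw [degreeScaling_mul, neg_one_mul, neg_neg, degreeScaling_one]

theorem parity_of_mem {n : ℤ} {x : X.carrier} (hx : x ∈ X.grading n) :
    parity x = (-1 : ℚ) ^ n • x :=
  degreeScaling_of_mem _ hx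

theorem differential_parity (x : X.carrier) : X.d (parity x) = -parity (X.d x) :=
  (differential_degreeScaling (-1) x).trans (neg_one_smul ℚ _)

theorem hasParity_grading_induction {i : ℕ} {motive : X.carrier → Prop}
    (hom : ∀ n : ℤ, (-1 : ℚ) ^ n = (-1) ^ i → ∀ x ∈ X.grading n, motive x)
    (add : ∀ x y, motive x → motive y → motive (x + y)) {x : X.carrier} (hx : HasParity i x) :
    motive x := by
  have projection (x : X.carrier) : motive ((2⁻¹ : ℚ) • (x + (-1 : ℚ) ^ i • parity x)) := by
    induction x using grading_induction with
    | add x y hx hy =>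
      convert add _ _ hx hy using 1
      simp only [map_add]
      module
    | hom n x hx =>
      rw [parity_of_mem hx]
      rcases eq_or_ne ((-1 : ℚ) ^ n) ((-1) ^ i) with h | h
      · refine hom n h _ (Submodule.smul_mem _ _ (Submodule.add_mem _ hx ?_))
        exact Submodule.smul_mem _ _ (Submodule.smul_mem _ _ hx)
      · have opposite : (-1 : ℚ) ^ i * (-1) ^ n = -1 := by
          rcases i.even_or_odd with hi | hi <;> rcases n.even_or_odd with hn | hn <;>
            simp_all [Odd.neg_one_pow, Even.neg_one_zpow, Odd.neg_one_zpow]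
        rw [smul_smul, opposite, neg_one_smul, add_neg_cancel, smul_zero]
        exact hom i (zpow_natCast _ _) 0 (Submodule.zero_mem _)
  have fixed := projection x
  rwa [hx.eq, smul_smul, ← mul_pow, neg_one_mul, neg_neg, one_pow, one_smul, ← two_smul ℚ,
    smul_smul, inv_mul_cancel₀ two_ne_zero, one_smul] at fixed

theorem parity_pow_of_mem {i : ℕ} {n j : ℤ} (hn : (-1 : ℚ) ^ n = (-1) ^ i) {y : X.carrier}
    (hy : y ∈ X.grading j) : (parity ^ i) y = (-1 : ℚ) ^ (n * j) • y := by
  have sign : (-1 : ℚ) ^ (n * j) = ((-1) ^ j) ^ i := by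
    rw [zpow_mul, hn, ← zpow_natCast, ← zpow_natCast, zpow_comm]
  rw [sign]
  clear hn sign
  induction i with
  | zero => simp
  | succ i ih => rw [pow_succ', Module.End.mul_apply, ih, map_smul, parity_of_mem hy, smul_smul,
      pow_succ]

end Parity

/-- A dg Lie algebra over `ℚ`, graded by all integers. -/
structure UnboundedDGLie extends DGVect where
  bracket : carrier →ₗ[ℚ] carrier →ₗ[ℚ] carrier
  bracket_mem : ∀ (i j : ℤ) (x y : carrier), x ∈ grading i → y ∈ grading j →
    bracket x y ∈ grading (i + j)
  antisymm : ∀ (i j : ℤ) (x y : carrier), x ∈ grading i → y ∈ grading j →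
    bracket x y = (-((-1 : ℚ) ^ (i * j))) • bracket y x
  jacobi : ∀ (i j : ℤ) (x y z : carrier), x ∈ grading i → y ∈ grading j →
    bracket x (bracket y z)
      = bracket (bracket x y) z + ((-1 : ℚ) ^ (i * j)) • bracket y (bracket x z)
  leibniz : ∀ (i : ℤ) (x y : carrier), x ∈ grading i →
    d (bracket x y) = bracket (d x) y + ((-1 : ℚ) ^ i) • bracket x (d y)

section UnboundedDGLie

instance (g : UnboundedDGLie) : SuperLie g.carrier where
  superBracket := g.bracket
  parity_superBracket := degreeScaling_bilinear g.bracket_mem (-1)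
  superBracket_antisymm {i x} hx y := by
    refine hasParity_grading_induction (motive := fun x => g.bracket x y =
      -g.bracket ((parity ^ i) y) x) (fun n hn x hx => ?_) (fun x x' hx hx' => ?_) hx
    · induction y using grading_induction with
      | add y y' hy hy' => simp only [map_add, LinearMap.add_apply, hy, hy', neg_add]
      | hom j y hy =>
        rw [parity_pow_of_mem hn hy, g.antisymm n j x y hx hy, map_smul, LinearMap.smul_apply,
          neg_smul]
    · simp only [map_add, LinearMap.add_apply, hx, hx', neg_add]
  superBracket_jacobi {i x} hx y z := by
    refine hasParity_grading_induction (motive := fun x => g.bracket x (g.bracket y z) =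
      g.bracket (g.bracket x y) z + g.bracket ((parity ^ i) y) (g.bracket x z))
      (fun n hn x hx => ?_) (fun x x' hx hx' => ?_) hx
    · induction y using grading_induction with
      | add y y' hy hy' => simp only [map_add, LinearMap.add_apply, hy, hy']; abel
      | hom j y hy =>
        rw [parity_pow_of_mem hn hy, g.jacobi n j x y z hx hy, map_smul, LinearMap.smul_apply]
    · simp only [map_add, LinearMap.add_apply, hx, hx']
      abel

theorem differential_superBracket {g : UnboundedDGLie} (x y : g.carrier) :
    g.d (superBracket x y) = superBracket (g.d x) y + superBracket (parity x) (g.d y) := by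
  induction x using grading_induction with
  | add x x' hx hx' => simp only [map_add, LinearMap.add_apply, hx, hx']; abel
  | hom n x hx =>
    rw [parity_of_mem hx, map_smul, LinearMap.smul_apply]
    exact g.leibniz n x y hx

end UnboundedDGLie

section PBWIdeal

variable {L : Type*} [AddCommGroup L] [Module ℚ L] [SuperSpace L] [SuperLie L]

variable (L) in
/-- The largest two-sided ideal of the tensor algebra on which `pbwSection` vanishes. It contains
the relations `x y - (-1)^{|x||y|} y x - [x, y]`, and `pbwSection` descends to its quotient. -/
def pbwIdeal : Ideal (𝓣 L) where
  carrier := {u | ∀ a b, pbwSection L (a * u * b) = 0}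
  add_mem' hu hw a b := by rw [mul_add, add_mul, map_add, hu, hw, add_zero]
  zero_mem' a b := by rw [mul_zero, zero_mul, map_zero]
  smul_mem' c u hu a b := by rw [smul_eq_mul, ← mul_assoc, hu]

instance : (pbwIdeal L).IsTwoSided where
  mul_mem_of_left c hu a b := by rw [← mul_assoc, mul_assoc, hu]

theorem pbwSection_of_mem_pbwIdeal {u : 𝓣 L} (hu : u ∈ pbwIdeal L) : pbwSection L u = 0 := by
  simpa using hu 1 1

theorem superBracket_sub_mem_pbwIdeal (x y : L) :
    superBracket (ι ℚ x) (ι ℚ y) - ι ℚ (superBracket x y) ∈ pbwIdeal L := fun a b => by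
  rw [mul_sub, sub_mul, map_sub, pbwSection_mul_superBracket_mul, sub_self]

theorem tensorMap_mem_pbwIdeal {k k' : L →ₗ[ℚ] L} (even : k ∘ₗ parity = parity ∘ₗ k)
    (bracket : ∀ x y, k (superBracket x y) = superBracket (k x) (k y))
    (right_inv : k ∘ₗ k' = LinearMap.id) {u : 𝓣 L} (hu : u ∈ pbwIdeal L) :
    tensorMap k u ∈ pbwIdeal L := fun a b => by
  have surjective (a : 𝓣 L) : tensorMap k (tensorMap k' a) = a := by
    have comp : (tensorMap k).comp (tensorMap k') = AlgHom.id ℚ (𝓣 L) := by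
      ext x
      simpa using congr(ι ℚ ($right_inv x))
    exact AlgHom.congr_fun comp a
  rw [← surjective a, ← surjective b, ← map_mul, ← map_mul, pbwSection_tensorMap even bracket, hu,
    map_zero]

theorem tensorDifferential_mem_pbwIdeal {d : Module.End ℚ L}
    (odd : ∀ x, d (parity x) = -parity (d x))
    (leibniz : ∀ x y, d (superBracket x y) = superBracket (d x) y + superBracket (parity x) (d y))
    {u : 𝓣 L} (hu : u ∈ pbwIdeal L) : tensorDifferential d u ∈ pbwIdeal L := fun a b => by
  have parity_mem : parity u ∈ pbwIdeal L :=
    tensorMap_mem_pbwIdeal rfl parity_superBracket parity_mul_self hu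
  have leibniz_middle : a * tensorDifferential d u * b =
      tensorDifferential d (parity a * u * b) - tensorDifferential d (parity a) * u * b
        - a * parity u * tensorDifferential d b := by
    simp only [tensorDifferential_mul, parity_mul, parity_parity]
    noncomm_ring
  rw [leibniz_middle, map_sub, map_sub, pbwSection_tensorDifferential odd leibniz, hu, hu,
    parity_mem, map_zero, sub_zero, sub_zero]

end PBWIdeal

section QuotientLift

variable {A M : Type*} [Ring A] [Algebra ℚ A] [AddCommGroup M] [Module ℚ M]

/-- The linear map on a quotient algebra induced by a linear map vanishing on the ideal. -/
def quotientLift (I : Ideal A) [I.IsTwoSided] (F : A →ₗ[ℚ] M) (hF : ∀ u ∈ I, F u = 0) :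
    A ⧸ I →ₗ[ℚ] M :=
  (I.restrictScalars ℚ).liftQ F hF ∘ₗ (Submodule.Quotient.restrictScalarsEquiv ℚ I).symm

end QuotientLift

section WeightSpace

variable {M : Type*} [AddCommGroup M] [Module ℚ M]

/-- The weight spaces of a family of operators indexed by the multiplicative group. -/
def weightSpace (τ : ℚˣ → Module.End ℚ M) (n : ℤ) : Submodule ℚ M :=
  ⨅ r : ℚˣ, (τ r).eigenspace ((r : ℚ) ^ n)

theorem mem_weightSpace {τ : ℚˣ → Module.End ℚ M} {n : ℤ} {x : M} :
    x ∈ weightSpace τ n ↔ ∀ r, τ r x = (r : ℚ) ^ n • x := by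
  simp [weightSpace, Submodule.mem_iInf]

theorem iSupIndep_weightSpace (τ : ℚˣ → Module.End ℚ M) : iSupIndep (weightSpace τ) :=
  ((τ (Units.mk0 2 two_ne_zero)).eigenspaces_iSupIndep.comp two_zpow_injective).mono
    fun _ => iInf_le _ _

end WeightSpace

section EnvelopingQuotient

variable (g : UnboundedDGLie)

/-- The algebra underlying the model of the enveloping algebra. -/
abbrev EnvelopingQuotient : Type := 𝓣 g.carrier ⧸ pbwIdeal g.carrier

/-- The projection of the tensor algebra onto the model of the enveloping algebra. -/
def envelopingMk : 𝓣 g.carrier →ₐ[ℚ] EnvelopingQuotient g := Ideal.Quotient.mkₐ ℚ _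

theorem envelopingMk_surjective : Function.Surjective (envelopingMk g) :=
  Ideal.Quotient.mkₐ_surjective ℚ _

variable {g}

theorem degreeScaling_superBracket (r : ℚˣ) (x y : g.carrier) :
    degreeScaling g.toDGVect r (superBracket x y) =
      superBracket (degreeScaling g.toDGVect r x) (degreeScaling g.toDGVect r y) :=
  degreeScaling_bilinear g.bracket_mem r x y

theorem degreeScaling_comp_parity {X : DGVect} (r : ℚˣ) :
    degreeScaling X r ∘ₗ parity = parity ∘ₗ degreeScaling X r :=
  (degreeScaling_mul r (-1)).trans ((mul_comm r (-1)).symm ▸ (degreeScaling_mul (-1) r).symm)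

theorem tensorMap_degreeScaling_mem_pbwIdeal (r : ℚˣ) {u : 𝓣 g.carrier}
    (hu : u ∈ pbwIdeal g.carrier) :
    tensorMap (degreeScaling g.toDGVect r) u ∈ pbwIdeal g.carrier :=
  tensorMap_mem_pbwIdeal (k' := degreeScaling g.toDGVect r⁻¹) (degreeScaling_comp_parity r)
    (degreeScaling_superBracket r)
    ((degreeScaling_mul r r⁻¹).trans ((mul_inv_cancel r).symm ▸ degreeScaling_one)) hu

variable (g) in
/-- The action of the multiplicative group on the model of the enveloping algebra. -/
def envelopingScaling (r : ℚˣ) : EnvelopingQuotient g →ₐ[ℚ] EnvelopingQuotient g :=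
  Ideal.quotientMapₐ _ (tensorMap (degreeScaling g.toDGVect r))
    fun _ hu => tensorMap_degreeScaling_mem_pbwIdeal r hu

theorem envelopingScaling_mk (r : ℚˣ) (u : 𝓣 g.carrier) :
    envelopingScaling g r (envelopingMk g u) =
      envelopingMk g (tensorMap (degreeScaling g.toDGVect r) u) := rfl

theorem envelopingMk_eq_zero {u : 𝓣 g.carrier} (hu : u ∈ pbwIdeal g.carrier) :
    envelopingMk g u = 0 :=
  Ideal.Quotient.eq_zero_iff_mem.mpr hu

variable (g) in
/-- The differential of the model of the enveloping algebra. -/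
def envelopingDifferential : Module.End ℚ (EnvelopingQuotient g) :=
  quotientLift _ ((envelopingMk g).toLinearMap ∘ₗ tensorDifferential g.d) fun _ hu =>
    envelopingMk_eq_zero
      (tensorDifferential_mem_pbwIdeal differential_parity differential_superBracket hu)

theorem envelopingDifferential_mk (u : 𝓣 g.carrier) :
    envelopingDifferential g (envelopingMk g u) = envelopingMk g (tensorDifferential g.d u) := rfl

theorem tensorDifferential_tensorMap_degreeScaling {X : DGVect} (r : ℚˣ) (u : 𝓣 X.carrier) :
    tensorDifferential X.d (tensorMap (degreeScaling X r) u) =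
      (r : ℚ) • tensorMap (degreeScaling X r) (tensorDifferential X.d u) := by
  refine LinearMap.congr_fun
    (f := tensorDifferential X.d ∘ₗ (tensorMap (degreeScaling X r)).toLinearMap)
    (g := (r : ℚ) • (tensorMap (degreeScaling X r)).toLinearMap ∘ₗ tensorDifferential X.d) ?_ u
  refine tensorAlgebra_linearMap_ext (by simp [tensorDifferential_one]) fun i x u _ hu => ?_
  have even := LinearMap.congr_fun (degreeScaling_comp_parity r) x
  simp only [LinearMap.comp_apply, LinearMap.smul_apply, AlgHom.toLinearMap_apply] at hu even ⊢
  simp only [map_mul, tensorMap_ι, tensorDifferential_ι_mul, hu, differential_degreeScaling, even,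
    map_add, map_smul, smul_mul_assoc, mul_smul_comm, smul_add]

theorem envelopingDifferential_scaling (r : ℚˣ) (x : EnvelopingQuotient g) :
    envelopingDifferential g (envelopingScaling g r x) =
      (r : ℚ) • envelopingScaling g r (envelopingDifferential g x) := by
  obtain ⟨u, rfl⟩ := envelopingMk_surjective g x
  simp only [envelopingScaling_mk, envelopingDifferential_mk,
    tensorDifferential_tensorMap_degreeScaling, map_smul]

theorem envelopingDifferential_mul (x y : EnvelopingQuotient g) :
    envelopingDifferential g (x * y) =
      envelopingDifferential g x * y + envelopingScaling g (-1) x * envelopingDifferential g y := by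
  obtain ⟨u, rfl⟩ := envelopingMk_surjective g x
  obtain ⟨w, rfl⟩ := envelopingMk_surjective g y
  rw [envelopingScaling_mk, envelopingDifferential_mk, envelopingDifferential_mk, ← map_mul,
    envelopingDifferential_mk, tensorDifferential_mul, map_add, map_mul, map_mul]
  rfl

end EnvelopingQuotient

section EnvelopingAlgebra

variable {g : UnboundedDGLie}

variable (g) in
/-- The grading of the model of the enveloping algebra. -/
def envelopingGrading : ℤ → Submodule ℚ (EnvelopingQuotient g) :=
  weightSpace fun r => (envelopingScaling g r).toLinearMap

theorem mem_envelopingGrading {n : ℤ} {x : EnvelopingQuotient g} :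
    x ∈ envelopingGrading g n ↔ ∀ r, envelopingScaling g r x = (r : ℚ) ^ n • x :=
  mem_weightSpace

theorem one_mem_envelopingGrading : 1 ∈ envelopingGrading g 0 :=
  mem_envelopingGrading.mpr fun r => by rw [map_one, zpow_zero, one_smul]

theorem mul_mem_envelopingGrading {i j : ℤ} {x y : EnvelopingQuotient g}
    (hx : x ∈ envelopingGrading g i) (hy : y ∈ envelopingGrading g j) :
    x * y ∈ envelopingGrading g (i + j) :=
  mem_envelopingGrading.mpr fun r => by
    rw [map_mul, mem_envelopingGrading.mp hx, mem_envelopingGrading.mp hy, smul_mul_smul_comm,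
      zpow_add₀ r.ne_zero]

theorem envelopingMk_ι_mem {n : ℤ} {x : g.carrier} (hx : x ∈ g.grading n) :
    envelopingMk g (ι ℚ x) ∈ envelopingGrading g n :=
  mem_envelopingGrading.mpr fun r => by
    rw [envelopingScaling_mk, tensorMap_ι, degreeScaling_of_mem r hx, map_smul, map_smul]

theorem envelopingDifferential_mem {n : ℤ} {x : EnvelopingQuotient g}
    (hx : x ∈ envelopingGrading g n) : envelopingDifferential g x ∈ envelopingGrading g (n - 1) :=
  mem_envelopingGrading.mpr fun r => by
    have scaled := envelopingDifferential_scaling r x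
    rw [mem_envelopingGrading.mp hx, map_smul] at scaled
    rw [sub_eq_neg_add, zpow_add₀ r.ne_zero, zpow_neg_one, mul_smul, scaled,
      inv_smul_smul₀ r.ne_zero]

theorem iSup_envelopingGrading : ⨆ n, envelopingGrading g n = ⊤ := by
  refine eq_top_iff.mpr fun x _ => ?_
  obtain ⟨u, rfl⟩ := envelopingMk_surjective g x
  refine tensorAlgebra_span_induction
    ((⨆ n, envelopingGrading g n).comap (envelopingMk g).toLinearMap)
    (Submodule.mem_iSup_of_mem 0 (map_one (envelopingMk g) ▸ one_mem_envelopingGrading))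
    (fun x u hu => ?_) u
  simp only [Submodule.mem_comap, AlgHom.toLinearMap_apply, map_mul] at hu ⊢
  generalize envelopingMk g u = z at hu ⊢
  induction x using grading_induction with
  | add x y hx hy => simpa only [map_add, add_mul] using add_mem hx hy
  | hom i x hx =>
    induction hu using Submodule.iSup_induction' with
    | zero => simp
    | add z w _ _ hz hw => simpa only [mul_add] using add_mem hz hw
    | mem j z hz =>
      exact Submodule.mem_iSup_of_mem (i + j)
        (mul_mem_envelopingGrading (envelopingMk_ι_mem hx) hz)

variable (g) in
/-- The model of the universal enveloping dg algebra of `g`, the quotient of the tensor algebra by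
`pbwIdeal`. -/
def envelopingAlgebra : DGAlgebra where
  carrier := EnvelopingQuotient g
  grading := envelopingGrading g
  isDecomp := (DirectSum.isInternal_submodule_of_iSupIndep_of_iSup_eq_top
    (iSupIndep_weightSpace _) iSup_envelopingGrading).chooseDecomposition
  d := envelopingDifferential g
  d_mem _ _ hx := envelopingDifferential_mem hx
  d_sq := LinearMap.ext fun x => by
    obtain ⟨u, rfl⟩ := envelopingMk_surjective g x
    rw [LinearMap.comp_apply, envelopingDifferential_mk, envelopingDifferential_mk,
      tensorDifferential_tensorDifferential differential_parity (LinearMap.congr_fun g.d_sq),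
      map_zero, LinearMap.zero_apply]
  mul := LinearMap.mul ℚ _
  one := 1
  one_mem := one_mem_envelopingGrading
  mul_mem _ _ _ _ hx hy := mul_mem_envelopingGrading hx hy
  mul_assoc' := mul_assoc
  one_mul' := one_mul
  mul_one' := mul_one
  leibniz i x y hx := by
    simp only [LinearMap.mul_apply', envelopingDifferential_mul, mem_envelopingGrading.mp hx,
      smul_mul_assoc, Units.val_neg, Units.val_one]

end EnvelopingAlgebra

/-- A morphism of unbounded dg Lie algebras. -/
def IsUnboundedDGLieHom (g h : UnboundedDGLie) (f : g.carrier →ₗ[ℚ] h.carrier) : Prop :=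
  (∀ (n : ℤ), ∀ x ∈ g.grading n, f x ∈ h.grading n) ∧
  f.comp g.d = h.d.comp f ∧
  ∀ x y : g.carrier, f (g.bracket x y) = h.bracket (f x) (f y)

/-- A dg Lie algebra map from `g` into the graded commutator of a dg algebra `A`. -/
def IsUnboundedLieToAlgHom (g : UnboundedDGLie) (A : DGAlgebra) (φ : g.carrier →ₗ[ℚ] A.carrier) :
    Prop :=
  (∀ (n : ℤ), ∀ x ∈ g.grading n, φ x ∈ A.grading n) ∧
  φ.comp g.d = A.d.comp φ ∧
  ∀ (i j : ℤ) (x y : g.carrier), x ∈ g.grading i → y ∈ g.grading j →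
    φ (g.bracket x y) = A.mul (φ x) (φ y) - ((-1 : ℚ) ^ (i * j)) • A.mul (φ y) (φ x)

/-- A universal enveloping dg algebra of an unbounded dg Lie algebra, given by its universal
property as in `UEnvData`. -/
structure UnboundedUEnvData (g : UnboundedDGLie) where
  alg : DGAlgebra
  ι : g.carrier →ₗ[ℚ] alg.carrier
  ι_lie : IsUnboundedLieToAlgHom g alg ι
  univ : ∀ (A : DGAlgebra) (φ : g.carrier →ₗ[ℚ] A.carrier), IsUnboundedLieToAlgHom g A φ →
    ∃! F : DGAlgebraHom alg A, F.toLinearMap.comp ι = φ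

section DGAlgebra

instance (A : DGAlgebra) : Ring A.carrier where
  __ := A.isAddCommGroup
  mul x y := A.mul x y
  one := A.one
  mul_assoc := A.mul_assoc'
  one_mul := A.one_mul'
  mul_one := A.mul_one'
  left_distrib x := map_add (A.mul x)
  right_distrib := A.mul.map_add₂
  zero_mul := A.mul.map_zero₂
  mul_zero x := map_zero (A.mul x)
  zsmul := A.isAddCommGroup.zsmul
  zsmul_zero' := A.isAddCommGroup.zsmul_zero'
  zsmul_succ' := A.isAddCommGroup.zsmul_succ'
  zsmul_neg' := A.isAddCommGroup.zsmul_neg'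
  neg_add_cancel := A.isAddCommGroup.neg_add_cancel

instance (A : DGAlgebra) : Algebra ℚ A.carrier :=
  Algebra.ofModule (fun r x y => A.mul.map_smul₂ r x y) fun r x y => map_smul (A.mul x) r y

variable {A B : DGAlgebra}

theorem differential_mul (x y : A.carrier) : A.d (x * y) = A.d x * y + parity x * A.d y := by
  induction x using grading_induction with
  | add x x' hx hx' => simp only [map_add, add_mul, hx, hx']; abel
  | hom n x hx =>
    rw [parity_of_mem hx, smul_mul_assoc]
    exact A.leibniz n x y hx

theorem differential_one : A.d 1 = 0 := by
  have parity_one : parity (1 : A.carrier) = 1 :=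
    (parity_of_mem A.one_mem).trans (one_smul ℚ A.one)
  simpa [parity_one] using differential_mul (1 : A.carrier) 1

/-- The algebra map underlying a morphism of dg algebras. -/
def toAlgHom (F : DGAlgebraHom A B) : A.carrier →ₐ[ℚ] B.carrier :=
  AlgHom.ofLinearMap F.toLinearMap F.map_one F.map_mul

end DGAlgebra

section LiftToDGAlgebra

variable {g : UnboundedDGLie} {A : DGAlgebra} {φ : g.carrier →ₗ[ℚ] A.carrier}

theorem IsUnboundedLieToAlgHom.isSuperRep (hφ : IsUnboundedLieToAlgHom g A φ) : IsSuperRep φ := by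
  intro i x y hx
  refine hasParity_grading_induction (motive := fun x => φ (g.bracket x y) =
      φ x * φ y - φ ((parity ^ i) y) * φ x) (fun n hn x hx => ?_) (fun x x' hx hx' => ?_) hx
  · induction y using grading_induction with
    | add y y' hy hy' => simp only [map_add, mul_add, add_mul, hy, hy']; abel
    | hom j y hy =>
      rw [parity_pow_of_mem hn hy, map_smul, smul_mul_assoc]
      exact hφ.2.2 n j x y hx hy
  · simp only [map_add, LinearMap.add_apply, mul_add, add_mul, hx, hx']
    abel

theorem IsUnboundedLieToAlgHom.lift_degreeScaling (hφ : IsUnboundedLieToAlgHom g A φ) (r : ℚˣ)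
    (u : 𝓣 g.carrier) :
    TensorAlgebra.lift ℚ φ (tensorMap (degreeScaling g.toDGVect r) u) =
      degreeScaling A.toDGVect r (TensorAlgebra.lift ℚ φ u) := by
  refine LinearMap.congr_fun
    (f := (TensorAlgebra.lift ℚ φ).toLinearMap ∘ₗ
      (tensorMap (degreeScaling g.toDGVect r)).toLinearMap)
    (g := degreeScaling A.toDGVect r ∘ₗ (TensorAlgebra.lift ℚ φ).toLinearMap) ?_ u
  refine tensorAlgebra_linearMap_ext ?_ fun i x u _ hu => ?_
  · simp only [LinearMap.comp_apply, AlgHom.toLinearMap_apply, map_one]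
    exact ((degreeScaling_of_mem r A.one_mem).trans (zpow_zero (r : ℚ) ▸ one_smul ℚ A.one)).symm
  · have scaling_x := LinearMap.congr_fun (map_comp_degreeScaling hφ.1 r) x
    have scaling_mul (a b : A.carrier) := degreeScaling_bilinear A.mul_mem r a b
    simp only [LinearMap.comp_apply, AlgHom.toLinearMap_apply] at hu scaling_x ⊢
    rw [map_mul, map_mul, map_mul, tensorMap_ι, TensorAlgebra.lift_ι_apply,
      TensorAlgebra.lift_ι_apply, hu, scaling_x]
    exact (scaling_mul _ _).symm

theorem IsUnboundedLieToAlgHom.lift_tensorDifferential (hφ : IsUnboundedLieToAlgHom g A φ)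
    (u : 𝓣 g.carrier) :
    TensorAlgebra.lift ℚ φ (tensorDifferential g.d u) = A.d (TensorAlgebra.lift ℚ φ u) := by
  refine LinearMap.congr_fun
    (f := (TensorAlgebra.lift ℚ φ).toLinearMap ∘ₗ tensorDifferential g.d)
    (g := A.d ∘ₗ (TensorAlgebra.lift ℚ φ).toLinearMap) ?_ u
  refine tensorAlgebra_linearMap_ext (by simp [differential_one]) fun i x u _ hu => ?_
  have parity_x := LinearMap.congr_fun (map_comp_degreeScaling hφ.1 (-1)) x
  have chain_x := LinearMap.congr_fun hφ.2.1 x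
  simp only [LinearMap.comp_apply, AlgHom.toLinearMap_apply] at hu parity_x chain_x ⊢
  rw [tensorDifferential_ι_mul, map_add, map_mul, map_mul, map_mul, TensorAlgebra.lift_ι_apply,
    TensorAlgebra.lift_ι_apply, TensorAlgebra.lift_ι_apply, hu, chain_x, differential_mul, add_comm]
  exact congr(_ + $parity_x * _)

/-- The algebra map from the model of the enveloping algebra induced by a dg Lie algebra map. -/
def envelopingLift (hφ : IsUnboundedLieToAlgHom g A φ) : EnvelopingQuotient g →ₐ[ℚ] A.carrier :=
  Ideal.Quotient.liftₐ _ (TensorAlgebra.lift ℚ φ) fun u hu => by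
    rw [← hφ.isSuperRep.lift_pbwSection, pbwSection_of_mem_pbwIdeal hu, map_zero]

theorem envelopingLift_mk (hφ : IsUnboundedLieToAlgHom g A φ) (u : 𝓣 g.carrier) :
    envelopingLift hφ (envelopingMk g u) = TensorAlgebra.lift ℚ φ u := rfl

theorem envelopingLift_mem (hφ : IsUnboundedLieToAlgHom g A φ) {n : ℤ} {x : EnvelopingQuotient g}
    (hx : x ∈ envelopingGrading g n) : envelopingLift hφ x ∈ A.grading n :=
  mem_grading_iff_degreeScaling.mpr fun r => by
    rw [← map_smul, ← mem_envelopingGrading.mp hx r]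
    obtain ⟨u, rfl⟩ := envelopingMk_surjective g x
    rw [envelopingScaling_mk, envelopingLift_mk, envelopingLift_mk, hφ.lift_degreeScaling]

/-- `envelopingLift` as a morphism of dg algebras. -/
def envelopingDGLift (hφ : IsUnboundedLieToAlgHom g A φ) :
    DGAlgebraHom (envelopingAlgebra g) A where
  toLinearMap := (envelopingLift hφ).toLinearMap
  mem _ _ hx := envelopingLift_mem hφ hx
  chain := LinearMap.ext fun x => by
    obtain ⟨u, rfl⟩ := envelopingMk_surjective g x
    exact hφ.lift_tensorDifferential u
  map_one := map_one (envelopingLift hφ)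
  map_mul := map_mul (envelopingLift hφ)

end LiftToDGAlgebra

theorem isQuasiIso_of_retract {V W V' W' : Type} [AddCommGroup V] [Module ℚ V] [AddCommGroup W]
    [Module ℚ W] [AddCommGroup V'] [Module ℚ V'] [AddCommGroup W'] [Module ℚ W']
    {dV : Module.End ℚ V} {dW : Module.End ℚ W} {dV' : Module.End ℚ V'} {dW' : Module.End ℚ W'}
    {f : V →ₗ[ℚ] W} {f' : V' →ₗ[ℚ] W'} (hf' : IsQuasiIso dV' dW' f')
    {sV : V →ₗ[ℚ] V'} {pV : V' →ₗ[ℚ] V} {sW : W →ₗ[ℚ] W'} {pW : W' →ₗ[ℚ] W}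
    (chain_sV : ∀ x, sV (dV x) = dV' (sV x)) (chain_pV : ∀ x, pV (dV' x) = dV (pV x))
    (chain_sW : ∀ x, sW (dW x) = dW' (sW x)) (chain_pW : ∀ x, pW (dW' x) = dW (pW x))
    (comm_s : ∀ x, f' (sV x) = sW (f x)) (comm_p : ∀ x, pW (f' x) = f (pV x))
    (retract_V : ∀ x, pV (sV x) = x) (retract_W : ∀ x, pW (sW x) = x) : IsQuasiIso dV dW f := by
  refine ⟨fun x hx ⟨y, hy⟩ => ?_, fun w hw => ?_⟩
  · obtain ⟨z, hz⟩ := hf'.1 (sV x) (by rw [← chain_sV, hx, map_zero])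
      ⟨sW y, by rw [comm_s, hy, chain_sW]⟩
    exact ⟨pV z, by rw [← chain_pV, ← hz, retract_V]⟩
  · obtain ⟨x, hx, y, hy⟩ := hf'.2 (sW w) (by rw [← chain_sW, hw, map_zero])
    refine ⟨pV x, by rw [← chain_pV, hx, map_zero], pW y, ?_⟩
    rw [← chain_pW, ← hy, map_sub, retract_W, comm_p]

section Comparison

variable {g h : UnboundedDGLie}

theorem isUnboundedLieToAlgHom_envelopingMk :
    IsUnboundedLieToAlgHom g (envelopingAlgebra g) ((envelopingMk g).toLinearMap ∘ₗ ι ℚ) := by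
  refine ⟨fun n x hx => envelopingMk_ι_mem hx, LinearMap.ext fun x => ?_, fun i j x y hx hy => ?_⟩
  · exact congr(envelopingMk g $((tensorDifferential_ι g.d x).symm))
  · have sign : (-1 : ℚ) ^ i = (-1) ^ i.natAbs := by
      rw [← zpow_natCast, Int.natCast_natAbs]
      rcases abs_choice i with h | h <;> simp [h, ← inv_zpow]
    have hx' : HasParity i.natAbs (ι ℚ x) :=
      HasParity.letter ((parity_of_mem hx).trans (by rw [sign]))
    have relation := envelopingMk_eq_zero (superBracket_sub_mem_pbwIdeal x y)
    rw [superBracket_tensorAlgebra hx', parity_pow_ι, parity_pow_of_mem sign hy, map_sub,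
      sub_eq_zero, map_sub, map_mul, map_mul, map_smul, map_smul, smul_mul_assoc] at relation
    exact relation.symm

namespace UnboundedUEnvData

variable (U : UnboundedUEnvData g) (U' : UnboundedUEnvData h)

/-- The projection of the tensor algebra onto the enveloping algebra. -/
def proj : 𝓣 g.carrier →ₐ[ℚ] U.alg.carrier := TensorAlgebra.lift ℚ U.ι

/-- The comparison map from the enveloping algebra to its model. -/
def toModel : DGAlgebraHom U.alg (envelopingAlgebra g) :=
  (U.univ _ _ isUnboundedLieToAlgHom_envelopingMk).choose

theorem toModel_ι (x : g.carrier) :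
    U.toModel.toLinearMap (U.ι x) = envelopingMk g (TensorAlgebra.ι ℚ x) :=
  LinearMap.congr_fun (U.univ _ _ isUnboundedLieToAlgHom_envelopingMk).choose_spec.1 x

theorem toModel_proj (u : 𝓣 g.carrier) :
    U.toModel.toLinearMap (U.proj u) = envelopingMk g u := by
  refine LinearMap.congr_fun (f := U.toModel.toLinearMap ∘ₗ U.proj.toLinearMap)
    (g := (envelopingMk g).toLinearMap) ?_ u
  refine tensorAlgebra_linearMap_ext ?_ fun _ x u _ hu => ?_
  · exact congr(U.toModel.toLinearMap $(map_one U.proj)).trans U.toModel.map_one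
  · have letter : U.toModel.toLinearMap (U.proj (TensorAlgebra.ι ℚ x)) =
        envelopingMk g (TensorAlgebra.ι ℚ x) :=
      congr(U.toModel.toLinearMap $(TensorAlgebra.lift_ι_apply U.ι x)).trans (U.toModel_ι x)
    have product : U.toModel.toLinearMap (U.proj (TensorAlgebra.ι ℚ x) * U.proj u) =
        envelopingMk g (TensorAlgebra.ι ℚ x) * envelopingMk g u :=
      (U.toModel.map_mul _ _).trans congr((envelopingAlgebra g).mul $letter $hu)
    exact (congr(U.toModel.toLinearMap $(map_mul U.proj _ _)).trans product).trans
      (map_mul (envelopingMk g) _ _).symm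

theorem envelopingLift_toModel (x : U.alg.carrier) :
    envelopingLift U.ι_lie (U.toModel.toLinearMap x) = x := by
  let retraction := envelopingDGLift U.ι_lie
  let roundtrip : DGAlgebraHom U.alg U.alg :=
    { toLinearMap := retraction.toLinearMap ∘ₗ U.toModel.toLinearMap
      mem := fun n x hx => retraction.mem n _ (U.toModel.mem n x hx)
      chain := by
        rw [LinearMap.comp_assoc, U.toModel.chain, ← LinearMap.comp_assoc, retraction.chain,
          LinearMap.comp_assoc]
      map_one := congr(retraction.toLinearMap $(U.toModel.map_one)).trans retraction.map_one
      map_mul := fun x y =>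
        congr(retraction.toLinearMap $(U.toModel.map_mul x y)).trans (retraction.map_mul _ _) }
  let identity : DGAlgebraHom U.alg U.alg :=
    ⟨LinearMap.id, fun _ _ hx => hx, rfl, rfl, fun _ _ => rfl⟩
  have roundtrip_ι : roundtrip.toLinearMap ∘ₗ U.ι = U.ι := LinearMap.ext fun x =>
    congr(retraction.toLinearMap $(U.toModel_ι x)).trans (TensorAlgebra.lift_ι_apply U.ι x)
  have unique : roundtrip = identity := (U.univ _ _ U.ι_lie).unique roundtrip_ι rfl
  exact congr(($unique).toLinearMap x)

theorem proj_surjective : Function.Surjective U.proj := fun x => by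
  obtain ⟨u, hu⟩ := envelopingMk_surjective g (U.toModel.toLinearMap x)
  exact ⟨u, (congr(envelopingLift U.ι_lie $hu)).trans (U.envelopingLift_toModel x)⟩

/-- The Poincaré–Birkhoff–Witt section of `UnboundedUEnvData.proj`, induced by `pbwSection`. -/
def projSection : U.alg.carrier →ₗ[ℚ] 𝓣 g.carrier :=
  quotientLift _ (pbwSection g.carrier) (fun _ => pbwSection_of_mem_pbwIdeal) ∘ₗ
    U.toModel.toLinearMap

theorem projSection_proj (u : 𝓣 g.carrier) : U.projSection (U.proj u) = pbwSection g.carrier u :=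
  congr(quotientLift _ (pbwSection g.carrier) (fun _ => pbwSection_of_mem_pbwIdeal)
    $(U.toModel_proj u))

theorem proj_projSection (x : U.alg.carrier) : U.proj (U.projSection x) = x := by
  obtain ⟨u, rfl⟩ := U.proj_surjective x
  rw [projSection_proj]
  exact U.ι_lie.isSuperRep.lift_pbwSection u

theorem proj_tensorDifferential (u : 𝓣 g.carrier) :
    U.proj (tensorDifferential g.d u) = U.alg.d (U.proj u) :=
  U.ι_lie.lift_tensorDifferential u

theorem projSection_differential (x : U.alg.carrier) :
    U.projSection (U.alg.d x) = tensorDifferential g.d (U.projSection x) := by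
  obtain ⟨u, rfl⟩ := U.proj_surjective x
  rw [← proj_tensorDifferential, projSection_proj, projSection_proj,
    pbwSection_tensorDifferential differential_parity differential_superBracket]

variable {U U'} {f : g.carrier →ₗ[ℚ] h.carrier} {F : DGAlgebraHom U.alg U'.alg}

theorem map_proj (hF : F.toLinearMap ∘ₗ U.ι = U'.ι ∘ₗ f) (u : 𝓣 g.carrier) :
    F.toLinearMap (U.proj u) = U'.proj (tensorMap f u) := by
  refine AlgHom.congr_fun (φ₁ := (toAlgHom F).comp U.proj) (φ₂ := U'.proj.comp (tensorMap f)) ?_ u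
  ext x
  have letters := LinearMap.congr_fun hF x
  simp only [LinearMap.comp_apply] at letters
  simp only [proj, LinearMap.comp_apply, AlgHom.toLinearMap_apply, AlgHom.comp_apply, tensorMap_ι,
    TensorAlgebra.lift_ι_apply, ← letters]
  rfl

theorem projSection_map (hf : IsUnboundedDGLieHom g h f)
    (hF : F.toLinearMap ∘ₗ U.ι = U'.ι ∘ₗ f) (x : U.alg.carrier) :
    U'.projSection (F.toLinearMap x) = tensorMap f (U.projSection x) := by
  obtain ⟨u, rfl⟩ := U.proj_surjective x
  rw [map_proj hF, projSection_proj, projSection_proj,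
    pbwSection_tensorMap (map_comp_degreeScaling hf.1 _) hf.2.2]

end UnboundedUEnvData

end Comparison

end DGEnveloping

theorem universal_enveloping_of_quasiIso_is_quasiIso_general (g h : DGEnveloping.UnboundedDGLie)
    (f : g.carrier →ₗ[ℚ] h.carrier) (hLie : DGEnveloping.IsUnboundedDGLieHom g h f)
    (hq : IsQuasiIso g.d h.d f)
    (Ug : DGEnveloping.UnboundedUEnvData g) (Uh : DGEnveloping.UnboundedUEnvData h)
    (F : DGAlgebraHom Ug.alg Uh.alg)
    (hF : F.toLinearMap.comp Ug.ι = Uh.ι.comp f) :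
    IsQuasiIso Ug.alg.d Uh.alg.d F.toLinearMap := by
  have tensor_quasiIso := DGEnveloping.isQuasiIso_tensorMap DGEnveloping.differential_parity
    DGEnveloping.differential_parity (LinearMap.congr_fun g.d_sq) (LinearMap.congr_fun h.d_sq)
    (DGEnveloping.map_comp_degreeScaling hLie.1 _) hLie.2.1 hq
  exact DGEnveloping.isQuasiIso_of_retract tensor_quasiIso
    (pV := Ug.proj.toLinearMap) (pW := Uh.proj.toLinearMap)
    Ug.projSection_differential Ug.proj_tensorDifferential
    Uh.projSection_differential Uh.proj_tensorDifferential
    (fun x => (DGEnveloping.UnboundedUEnvData.projSection_map hLie hF x).symm)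
    (fun u => (DGEnveloping.UnboundedUEnvData.map_proj hF u).symm)
    Ug.proj_projSection Uh.proj_projSection

/-- If `f : 𝔥 → 𝔨` is a quasi-isomorphism of non-negatively graded
dg Lie algebras over `ℚ`, then the induced morphism `𝒰f : 𝒰𝔥 → 𝒰𝔨` of universal
enveloping dg algebras (the unique dg algebra map with `𝒰f ∘ ι_𝔥 = ι_𝔨 ∘ f`) is a
quasi-isomorphism. -/
theorem universal_enveloping_of_quasiIso_is_quasiIso (g h : DGLie)
    (f : g.carrier →ₗ[ℚ] h.carrier) (hLie : IsDGLieHom g h f)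
    (hq : IsQuasiIso g.d h.d f)
    (Ug : UEnvData g) (Uh : UEnvData h)
    (F : DGAlgebraHom Ug.alg Uh.alg)
    (hF : F.toLinearMap.comp Ug.ι = Uh.ι.comp f) :
    IsQuasiIso Ug.alg.d Uh.alg.d F.toLinearMap :=
  universal_enveloping_of_quasiIso_is_quasiIso_general { g with } { h with } f hLie hq
    { Ug with } { Uh with } F hF

end
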